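/- Fix integers m, s, d, r such that m ≥ 2, s ≥ 5, d ≥ 2s+2 and s ≤ r ≤ 2d+s−7. Then σ_{s,r}(X_{m,d}) ≠ ∅ if and only if one of the following holds: (i) r = s; (ii) d+2−s ≤ r ≤ d+s−2 and r+s ≡ d (mod 2); (iii) 2d+2−s ≤ r ≤ 2d+s−7. -/

import Mathlib

open scoped LinearAlgebra.Projectivization

noncomputable section

/-- The polynomial ring in `m+1` variables over `K`: homogeneous coordinate ring of `ℙ^m`. -/
abbrev PR (K : Type) [Field K] (m : ℕ) : Type := MvPolynomial (Fin (m+1)) K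

/-- The space of degree-`d` forms in `m+1` variables. -/
abbrev Hd (K : Type) [Field K] (m d : ℕ) : Submodule K (PR K m) :=
  MvPolynomial.homogeneousSubmodule (Fin (m+1)) K d

/-- Projective `m`-space over `K`. -/
abbrev Pm (K : Type) [Field K] (m : ℕ) := ℙ K (Fin (m+1) → K)

/-- The target projective space `ℙ^n`, `n = C(m+d,m) - 1`, of the degree-`d` Veronese
embedding, realized as the projectivization of the dual of the space of degree-`d` forms
(the space of degree-`d` symmetric tensors). -/
abbrev PN (K : Type) [Field K] (m d : ℕ) := ℙ K (Module.Dual K (Hd K m d))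

variable {K : Type} [Field K] {m : ℕ}

/-- Hilbert function of `R/I` in degree `t`. -/
def hilbQ (I : Ideal (PR K m)) (t : ℕ) : ℕ :=
  Module.finrank K ((Hd K m t).map (Ideal.Quotient.mkₐ K I).toLinearMap)

/-- The degree (length) of the projective scheme defined by `I`: the eventual value of the
Hilbert function of `R/I`. -/
def idealDeg (I : Ideal (PR K m)) : ℕ := Filter.limsup (fun t => hilbQ I t) Filter.atTop

/-- `h^1(𝓘_Z(d))` for the zero-dimensional scheme `Z` with (saturated) ideal `I`:
it equals `deg Z - dim (R/I)_d`. -/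
def h1I (I : Ideal (PR K m)) (d : ℕ) : ℕ := idealDeg I - hilbQ I d

/-- An ideal is homogeneous. -/
def IsHomogI (I : Ideal (PR K m)) : Prop :=
  ∀ f ∈ I, ∀ n : ℕ, MvPolynomial.homogeneousComponent n f ∈ I

/-- An ideal is saturated with respect to the irrelevant maximal ideal. -/
def IsSatI (I : Ideal (PR K m)) : Prop :=
  ∀ f : PR K m, (∀ i, MvPolynomial.X i * f ∈ I) → f ∈ I

/-- A closed subscheme of `ℙ^m`, given by its saturated homogeneous ideal. -/
structure PSub (K : Type) [Field K] (m : ℕ) where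
  I : Ideal (PR K m)
  homog : IsHomogI I
  sat : IsSatI I

/-- A (closed sub)scheme is zero-dimensional iff the Hilbert function of `R/I` is bounded. -/
def IsZeroDimI (I : Ideal (PR K m)) : Prop := ∃ C, ∀ t, hilbQ I t ≤ C

/-- A polynomial vanishes at a projective point (every homogeneous component vanishes
at a representative). -/
def vanishesAt (f : PR K m) (a : Pm K m) : Prop :=
  ∀ n : ℕ, MvPolynomial.eval a.rep (MvPolynomial.homogeneousComponent n f) = 0

/-- Zero locus of an ideal in `ℙ^m`. -/
def pzeroLocus (I : Ideal (PR K m)) : Set (Pm K m) := {a | ∀ f ∈ I, vanishesAt f a}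

/-- The (saturated) homogeneous ideal of a set of points of `ℙ^m`. -/
def idealOfSet (S : Set (Pm K m)) : Ideal (PR K m) :=
  Ideal.span {f : PR K m | (∃ n, f.IsHomogeneous n) ∧ ∀ a ∈ S, MvPolynomial.eval a.rep f = 0}

/-- Saturation of a homogeneous ideal: the smallest saturated homogeneous ideal containing it. -/
def satIdeal (J : Ideal (PR K m)) : Ideal (PR K m) := sInf {J' | J ≤ J' ∧ IsHomogI J' ∧ IsSatI J'}

/-- The scheme defined by the (saturated) ideal `I` is reduced. -/
def IsReducedI (I : Ideal (PR K m)) : Prop := I = idealOfSet (pzeroLocus I)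

/-- Connected component of a zero-dimensional scheme at a point `a`: the largest subscheme
supported at `a`, i.e. the `a`-primary component. -/
def componentAt (I : Ideal (PR K m)) (a : Pm K m) : Ideal (PR K m) :=
  sInf {J | I ≤ J ∧ IsHomogI J ∧ IsSatI J ∧ pzeroLocus J ⊆ {a}}

/-- Residual scheme of `Z` with respect to the hypersurface `f = 0`: the colon ideal `(I_Z : f)`. -/
def resIdeal (I : Ideal (PR K m)) (f : PR K m) : Ideal (PR K m) :=
  Submodule.colon I (Ideal.span {f})

/-- Degree of the scheme-theoretic intersection of the subschemes defined by `I` and `J`. -/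
def interDeg (I J : Ideal (PR K m)) : ℕ := idealDeg (I ⊔ J)

/-- The degree-`d` Veronese image of a vector `v`: the evaluation-at-`v` functional on
degree-`d` forms. -/
def nu (d : ℕ) (v : Fin (m+1) → K) : Module.Dual K (Hd K m d) :=
  (MvPolynomial.aeval v).toLinearMap ∘ₗ (Hd K m d).subtype

/-- The linear span of the Veronese image `ν_d(S)` of a set `S` of points of `ℙ^m`. -/
def dualSpan (d : ℕ) (S : Set (Pm K m)) : Submodule K (Module.Dual K (Hd K m d)) :=
  Submodule.span K ((fun a => nu d a.rep) '' S)

/-- The linear span `⟨ν_d(Z)⟩` of the Veronese image of the subscheme with ideal `I`: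
the annihilator of the degree-`d` part of `I`. -/
def schemeSpanSub (I : Ideal (PR K m)) (d : ℕ) : Submodule K (Module.Dual K (Hd K m d)) where
  carrier := {φ | ∀ f : Hd K m d, (f : PR K m) ∈ I → φ f = 0}
  add_mem' := by
    intro a b ha hb f hf
    simp [LinearMap.add_apply, ha f hf, hb f hf]
  zero_mem' := by intro f hf; simp
  smul_mem' := by
    intro c a ha f hf
    simp [LinearMap.smul_apply, ha f hf]

/-- `P ∈ ⟨ν_d(Z)⟩`, for `Z` the subscheme with ideal `I`. -/
def inSpanI (I : Ideal (PR K m)) (d : ℕ) (P : PN K m d) : Prop := P.rep ∈ schemeSpanSub I d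

/-- `P ∈ ⟨ν_d(S)⟩` for a set `S` of points of `ℙ^m`. -/
def inSpanSet (d : ℕ) (S : Set (Pm K m)) (P : PN K m d) : Prop := P.rep ∈ dualSpan d S

/-- `L` is a linear subspace of `ℙ^m`. -/
def IsLinearSub (L : Set (Pm K m)) : Prop :=
  ∃ W : Submodule K (Fin (m+1) → K), L = {a | a.submodule ≤ W}

/-- `L` is a line of `ℙ^m`. -/
def IsLine (L : Set (Pm K m)) : Prop :=
  ∃ W : Submodule K (Fin (m+1) → K), Module.finrank K W = 2 ∧ L = {a | a.submodule ≤ W}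

/-- `L` is a plane of `ℙ^m`. -/
def IsPlane (L : Set (Pm K m)) : Prop :=
  ∃ W : Submodule K (Fin (m+1) → K), Module.finrank K W = 3 ∧ L = {a | a.submodule ≤ W}

/-- `J` is the (saturated homogeneous) ideal of a conic of `ℙ^m`: a degree-2 curve contained
in a plane (possibly reducible). -/
def IsConic (J : Ideal (PR K m)) : Prop :=
  ∃ (W : Submodule K (Fin (m+1) → K)) (q : PR K m),
    Module.finrank K W = 3 ∧ q.IsHomogeneous 2 ∧
    q ∉ idealOfSet {a : Pm K m | a.submodule ≤ W} ∧
    J = satIdeal (idealOfSet {a : Pm K m | a.submodule ≤ W} ⊔ Ideal.span {q})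

/-- The algebra of polynomial functions on a `K`-vector space. -/
def polyFunctions (K V : Type) [Field K] [AddCommGroup V] [Module K V] : Subalgebra K (V → K) :=
  Algebra.adjoin K {g : V → K | ∃ φ : V →ₗ[K] K, g = ⇑φ}

/-- Zariski closure of a subset of a projective space. -/
def zClosure {V : Type} [AddCommGroup V] [Module K V] (T : Set (ℙ K V)) : Set (ℙ K V) :=
  {P | ∀ F ∈ polyFunctions K V, (∀ Q ∈ T, ∀ c : K, F (c • Q.rep) = 0) →
    ∀ c : K, F (c • P.rep) = 0}

/-- The Veronese variety `X_{m,d} = ν_d(ℙ^m)` as a subset of `PN K m d`. -/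
def XSet (K : Type) [Field K] (m d : ℕ) : Set (PN K m d) :=
  {Q | ∃ a : Pm K m, Q.submodule = Submodule.span K {nu d a.rep}}

/-- The image `ν_d(S)` of a set of points of `ℙ^m`, as a subset of `PN K m d`. -/
def nuSet (d : ℕ) (S : Set (Pm K m)) : Set (PN K m d) :=
  {Q | ∃ a ∈ S, Q.submodule = Submodule.span K {nu d a.rep}}

/-- The rank of a point `P` of `PN` with respect to a subset `Y ⊆ PN`. -/
def rankWrt {m d : ℕ} (Y : Set (PN K m d)) (P : PN K m d) : ℕ :=
  sInf {r | ∃ S : Finset (PN K m d), ↑S ⊆ Y ∧ S.card = r ∧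
    P.rep ∈ Submodule.span K (Projectivization.rep '' (S : Set (PN K m d)))}

/-- The `s`-th secant variety of `Y ⊆ PN`: the Zariski closure of the union of the spans
of `s` points of `Y`. -/
def secantWrt {m d : ℕ} (Y : Set (PN K m d)) (s : ℕ) : Set (PN K m d) :=
  zClosure {Q | ∃ S : Finset (PN K m d), ↑S ⊆ Y ∧ S.card ≤ s ∧
    Q.rep ∈ Submodule.span K (Projectivization.rep '' (S : Set (PN K m d)))}

/-- The border rank of `P` with respect to `Y ⊆ PN`. -/
def brankWrt {m d : ℕ} (Y : Set (PN K m d)) (P : PN K m d) : ℕ :=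
  sInf {s | 0 < s ∧ P ∈ secantWrt Y s}

/-- Symmetric rank. -/
def srank {m : ℕ} (d : ℕ) (P : PN K m d) : ℕ := rankWrt (XSet K m d) P

/-- Border rank. -/
def brank {m : ℕ} (d : ℕ) (P : PN K m d) : ℕ := brankWrt (XSet K m d) P

/-- Cactus rank: minimal degree of a zero-dimensional closed subscheme `E ⊂ ℙ^m` with
`P ∈ ⟨ν_d(E)⟩`. -/
def crank {m : ℕ} (d : ℕ) (P : PN K m d) : ℕ :=
  sInf {c | ∃ Z : PSub K m, IsZeroDimI Z.I ∧ idealDeg Z.I = c ∧ inSpanI Z.I d P}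

/-- `σ_{s,r}(X_{m,d})`. -/
def sigmaSet (K : Type) [Field K] (m d s r : ℕ) : Set (PN K m d) :=
  {P | brank d P = s ∧ srank d P = r}

/-- A property `Φ` holds for a general `k`-tuple of points of the linear subspace of `ℙ^m`
determined by `W`. -/
def GenerallyOn (W : Submodule K (Fin (m+1) → K)) (k : ℕ)
    (Φ : (Fin k → Pm K m) → Prop) : Prop :=
  ∃ w : Fin 3 → W, Submodule.span K (Set.range fun j => (w j : Fin (m+1) → K)) = W ∧
    ∃ F : MvPolynomial (Fin k × Fin 3) K, F ≠ 0 ∧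
      ∀ c : Fin k → Fin 3 → K,
        MvPolynomial.eval (fun p => c p.1 p.2) F ≠ 0 →
        ∀ e : Fin k → Pm K m,
          (∀ i, (e i).submodule = Submodule.span K {∑ j, c i j • (w j : Fin (m+1) → K)}) → Φ e

end

/-!
A point `P` of `PN K m d` is regarded as a functional on forms of degree `d`, and a decomposition of
`P` as a combination of evaluations at points of `ℙ^m`.

Gaps. If the border rank is smaller than the rank `r` and `r + s ≤ 2 d + 1`, then the difference of
a minimal decomposition and a limit of shorter ones is a relation between few evaluations, and such
a relation must concentrate on a line. Off this line the decomposition contributes `b` to both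
ranks; on it `P` is a binary form, whose rank and border rank `e` add up to `d + 2` by Sylvester's
theorem. So `s = e + b` and `r = d + 2 - e + b`.

Existence. All functionals live on a plane. Besides `t` points on a general line `ℓ = 0`, take the
monomial `x^a y^(d-a)` on a coordinate line (`r + s = d + 2 + 2 t`), or two such monomials on two
coordinate lines (`r + s ≥ 2 d + 2`): if both monomials are supported away from the intersection
point of the lines, both lines can share one summand there, and this choice fixes the parity of
`r + s`. Catalecticant minors give the border rank from below. For the rank, subtracting two
decompositions gives a relation, whose restriction to the lines bounds the number of its points.
-/

noncomputable section

namespace Veronese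

section Relations

open MvPolynomial

variable {K : Type} [Field K] {m : ℕ}

/-- Evaluation of polynomials at the vector `v`, as a functional. -/
def evalAt (v : Fin (m + 1) → K) : PR K m →ₗ[K] K := (aeval v : PR K m →ₐ[K] K).toLinearMap

@[simp] lemma evalAt_apply (v : Fin (m + 1) → K) (f : PR K m) : evalAt v f = eval v f := by
  simp [evalAt]

/-- The functional `f ↦ ∑ w p • f(p)`, a linear combination of evaluations at the chosen
representatives of finitely many points of `ℙ^m`. In degree `d` it is a combination of points of the
Veronese variety. -/
def evalComb : (Pm K m →₀ K) →ₗ[K] PR K m →ₗ[K] K :=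
  Finsupp.linearCombination K fun p : Pm K m => evalAt p.rep

lemma evalComb_apply (w : Pm K m →₀ K) (f : PR K m) :
    evalComb w f = ∑ p ∈ w.support, w p * eval p.rep f := by
  simp [evalComb, Finsupp.linearCombination_apply, Finsupp.sum, LinearMap.sum_apply]

lemma evalComb_apply_of_subset {w : Pm K m →₀ K} {T : Finset (Pm K m)} (h : w.support ⊆ T)
    (f : PR K m) : evalComb w f = ∑ p ∈ T, w p * eval p.rep f := by
  rw [evalComb_apply]
  refine Finset.sum_subset h fun p _ hp => ?_
  rw [Finsupp.notMem_support_iff.1 hp, zero_mul]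

lemma evalComb_single (p : Pm K m) (c : K) (f : PR K m) :
    evalComb (Finsupp.single p c) f = c * eval p.rep f := by
  simp [evalComb, Finsupp.linearCombination_single]

/-- The weights `w p * g(p)`: the contraction of the functional `evalComb w` by `g`. -/
def weightMul (w : Pm K m →₀ K) (g : PR K m) : Pm K m →₀ K :=
  Finsupp.onFinset w.support (fun p => w p * eval p.rep g) fun _ hp =>
    Finsupp.mem_support_iff.2 (left_ne_zero_of_mul hp)

lemma mem_support_weightMul {w : Pm K m →₀ K} {g : PR K m} {p : Pm K m} :
    p ∈ (weightMul w g).support ↔ p ∈ w.support ∧ eval p.rep g ≠ 0 := by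
  simp [weightMul]

lemma support_weightMul_subset (w : Pm K m →₀ K) (g : PR K m) :
    (weightMul w g).support ⊆ w.support :=
  fun _ hp => (mem_support_weightMul.1 hp).1

lemma evalComb_weightMul (w : Pm K m →₀ K) (g f : PR K m) :
    evalComb (weightMul w g) f = evalComb w (g * f) := by
  rw [evalComb_apply_of_subset (support_weightMul_subset w g), evalComb_apply]
  refine Finset.sum_congr rfl fun p _ => ?_
  simp only [weightMul, Finsupp.onFinset_apply, map_mul, mul_assoc]

/-- `w` is a linear relation between the degree-`j` Veronese images of the points of its support. -/
def IsRelation (w : Pm K m →₀ K) (j : ℕ) : Prop :=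
  ∀ f : PR K m, f.IsHomogeneous j → evalComb w f = 0

lemma isRelation_weightMul {w : Pm K m →₀ K} {j k n : ℕ} (h : IsRelation w n) {g : PR K m}
    (hg : g.IsHomogeneous k) (hn : k + j = n) : IsRelation (weightMul w g) j := by
  intro f hf
  rw [evalComb_weightMul]
  exact h _ (hn ▸ hg.mul hf)

end Relations

section Lines

open MvPolynomial

variable {K : Type} [Field K] {m : ℕ}

lemma exists_linearForm_eval_ne_zero (W : Submodule K (Fin (m + 1) → K)) {v : Fin (m + 1) → K}
    (h : v ∉ W) :
    ∃ f : PR K m, f.IsHomogeneous 1 ∧ eval v f ≠ 0 ∧ ∀ u ∈ W, eval u f = 0 := by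
  obtain ⟨l, hlv, hlW⟩ := Submodule.exists_dual_map_eq_bot_of_notMem h inferInstance
  have heval : ∀ u, eval u (∑ i, C (l (Pi.single i 1)) * X i : PR K m) = l u := by
    intro u
    simp [LinearMap.pi_apply_eq_sum_univ l u, ← Pi.single_apply, Pi.single_comm, mul_comm]
  refine ⟨_, IsHomogeneous.sum _ _ _ fun i _ => isHomogeneous_C_mul_X _ i, by rwa [heval],
    fun u hu => ?_⟩
  have hlu : l u ∈ W.map l := Submodule.mem_map_of_mem hu
  rw [heval]
  simpa [hlW] using hlu

lemma eq_of_rep_mem_span_rep {p q : Pm K m} (h : p.rep ∈ Submodule.span K {q.rep}) : p = q := by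
  obtain ⟨c, hc⟩ := Submodule.mem_span_singleton.1 h
  rw [← p.mk_rep, ← q.mk_rep, Projectivization.mk_eq_mk_iff']
  exact ⟨c, hc⟩

/-- The vector subspace of the line through two points of `ℙ^m` (of the point itself if they
coincide). -/
def lineThrough (p q : Pm K m) : Submodule K (Fin (m + 1) → K) := Submodule.span K {p.rep, q.rep}

lemma rep_left_mem_lineThrough (p q : Pm K m) : p.rep ∈ lineThrough p q :=
  Submodule.subset_span (by simp)

lemma rep_right_mem_lineThrough (p q : Pm K m) : q.rep ∈ lineThrough p q :=
  Submodule.subset_span (by simp)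

lemma finrank_lineThrough_le (p q : Pm K m) : Module.finrank K (lineThrough p q) ≤ 2 := by
  classical
  have := finrank_span_finset_le_card (R := K) ({p.rep, q.rep} : Finset (Fin (m + 1) → K))
  simp only [Finset.coe_insert, Finset.coe_singleton] at this
  exact this.trans Finset.card_le_two

lemma lineThrough_le {p q : Pm K m} {W : Submodule K (Fin (m + 1) → K)} (hp : p.rep ∈ W)
    (hq : q.rep ∈ W) : lineThrough p q ≤ W := by
  rw [lineThrough, Submodule.span_le]
  rintro x (rfl | rfl) <;> assumption

lemma lineThrough_comm (p q : Pm K m) : lineThrough p q = lineThrough q p := by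
  rw [lineThrough, lineThrough, Set.pair_comm]

lemma rep_mem_lineThrough_of_rep_mem {p q₁ q₂ : Pm K m} (hne : p ≠ q₁)
    (h : p.rep ∈ lineThrough q₁ q₂) : q₂.rep ∈ lineThrough p q₁ := by
  obtain ⟨a, b, hab⟩ := Submodule.mem_span_pair.1 h
  have hb : b ≠ 0 := by
    rintro rfl
    exact hne (eq_of_rep_mem_span_rep (Submodule.mem_span_singleton.2 ⟨a, by simp [← hab]⟩))
  refine Submodule.mem_span_pair.2 ⟨b⁻¹, -(b⁻¹ * a), ?_⟩
  rw [← hab, smul_add, smul_smul, smul_smul, inv_mul_cancel₀ hb]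
  module

lemma rep_notMem_lineThrough {p q₁ q₂ : Pm K m} (h₁ : p ≠ q₁) (h₂ : p ≠ q₂)
    (h : lineThrough p q₁ ≠ lineThrough p q₂) : p.rep ∉ lineThrough q₁ q₂ := by
  refine fun hp => h (le_antisymm (lineThrough_le (rep_left_mem_lineThrough _ _) ?_)
    (lineThrough_le (rep_left_mem_lineThrough _ _) (rep_mem_lineThrough_of_rep_mem h₁ hp)))
  exact rep_mem_lineThrough_of_rep_mem h₂ (lineThrough_comm q₁ q₂ ▸ hp)

end Lines

section Pairing

variable {α β : Type*} [DecidableEq α] [DecidableEq β]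

-- Take `x` in a largest fibre and `y` in a largest one of the remaining fibres. A third fibre
-- surviving with `j + 1` elements would force three disjoint fibres of that size.
lemma exists_pair_card_fiber_sdiff_le {T : Finset α} {c : α → β} {j : ℕ}
    (hT : T.card ≤ 2 * (j + 1)) (hfib : ∀ b, (T.filter (c · = b)).card ≤ j + 1)
    (hne : ∃ x ∈ T, ∃ y ∈ T, c x ≠ c y) :
    ∃ x ∈ T, ∃ y ∈ T, c x ≠ c y ∧ ∀ b, ((T \ {x, y}).filter (c · = b)).card ≤ j := by
  obtain ⟨x₀, hx₀, y₀, hy₀, hxy₀⟩ := hne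
  obtain ⟨x, hx, hmax_x⟩ :=
    T.exists_max_image (fun z => (T.filter (c · = c z)).card) ⟨x₀, hx₀⟩
  have hrest : (T.filter (c · ≠ c x)).Nonempty := by
    by_cases h : c x₀ = c x
    · exact ⟨y₀, Finset.mem_filter.2 ⟨hy₀, fun h' => hxy₀ (h.trans h'.symm)⟩⟩
    · exact ⟨x₀, Finset.mem_filter.2 ⟨hx₀, h⟩⟩
  obtain ⟨y, hy, hmax_y⟩ :=
    (T.filter (c · ≠ c x)).exists_max_image (fun z => (T.filter (c · = c z)).card) hrest
  obtain ⟨hy, hyx⟩ := Finset.mem_filter.1 hy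
  refine ⟨x, hx, y, hy, hyx.symm, fun b => ?_⟩
  by_contra! hb
  have hsurvive : (T \ {x, y}).filter (c · = b) = T.filter (c · = b) :=
    Finset.eq_of_subset_of_card_le (Finset.filter_subset_filter _ Finset.sdiff_subset)
      ((hfib b).trans hb)
  have hxb : c x ≠ b := fun h => by
    have : x ∈ T.filter (c · = b) := Finset.mem_filter.2 ⟨hx, h⟩
    simp [← hsurvive] at this
  have hyb : c y ≠ b := fun h => by
    have : y ∈ T.filter (c · = b) := Finset.mem_filter.2 ⟨hy, h⟩
    simp [← hsurvive] at this
  rw [hsurvive] at hb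
  obtain ⟨z, hz⟩ := Finset.card_pos.1 (Nat.zero_lt_of_lt hb)
  obtain ⟨hzT, rfl⟩ := Finset.mem_filter.1 hz
  have hzx := hmax_x z hzT
  have hzy := hmax_y z (Finset.mem_filter.2 ⟨hzT, hxb.symm⟩)
  have hdisj : Disjoint (T.filter (c · = c x)) (T.filter (c · = c y)) :=
    Finset.disjoint_filter.2 fun _ _ h h' => hyx (h' ▸ h)
  have hdisj' : Disjoint (T.filter (c · = c x) ∪ T.filter (c · = c y)) (T.filter (c · = c z)) :=
    Finset.disjoint_union_left.2 ⟨Finset.disjoint_filter.2 fun _ _ h h' => hxb (h ▸ h'),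
      Finset.disjoint_filter.2 fun _ _ h h' => hyb (h ▸ h')⟩
  have hcard := Finset.card_le_card (Finset.union_subset
    (Finset.union_subset (T.filter_subset (c · = c x)) (T.filter_subset (c · = c y)))
    (T.filter_subset (c · = c z)))
  rw [Finset.card_union_of_disjoint hdisj', Finset.card_union_of_disjoint hdisj] at hcard
  omega

end Pairing

section Separation

open MvPolynomial

variable {K : Type} [Field K] {m : ℕ}

lemma exists_form_mul_linearForm [DecidableEq (Pm K m)] {p : Pm K m} {j : ℕ}
    {T U : Finset (Pm K m)} {W : Submodule K (Fin (m + 1) → K)} (hpW : p.rep ∉ W)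
    (hUW : ∀ q ∈ U, q.rep ∈ W)
    (h : ∃ f : PR K m, f.IsHomogeneous j ∧ eval p.rep f ≠ 0 ∧ ∀ q ∈ T \ U, eval q.rep f = 0) :
    ∃ f : PR K m, f.IsHomogeneous (j + 1) ∧ eval p.rep f ≠ 0 ∧ ∀ q ∈ T, eval q.rep f = 0 := by
  obtain ⟨f, hf, hfp, hfT⟩ := h
  obtain ⟨g, hg, hgp, hgW⟩ := exists_linearForm_eval_ne_zero W hpW
  refine ⟨f * g, hf.mul hg, by simp [hfp, hgp], fun q hq => ?_⟩
  by_cases hqU : q ∈ U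
  · simp [hgW _ (hUW q hqU)]
  · simp [hfT q (Finset.mem_sdiff.2 ⟨hq, hqU⟩)]

open Classical in
/- Induction on `j`: one linear form avoiding `p` passes through two points of `T` that are not
collinear with `p`, chosen so that the bound on the lines through `p` drops as well. -/
lemma exists_form_separating (p : Pm K m) (j : ℕ) {T : Finset (Pm K m)} (hp : p ∉ T)
    (hT : T.card ≤ 2 * j) (hline : ∀ W, (T.filter (lineThrough p · = W)).card ≤ j) :
    ∃ f : PR K m, f.IsHomogeneous j ∧ eval p.rep f ≠ 0 ∧ ∀ q ∈ T, eval q.rep f = 0 := by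
  induction j generalizing T with
  | zero =>
    obtain rfl : T = ∅ := by simpa using hT
    exact ⟨1, isHomogeneous_one _ _, by simp, by simp⟩
  | succ j ih =>
    have hp' : ∀ U : Finset (Pm K m), p ∉ T \ U := fun U h => hp (Finset.mem_sdiff.1 h).1
    have hpq : ∀ q ∈ T, p ≠ q := fun q hq h => hp (h ▸ hq)
    by_cases hne : ∃ x ∈ T, ∃ y ∈ T, lineThrough p x ≠ lineThrough p y
    · obtain ⟨x, hx, y, hy, hxy, hfib⟩ := exists_pair_card_fiber_sdiff_le hT hline hne
      have hsub : ({x, y} : Finset (Pm K m)) ⊆ T := Finset.insert_subset hx (by simpa using hy)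
      refine exists_form_mul_linearForm (U := {x, y})
        (rep_notMem_lineThrough (hpq x hx) (hpq y hy) hxy) (fun q hq => ?_)
        (ih (hp' _) ?_ hfib)
      · rcases Finset.mem_insert.1 hq with rfl | hq
        · exact rep_left_mem_lineThrough _ _
        · exact Finset.mem_singleton.1 hq ▸ rep_right_mem_lineThrough _ _
      · rw [Finset.card_sdiff_of_subset hsub, Finset.card_pair fun h => hxy (congrArg _ h)]
        omega
    · push Not at hne
      rcases T.eq_empty_or_nonempty with rfl | ⟨x, hx⟩
      · exact exists_form_mul_linearForm (U := ∅) (W := ⊥) (by simpa using p.rep_nonzero) (by simp)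
          (ih (hp' _) (by simp) (by simp))
      · have hcard : T.card ≤ j + 1 := by
          have := hline (lineThrough p x)
          rwa [Finset.filter_true_of_mem fun q hq => hne q hq x hx] at this
        have hcard' : (T \ {x}).card ≤ j := by
          rw [Finset.card_sdiff_of_subset (by simpa using hx), Finset.card_singleton]
          omega
        refine exists_form_mul_linearForm (U := {x}) (W := Submodule.span K {x.rep})
          (fun h => hpq x hx (eq_of_rep_mem_span_rep h)) (fun q hq => ?_)
          (ih (hp' _) (by omega) fun W => (Finset.card_filter_le _ _).trans hcard')
        exact Finset.mem_singleton.1 hq ▸ Submodule.mem_span_singleton_self _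

open Classical in
lemma IsRelation.exists_line_card_ge {w : Pm K m →₀ K} {j : ℕ} (h : IsRelation w j) {p : Pm K m}
    (hp : p ∈ w.support) (hc : w.support.card ≤ 2 * j + 1) :
    ∃ W : Submodule K (Fin (m + 1) → K), Module.finrank K W ≤ 2 ∧
      j + 2 ≤ (w.support.filter (·.rep ∈ W)).card := by
  have hline : ∃ W, j < ((w.support.erase p).filter (lineThrough p · = W)).card := by
    by_contra! hline
    have hT : (w.support.erase p).card ≤ 2 * j := by
      rw [Finset.card_erase_of_mem hp]
      omega
    obtain ⟨f, hf, hfp, hfT⟩ := exists_form_separating p j (Finset.notMem_erase p _) hT hline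
    have hzero := h f hf
    rw [evalComb_apply, Finset.sum_eq_single_of_mem p hp fun q hq hqp => by
      rw [hfT q (Finset.mem_erase.2 ⟨hqp, hq⟩), mul_zero]] at hzero
    exact mul_ne_zero (Finsupp.mem_support_iff.1 hp) hfp hzero
  obtain ⟨W, hW⟩ := hline
  obtain ⟨q, hq⟩ := Finset.card_pos.1 (Nat.zero_lt_of_lt hW)
  obtain ⟨-, rfl⟩ := Finset.mem_filter.1 hq
  refine ⟨lineThrough p q, finrank_lineThrough_le _ _, ?_⟩
  have hsub : insert p ((w.support.erase p).filter (lineThrough p · = lineThrough p q)) ⊆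
      w.support.filter (·.rep ∈ lineThrough p q) := by
    refine Finset.insert_subset (Finset.mem_filter.2 ⟨hp, rep_left_mem_lineThrough _ _⟩) ?_
    intro x hx
    rw [Finset.mem_filter, Finset.mem_erase] at hx
    exact Finset.mem_filter.2 ⟨hx.1.2, hx.2 ▸ rep_right_mem_lineThrough _ _⟩
  have hcard := Finset.card_le_card hsub
  rw [Finset.card_insert_of_notMem (by simp)] at hcard
  omega

lemma IsRelation.add_two_le_card {w : Pm K m →₀ K} {j : ℕ} (h : IsRelation w j) {p : Pm K m}
    (hp : p ∈ w.support) : j + 2 ≤ w.support.card := by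
  classical
  by_cases hc : w.support.card ≤ 2 * j + 1
  · obtain ⟨W, _, hW⟩ := h.exists_line_card_ge hp hc
    exact hW.trans (Finset.card_filter_le _ _)
  · omega

lemma IsRelation.exists_line_of_card_le {w : Pm K m →₀ K} {j : ℕ} (h : IsRelation w j)
    (hc : w.support.card ≤ 2 * j + 1) :
    ∃ W : Submodule K (Fin (m + 1) → K), Module.finrank K W ≤ 2 ∧ ∀ q ∈ w.support, q.rep ∈ W := by
  classical
  rcases w.support.eq_empty_or_nonempty with he | ⟨p, hp⟩
  · exact ⟨⊥, by simp, by simp [he]⟩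
  obtain ⟨W, hW, hcard⟩ := h.exists_line_card_ge hp hc
  refine ⟨W, hW, ?_⟩
  by_contra! hcon
  obtain ⟨q, hq, hqW⟩ := hcon
  obtain ⟨g, hg, hgq, hgW⟩ := exists_linearForm_eval_ne_zero W hqW
  rcases j with _ | j
  · have := h.add_two_le_card hp
    omega
  have hoff := (isRelation_weightMul (j := j) h hg (by omega)).add_two_le_card
    (mem_support_weightMul.2 ⟨hq, hgq⟩)
  have hdisj : Disjoint (w.support.filter (·.rep ∈ W)) (weightMul w g).support :=
    Finset.disjoint_left.2 fun x hxW hxg =>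
      (mem_support_weightMul.1 hxg).2 (hgW _ (Finset.mem_filter.1 hxW).2)
  have hunion := Finset.card_le_card
    (Finset.union_subset (w.support.filter_subset (·.rep ∈ W)) (support_weightMul_subset w g))
  rw [Finset.card_union_of_disjoint hdisj] at hunion
  omega

end Separation

section IndependentConditions

open MvPolynomial

variable {K : Type} [Field K] {m : ℕ}

/-- The points of `T` impose independent conditions on forms of degree `j`, i.e. their degree-`j`
Veronese images are linearly independent. -/
def ImposesIndependent (T : Finset (Pm K m)) (j : ℕ) : Prop :=
  ∀ w : Pm K m →₀ K, w.support ⊆ T → IsRelation w j → w = 0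

lemma imposesIndependent_of_card_le {T : Finset (Pm K m)} {j : ℕ} (h : T.card ≤ j + 1) :
    ImposesIndependent T j := by
  intro w hw hR
  by_contra hne
  obtain ⟨p, hp⟩ := Finsupp.support_nonempty_iff.2 hne
  have := hR.add_two_le_card hp
  have := Finset.card_le_card hw
  omega

open Classical in
lemma imposesIndependent_of_lines {T : Finset (Pm K m)} {j : ℕ} (h : T.card ≤ 2 * j + 1)
    (hline : ∀ W : Submodule K (Fin (m + 1) → K), Module.finrank K W ≤ 2 →
      (T.filter (·.rep ∈ W)).card ≤ j + 1) : ImposesIndependent T j := by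
  intro w hw hR
  by_contra hne
  obtain ⟨p, hp⟩ := Finsupp.support_nonempty_iff.2 hne
  have hc := Finset.card_le_card hw
  obtain ⟨W, hW, hWc⟩ := hR.exists_line_card_ge hp (by omega)
  have := hline W hW
  have := Finset.card_le_card (Finset.filter_subset_filter (·.rep ∈ W) hw)
  omega

open Classical in
lemma ImposesIndependent.union_of_mem_subspace {T₁ T₂ : Finset (Pm K m)} {j : ℕ}
    {W : Submodule K (Fin (m + 1) → K)} (h₂ : ImposesIndependent T₂ j)
    (hoff : ∀ q ∈ T₂, q.rep ∉ W) (hon : ∀ q ∈ T₁, q.rep ∈ W) (hc : T₁.card ≤ j + 2) :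
    ImposesIndependent (T₁ ∪ T₂) (j + 1) := by
  intro w hw hR
  refine imposesIndependent_of_card_le hc w (fun q hq => ?_) hR
  refine (Finset.mem_union.1 (hw hq)).resolve_right fun hq₂ => ?_
  obtain ⟨g, hg, hgq, hgW⟩ := exists_linearForm_eval_ne_zero W (hoff q hq₂)
  have hsub : (weightMul w g).support ⊆ T₂ := fun x hx =>
    (Finset.mem_union.1 (hw (support_weightMul_subset _ _ hx))).resolve_left fun hx₁ =>
      (mem_support_weightMul.1 hx).2 (hgW _ (hon x hx₁))
  have hzero := h₂ _ hsub (isRelation_weightMul hR hg (by omega))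
  have := mem_support_weightMul.2 ⟨hq, hgq⟩
  simp [hzero] at this

end IndependentConditions

section Rank

open MvPolynomial

variable {K : Type} [Field K] {m d : ℕ}

lemma eval_smul_of_isHomogeneous {f : PR K m} (hf : f.IsHomogeneous d) (a : K)
    (v : Fin (m + 1) → K) : eval (a • v) f = a ^ d * eval v f := by
  rw [eval_eq, eval_eq, Finset.mul_sum]
  refine Finset.sum_congr rfl fun e he => ?_
  have hdeg : ∑ i ∈ e.support, e i = d := by
    rw [← Finsupp.degree_apply]
    by_contra h
    exact mem_support_iff.1 he (hf.coeff_eq_zero h)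
  simp only [Pi.smul_apply, smul_eq_mul, mul_pow, Finset.prod_mul_distrib,
    Finset.prod_pow_eq_pow_sum, hdeg]
  ring

/-- In degree `d`, `φ` is a combination of at most `n` point evaluations: the functional-side
version of "symmetric rank at most `n`". -/
def HasRankLE (φ : PR K m →ₗ[K] K) (d n : ℕ) : Prop :=
  ∃ w : Pm K m →₀ K, w.support.card ≤ n ∧ ∀ f : PR K m, f.IsHomogeneous d → φ f = evalComb w f

variable {φ ψ : PR K m →ₗ[K] K} {n n' : ℕ}

lemma HasRankLE.mono (h : HasRankLE φ d n) (hn : n ≤ n') : HasRankLE φ d n' := by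
  obtain ⟨w, hw, hφ⟩ := h
  exact ⟨w, hw.trans hn, hφ⟩

lemma HasRankLE.congr (h : HasRankLE φ d n)
    (he : ∀ f : PR K m, f.IsHomogeneous d → ψ f = φ f) : HasRankLE ψ d n := by
  obtain ⟨w, hw, hφ⟩ := h
  exact ⟨w, hw, fun f hf => (he f hf).trans (hφ f hf)⟩

lemma HasRankLE.add (h : HasRankLE φ d n) (h' : HasRankLE ψ d n') :
    HasRankLE (φ + ψ) d (n + n') := by
  classical
  obtain ⟨w, hw, hφ⟩ := h
  obtain ⟨w', hw', hψ⟩ := h'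
  refine ⟨w + w', ?_, fun f hf => ?_⟩
  · exact (Finset.card_le_card Finsupp.support_add).trans
      ((Finset.card_union_le _ _).trans (add_le_add hw hw'))
  · rw [map_add, LinearMap.add_apply, LinearMap.add_apply, hφ f hf, hψ f hf]

lemma HasRankLE.smul (h : HasRankLE φ d n) (c : K) : HasRankLE (c • φ) d n := by
  obtain ⟨w, hw, hφ⟩ := h
  refine ⟨c • w, (Finset.card_le_card Finsupp.support_smul).trans hw, fun f hf => ?_⟩
  rw [map_smul, LinearMap.smul_apply, LinearMap.smul_apply, hφ f hf]

lemma hasRankLE_zero (d : ℕ) : HasRankLE (0 : PR K m →ₗ[K] K) d 0 :=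
  ⟨0, by simp, fun f _ => by rw [map_zero]⟩

lemma hasRankLE_evalComb (w : Pm K m →₀ K) (d : ℕ) : HasRankLE (evalComb w) d w.support.card :=
  ⟨w, le_rfl, fun _ _ => rfl⟩

lemma exists_evalAt_eq_evalComb_single {v : Fin (m + 1) → K} (hv : v ≠ 0) (d : ℕ) :
    ∃ c, ∀ f : PR K m, f.IsHomogeneous d →
      evalAt v f = evalComb (Finsupp.single (Projectivization.mk K v hv) c) f := by
  obtain ⟨a, ha⟩ := Projectivization.exists_smul_eq_mk_rep K v hv
  refine ⟨(a : K)⁻¹ ^ d, fun f hf => ?_⟩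
  rw [evalComb_single, ← ha, Units.smul_def, eval_smul_of_isHomogeneous hf, evalAt_apply,
    ← mul_assoc, ← mul_pow, inv_mul_cancel₀ a.ne_zero, one_pow, one_mul]

lemma hasRankLE_evalAt (v : Fin (m + 1) → K) (hd : d ≠ 0) : HasRankLE (evalAt v) d 1 := by
  by_cases hv : v = 0
  · refine ((hasRankLE_zero d).mono zero_le_one).congr fun f hf => ?_
    simpa [hv, hd] using eval_smul_of_isHomogeneous hf 0 (0 : Fin (m + 1) → K)
  · obtain ⟨c, hc⟩ := exists_evalAt_eq_evalComb_single hv d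
    exact ⟨_, (Finset.card_le_card Finsupp.support_single_subset).trans (by simp), hc⟩

lemma hasRankLE_sum_smul_evalAt {ι : Type*} (s : Finset ι) (c : ι → K)
    (v : ι → Fin (m + 1) → K) (hd : d ≠ 0) :
    HasRankLE (∑ i ∈ s, c i • evalAt (v i)) d s.card := by
  classical
  induction s using Finset.induction_on with
  | empty => simpa using hasRankLE_zero d
  | insert a s ha ih =>
    rw [Finset.sum_insert ha, Finset.card_insert_of_notMem ha, add_comm s.card]
    exact ((hasRankLE_evalAt (v a) hd).smul (c a)).add ih

/-- In degree `d`, `φ` is the value at `0` of a polynomial curve of functionals whose general member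
has rank at most `n`. -/
def HasBorderRankLE (φ : PR K m →ₗ[K] K) (d n : ℕ) : Prop :=
  ∃ γ : K → PR K m →ₗ[K] K,
    (∀ f : PR K m, f.IsHomogeneous d → ∃ p : Polynomial K, ∀ ε, γ ε f = p.eval ε) ∧
    (∃ E : Finset K, ∀ ε ∉ E, HasRankLE (γ ε) d n) ∧
    ∀ f : PR K m, f.IsHomogeneous d → γ 0 f = φ f

lemma HasRankLE.hasBorderRankLE (h : HasRankLE φ d n) : HasBorderRankLE φ d n :=
  ⟨fun _ => φ, fun f _ => ⟨Polynomial.C (φ f), by simp⟩, ⟨∅, fun _ _ => h⟩, fun _ _ => rfl⟩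

lemma HasBorderRankLE.add (h : HasBorderRankLE φ d n) (h' : HasBorderRankLE ψ d n') :
    HasBorderRankLE (φ + ψ) d (n + n') := by
  classical
  obtain ⟨γ, hpoly, ⟨E, hrank⟩, hzero⟩ := h
  obtain ⟨γ', hpoly', ⟨E', hrank'⟩, hzero'⟩ := h'
  refine ⟨fun ε => γ ε + γ' ε, fun f hf => ?_, ⟨E ∪ E', fun ε hε => ?_⟩, fun f hf => ?_⟩
  · obtain ⟨p, hp⟩ := hpoly f hf
    obtain ⟨p', hp'⟩ := hpoly' f hf
    exact ⟨p + p', fun ε => by simp [hp, hp']⟩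
  · rw [Finset.notMem_union] at hε
    exact (hrank ε hε.1).add (hrank' ε hε.2)
  · simp [hzero f hf, hzero' f hf]

lemma HasBorderRankLE.smul (h : HasBorderRankLE φ d n) (c : K) :
    HasBorderRankLE (c • φ) d n := by
  obtain ⟨γ, hpoly, ⟨E, hrank⟩, hzero⟩ := h
  refine ⟨fun ε => c • γ ε, fun f hf => ?_, ⟨E, fun ε hε => (hrank ε hε).smul c⟩,
    fun f hf => by rw [LinearMap.smul_apply, LinearMap.smul_apply, hzero f hf]⟩
  obtain ⟨p, hp⟩ := hpoly f hf
  exact ⟨Polynomial.C c * p, fun ε => by simp [hp]⟩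

lemma HasBorderRankLE.congr (h : HasBorderRankLE φ d n)
    (he : ∀ f : PR K m, f.IsHomogeneous d → ψ f = φ f) : HasBorderRankLE ψ d n := by
  obtain ⟨γ, hpoly, hrank, hzero⟩ := h
  exact ⟨γ, hpoly, hrank, fun f hf => (hzero f hf).trans (he f hf).symm⟩

end Rank

section SymmetricRank

open MvPolynomial

variable {K : Type} [Field K] {m d : ℕ}

/-- The restriction of a functional on all polynomials to the forms of degree `d`. -/
def restrictDeg (d : ℕ) (φ : PR K m →ₗ[K] K) : Module.Dual K (Hd K m d) :=
  φ ∘ₗ (Hd K m d).subtype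

lemma restrictDeg_apply (φ : PR K m →ₗ[K] K) (f : Hd K m d) : restrictDeg d φ f = φ f := rfl

lemma restrictDeg_evalComb (d : ℕ) (w : Pm K m →₀ K) :
    restrictDeg d (evalComb w) = Finsupp.linearCombination K (fun p : Pm K m => nu d p.rep) w := by
  ext f
  rw [restrictDeg_apply, evalComb, Finsupp.linearCombination_apply,
    Finsupp.linearCombination_apply, Finsupp.sum, Finsupp.sum, LinearMap.sum_apply,
    LinearMap.sum_apply]
  rfl

lemma nu_rep_ne_zero (d : ℕ) (p : Pm K m) : nu d p.rep ≠ 0 := by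
  intro h
  obtain ⟨i, hi⟩ : ∃ i, p.rep i ≠ 0 := Function.ne_iff.1 p.rep_nonzero
  have hXi := LinearMap.congr_fun h ⟨X i ^ d, isHomogeneous_X_pow i d⟩
  simp only [nu, LinearMap.comp_apply, Submodule.subtype_apply, AlgHom.toLinearMap_apply,
    map_pow, aeval_X, LinearMap.zero_apply] at hXi
  exact hi (eq_zero_of_pow_eq_zero hXi)

variable {φ : PR K m →ₗ[K] K} {n : ℕ}

lemma hasRankLE_of_mem_span {S : Finset (PN K m d)} (hS : (S : Set (PN K m d)) ⊆ XSet K m d)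
    (h : restrictDeg d φ ∈ Submodule.span K (Projectivization.rep '' (S : Set (PN K m d)))) :
    HasRankLE φ d S.card := by
  classical
  choose a ha using fun Q : S => hS Q.2
  have hspan : Submodule.span K (Projectivization.rep '' (S : Set (PN K m d))) ≤
      Submodule.span K ((fun p : Pm K m => nu d p.rep) '' (Finset.univ.image a : Finset _)) := by
    rw [Submodule.span_le]
    rintro _ ⟨Q, hQ, rfl⟩
    have hrep : Q.rep ∈ Submodule.span K {nu d (a ⟨Q, hQ⟩).rep} := by
      rw [← ha ⟨Q, hQ⟩, Projectivization.submodule_eq]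
      exact Submodule.mem_span_singleton_self _
    have hmem : a ⟨Q, hQ⟩ ∈ ((Finset.univ.image a : Finset _) : Set (Pm K m)) :=
      Finset.mem_coe.2 (Finset.mem_image_of_mem a (Finset.mem_univ _))
    exact Submodule.span_mono (Set.singleton_subset_iff.2 (Set.mem_image_of_mem _ hmem)) hrep
  obtain ⟨w, hw, hwφ⟩ := (Finsupp.mem_span_image_iff_linearCombination K).1 (hspan h)
  refine ⟨w, ?_, fun f hf => ?_⟩
  · have hsub : w.support ⊆ Finset.univ.image a := fun x hx => (Finsupp.mem_supported K w).1 hw hx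
    exact (Finset.card_le_card hsub).trans (Finset.card_image_le.trans (by simp))
  · rw [← restrictDeg_evalComb] at hwφ
    exact (LinearMap.congr_fun hwφ ⟨f, hf⟩).symm

lemma HasRankLE.exists_finset (h : HasRankLE φ d n) :
    ∃ S : Finset (PN K m d), (S : Set (PN K m d)) ⊆ XSet K m d ∧ S.card ≤ n ∧
      restrictDeg d φ ∈ Submodule.span K (Projectivization.rep '' (S : Set (PN K m d))) := by
  classical
  obtain ⟨w, hw, hφ⟩ := h
  let q : Pm K m → PN K m d := fun p => Projectivization.mk K (nu d p.rep) (nu_rep_ne_zero d p)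
  refine ⟨w.support.image q, ?_, Finset.card_image_le.trans hw, ?_⟩
  · intro Q hQ
    obtain ⟨p, _, rfl⟩ := Finset.mem_image.1 (Finset.mem_coe.1 hQ)
    exact ⟨p, Projectivization.submodule_mk _ _⟩
  · have heq : restrictDeg d φ = restrictDeg d (evalComb w) := by
      ext f
      exact hφ f.1 f.2
    rw [heq, restrictDeg_evalComb, Finsupp.linearCombination_apply]
    refine Submodule.sum_mem _ fun p hp => Submodule.smul_mem _ _ ?_
    obtain ⟨a, ha⟩ := Projectivization.exists_smul_eq_mk_rep K (nu d p.rep) (nu_rep_ne_zero d p)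
    rw [← inv_smul_smul a (nu d p.rep), Units.smul_def, ha]
    refine Submodule.smul_mem _ _ (Submodule.subset_span ⟨q p, ?_, rfl⟩)
    exact Finset.mem_coe.2 (Finset.mem_image_of_mem q hp)

variable {P : PN K m d}

lemma srank_le (hφ : restrictDeg d φ = P.rep) (h : HasRankLE φ d n) : srank d P ≤ n := by
  obtain ⟨S, hSX, hcard, hspan⟩ := h.exists_finset
  refine le_trans ?_ hcard
  rw [srank, rankWrt]
  exact Nat.sInf_le ⟨S, hSX, rfl, hφ ▸ hspan⟩

lemma hasRankLE_srank (hφ : restrictDeg d φ = P.rep) (h : HasRankLE φ d n) :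
    HasRankLE φ d (srank d P) := by
  obtain ⟨S, hSX, -, hspan⟩ := h.exists_finset
  have hne : {r | ∃ S : Finset (PN K m d), ↑S ⊆ XSet K m d ∧ S.card = r ∧
      P.rep ∈ Submodule.span K (Projectivization.rep '' (S : Set (PN K m d)))}.Nonempty :=
    ⟨_, S, hSX, rfl, hφ ▸ hspan⟩
  obtain ⟨S', hSX', hcard', hspan'⟩ := Nat.sInf_mem hne
  exact (hasRankLE_of_mem_span hSX' (hφ ▸ hspan')).mono hcard'.le

lemma hasRankLE_srank_of_pos (hφ : restrictDeg d φ = P.rep) (h : 0 < srank d P) :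
    HasRankLE φ d (srank d P) := by
  obtain ⟨S, hSX, hcard, hspan⟩ := Nat.sInf_mem (Nat.nonempty_of_pos_sInf h)
  exact (hasRankLE_of_mem_span hSX (hφ ▸ hspan)).mono hcard.le

lemma srank_eq (hφ : restrictDeg d φ = P.rep) (h : HasRankLE φ d n)
    (hmin : ∀ k, HasRankLE φ d k → n ≤ k) : srank d P = n :=
  le_antisymm (srank_le hφ h) (hmin _ (hasRankLE_srank hφ h))

end SymmetricRank

section BorderRank

open MvPolynomial

variable {K : Type} [Field K] {m d n : ℕ} {φ : PR K m →ₗ[K] K} {P : PN K m d}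

instance finite_Hd (d : ℕ) : Module.Finite K (Hd K m d) :=
  Module.Finite.iff_fg.2 (homogeneousSubmodule_fg _ _ d)

lemma exists_polynomial_eval_of_mem_polyFunctions {V : Type} [AddCommGroup V] [Module K V]
    [Module.Finite K V] {F : Module.Dual K V → K} (hF : F ∈ polyFunctions K (Module.Dual K V))
    {γ : K → Module.Dual K V} (hγ : ∀ v, ∃ p : Polynomial K, ∀ ε, γ ε v = p.eval ε) :
    ∃ q : Polynomial K, ∀ ε, F (γ ε) = q.eval ε := by
  unfold polyFunctions at hF
  induction hF using Algebra.adjoin_induction with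
  | mem x hx =>
    obtain ⟨g, rfl⟩ := hx
    obtain ⟨v, rfl⟩ := (Module.evalEquiv K V).surjective g
    obtain ⟨p, hp⟩ := hγ v
    exact ⟨p, fun ε => by rw [Module.evalEquiv_apply, Module.Dual.eval_apply, hp]⟩
  | algebraMap r => exact ⟨Polynomial.C r, fun ε => by simp⟩
  | add x y _ _ hx hy =>
    obtain ⟨p, hp⟩ := hx
    obtain ⟨q, hq⟩ := hy
    exact ⟨p + q, fun ε => by simp [hp, hq]⟩
  | mul x y _ _ hx hy =>
    obtain ⟨p, hp⟩ := hx
    obtain ⟨q, hq⟩ := hy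
    exact ⟨p * q, fun ε => by simp [hp, hq]⟩

lemma apply_restrictDeg_eq_zero_of_hasRankLE {F : Module.Dual K (Hd K m d) → K}
    (hF : ∀ Q : PN K m d, (∃ S : Finset (PN K m d), ↑S ⊆ XSet K m d ∧ S.card ≤ n ∧
      Q.rep ∈ Submodule.span K (Projectivization.rep '' (S : Set (PN K m d)))) →
      ∀ c : K, F (c • Q.rep) = 0)
    (hn : 0 < n) (h : HasRankLE φ d n) : F (restrictDeg d φ) = 0 := by
  classical
  obtain ⟨S, hSX, hcard, hspan⟩ := h.exists_finset
  by_cases hne : restrictDeg d φ = 0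
  · let p₀ : Pm K m := Projectivization.mk K (Pi.single 0 1) (Pi.single_ne_zero_iff.2 one_ne_zero)
    let Q₀ : PN K m d := Projectivization.mk K (nu d p₀.rep) (nu_rep_ne_zero d p₀)
    have hQ₀ : ((({Q₀} : Finset (PN K m d)) : Set (PN K m d))) ⊆ XSet K m d := by
      rw [Finset.coe_singleton, Set.singleton_subset_iff]
      exact ⟨p₀, Projectivization.submodule_mk _ _⟩
    simpa [hne] using hF Q₀ ⟨{Q₀}, hQ₀, by simpa using Nat.succ_le_of_lt hn,
      Submodule.subset_span ⟨Q₀, by simp, rfl⟩⟩ 0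
  · obtain ⟨a, ha⟩ := Projectivization.exists_smul_eq_mk_rep K _ hne
    have hvan := hF (Projectivization.mk K _ hne) ⟨S, hSX, hcard, by
      rw [← ha, Units.smul_def]
      exact Submodule.smul_mem _ _ hspan⟩ ((a⁻¹ : Kˣ) : K)
    rwa [← ha, ← Units.smul_def, inv_smul_smul] at hvan

lemma HasBorderRankLE.mem_secantWrt [Infinite K] (hφ : restrictDeg d φ = P.rep) (hn : 0 < n)
    (h : HasBorderRankLE φ d n) : P ∈ secantWrt (XSet K m d) n := by
  obtain ⟨γ, hpoly, ⟨E, hrank⟩, hzero⟩ := h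
  intro F hF hT c
  obtain ⟨p, hp⟩ := exists_polynomial_eval_of_mem_polyFunctions hF
    (γ := fun ε => restrictDeg d (c • γ ε)) fun f => by
      obtain ⟨q, hq⟩ := hpoly f.1 f.2
      exact ⟨Polynomial.C c * q, fun ε => by simp [restrictDeg_apply, hq]⟩
  have hp0 : p = 0 := by
    refine Polynomial.eq_zero_of_infinite_isRoot p
      (E.finite_toSet.infinite_compl.mono fun ε hε => ?_)
    change p.eval ε = 0
    rw [← hp]
    exact apply_restrictDeg_eq_zero_of_hasRankLE hT hn ((hrank ε hε).smul c)
  have hrep : c • P.rep = restrictDeg d (c • γ 0) := by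
    rw [← hφ]
    ext f
    simp [restrictDeg_apply, hzero f.1 f.2]
  rw [hrep, hp, hp0, Polynomial.eval_zero]

lemma mem_secantWrt_brank (h : 0 < brank d P) : P ∈ secantWrt (XSet K m d) (brank d P) :=
  (Nat.sInf_mem (Nat.nonempty_of_pos_sInf h)).2

lemma brank_le [Infinite K] (hφ : restrictDeg d φ = P.rep) (hn : 0 < n)
    (h : HasBorderRankLE φ d n) : brank d P ≤ n :=
  Nat.sInf_le ⟨hn, h.mem_secantWrt hφ hn⟩

/-- The catalecticant matrix `φ(Gᵢ Hⱼ)` of `φ` with respect to two families of forms. -/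
def catalecticant {ι κ : Type*} (φ : PR K m →ₗ[K] K) (G : ι → PR K m) (H : κ → PR K m) :
    Matrix ι κ K :=
  Matrix.of fun i j => φ (G i * H j)

/-- The matrix of values of a family of polynomials at the representatives of a finite set of
points. -/
def evalMatrix {ι : Type*} (S : Finset (Pm K m)) (G : ι → PR K m) : Matrix ι S K :=
  Matrix.of fun i p => eval p.1.rep (G i)

variable {k : ℕ}

lemma isHomogeneous_mul_of_le (hk : k ≤ d) {f g : PR K m} (hf : f.IsHomogeneous k)
    (hg : g.IsHomogeneous (d - k)) : (f * g).IsHomogeneous d := by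
  have := hf.mul hg
  rwa [Nat.add_sub_cancel' hk] at this

open Classical in
lemma catalecticant_eq_mul {ι κ : Type*} {G : ι → PR K m} {H : κ → PR K m} (hk : k ≤ d)
    (hG : ∀ i, (G i).IsHomogeneous k) (hH : ∀ j, (H j).IsHomogeneous (d - k)) {w : Pm K m →₀ K}
    (hφ : ∀ f : PR K m, f.IsHomogeneous d → φ f = evalComb w f) :
    catalecticant φ G H = evalMatrix w.support G *
      (Matrix.diagonal (fun p : w.support => w p.1) * (evalMatrix w.support H).transpose) := by
  ext i j
  rw [Matrix.mul_apply, catalecticant, Matrix.of_apply,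
    hφ _ (isHomogeneous_mul_of_le hk (hG i) (hH j)), evalComb_apply, ← Finset.sum_coe_sort]
  refine Finset.sum_congr rfl fun p _ => ?_
  rw [Matrix.diagonal_mul, Matrix.transpose_apply, evalMatrix, evalMatrix, Matrix.of_apply,
    Matrix.of_apply, map_mul, mul_left_comm]

variable {ι : Type} [Fintype ι] [DecidableEq ι] {G H : ι → PR K m}

lemma HasRankLE.det_catalecticant_eq_zero (h : HasRankLE φ d n) (hk : k ≤ d)
    (hn : n < Fintype.card ι) (hG : ∀ i, (G i).IsHomogeneous k)
    (hH : ∀ i, (H i).IsHomogeneous (d - k)) : (catalecticant φ G H).det = 0 := by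
  classical
  obtain ⟨w, hw, hφ⟩ := h
  by_contra hdet
  have hrank := Matrix.rank_of_isUnit _
    ((Matrix.isUnit_iff_isUnit_det _).2 (isUnit_iff_ne_zero.2 hdet))
  have hle := Matrix.rank_mul_le_left (evalMatrix w.support G)
    (Matrix.diagonal (fun p : w.support => w p.1) * (evalMatrix w.support H).transpose)
  rw [← catalecticant_eq_mul hk hG hH hφ, hrank] at hle
  have hwidth := (evalMatrix w.support G).rank_le_card_width
  rw [Fintype.card_coe] at hwidth
  omega

lemma det_catalecticant_eq_zero_of_mem_secantWrt (hφ : restrictDeg d φ = P.rep)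
    (h : P ∈ secantWrt (XSet K m d) n) (hk : k ≤ d) (hn : n < Fintype.card ι)
    (hG : ∀ i, (G i).IsHomogeneous k) (hH : ∀ i, (H i).IsHomogeneous (d - k)) :
    (catalecticant φ G H).det = 0 := by
  let M : Matrix ι ι (Module.Dual K (Hd K m d) → K) := Matrix.of fun i j v =>
    v ⟨G i * H j, isHomogeneous_mul_of_le hk (hG i) (hH j)⟩
  have hM : M.det ∈ polyFunctions K (Module.Dual K (Hd K m d)) := by
    rw [Matrix.det_apply]
    refine Subalgebra.sum_mem _ fun σ _ => ?_
    rw [Units.smul_def]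
    refine Subalgebra.zsmul_mem _ (Subalgebra.prod_mem _ fun i _ => ?_) _
    exact Algebra.subset_adjoin ⟨Module.Dual.eval K (Hd K m d) ⟨G (σ i) * H i, _⟩, rfl⟩
  have hdet : ∀ ψ : PR K m →ₗ[K] K, M.det (restrictDeg d ψ) = (catalecticant ψ G H).det :=
    fun ψ => RingHom.map_det (Pi.evalRingHom (fun _ => K) (restrictDeg d ψ)) M
  have hvan := h M.det hM (by
    rintro Q ⟨S, hSX, hcard, hspan⟩ c
    obtain ⟨ψ, hψ⟩ : ∃ ψ, restrictDeg d ψ = Q.rep := LinearMap.exists_extend Q.rep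
    have hrank : HasRankLE (c • ψ) d n :=
      ((hasRankLE_of_mem_span hSX (hψ ▸ hspan)).mono hcard).smul c
    have hrep : c • Q.rep = restrictDeg d (c • ψ) := by
      rw [← hψ]
      rfl
    rw [hrep, hdet]
    exact hrank.det_catalecticant_eq_zero hk hn hG hH) 1
  rwa [one_smul, ← hφ, hdet] at hvan

lemma brank_eq_of_det_catalecticant_ne_zero [Infinite K] (hφ : restrictDeg d φ = P.rep)
    (h : HasBorderRankLE φ d (Fintype.card ι)) (hι : 0 < Fintype.card ι) (hk : k ≤ d)
    (hG : ∀ i, (G i).IsHomogeneous k) (hH : ∀ i, (H i).IsHomogeneous (d - k))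
    (hdet : (catalecticant φ G H).det ≠ 0) : brank d P = Fintype.card ι := by
  have hmem : P ∈ secantWrt (XSet K m d) (brank d P) :=
    (Nat.sInf_mem (s := {s | 0 < s ∧ P ∈ secantWrt (XSet K m d) s})
      ⟨_, hι, h.mem_secantWrt hφ hι⟩).2
  refine le_antisymm (brank_le hφ hι h) (not_lt.1 fun hlt => hdet ?_)
  exact det_catalecticant_eq_zero_of_mem_secantWrt hφ hmem hk hlt hG hH

end BorderRank

section RankOnALine

open Polynomial

variable {K : Type} [Field K] {m : ℕ}

/-- Restriction of polynomials to a line, in the affine chart `x ↦ u + x • v`. -/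
def restrictLine (u v : Fin (m + 1) → K) : PR K m →ₐ[K] K[X] :=
  MvPolynomial.aeval fun i => C (u i) + X * C (v i)

lemma eval_restrictLine (u v : Fin (m + 1) → K) (f : PR K m) (b : K) :
    eval b (restrictLine u v f) = MvPolynomial.eval (u + b • v) f := by
  have hcomp : (aeval b : K[X] →ₐ[K] K).comp (restrictLine u v) =
      MvPolynomial.aeval (u + b • v) := by
    ext i
    simp only [restrictLine, AlgHom.comp_apply, MvPolynomial.aeval_X, map_add, map_mul, aeval_C,
      aeval_X, Algebra.algebraMap_self, RingHom.id_apply, Pi.add_apply, Pi.smul_apply, smul_eq_mul]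
  simpa [MvPolynomial.aeval_eq_eval, coe_aeval_eq_eval] using AlgHom.congr_fun hcomp f

lemma natDegree_restrictLine_le (u v : Fin (m + 1) → K) {f : PR K m} {d : ℕ}
    (hf : f.IsHomogeneous d) : (restrictLine u v f).natDegree ≤ d := by
  refine (MvPolynomial.aeval_natDegree_le f hf.totalDegree_le _ (n := 1) fun i => ?_).trans
    (mul_one d).le
  exact (natDegree_add_le _ _).trans (max_le (by simp) (natDegree_mul_le.trans (by simp)))

/-- The functional `f ↦ Λ (f|_L)`, where `L` is the line with chart `x ↦ u + x • v`. -/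
def lineFunctional (u v : Fin (m + 1) → K) (Λ : K[X] →ₗ[K] K) : PR K m →ₗ[K] K :=
  Λ ∘ₗ (restrictLine u v).toLinearMap

lemma lineFunctional_apply (u v : Fin (m + 1) → K) (Λ : K[X] →ₗ[K] K) (f : PR K m) :
    lineFunctional u v Λ f = Λ (restrictLine u v f) := rfl

/-- `g` is apolar to `Λ` in degree `d`: `Λ` kills every multiple of `g` of degree at most `d`. -/
def IsApolar (Λ : K[X] →ₗ[K] K) (g : K[X]) (d : ℕ) : Prop :=
  ∀ f : K[X], f.natDegree + g.natDegree ≤ d → Λ (g * f) = 0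

variable {Λ : K[X] →ₗ[K] K} {g : K[X]} {d : ℕ}

lemma IsApolar.apply_modByMonic (h : IsApolar Λ g d) (hg : g.Monic) {p : K[X]}
    (hp : p.natDegree ≤ d) : Λ (p %ₘ g) = Λ p := by
  conv_rhs => rw [← modByMonic_add_div p g, map_add]
  by_cases hc : p.natDegree < g.natDegree
  · rw [(divByMonic_eq_zero_iff hg).2 (degree_lt_degree hc), mul_zero, map_zero, add_zero]
  · rw [h, add_zero]
    rw [natDegree_divByMonic _ hg]
    omega

lemma isApolar_comp_modByMonicHom (Λ : K[X] →ₗ[K] K) (hg : g.Monic) (d : ℕ) :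
    IsApolar (Λ ∘ₗ modByMonicHom g) g d := fun f _ => by
  rw [LinearMap.comp_apply, modByMonicHom_apply,
    (modByMonic_eq_zero_iff_dvd hg).2 (dvd_mul_right _ _), map_zero]

lemma IsApolar.C_mul (h : IsApolar Λ g d) {c : K} (hc : c ≠ 0) : IsApolar Λ (C c * g) d := by
  intro f hf
  rw [natDegree_C_mul hc] at hf
  rw [mul_assoc, C_mul', map_smul, h f hf, smul_zero]

lemma apply_eq_sum_lagrange_basis [DecidableEq K] (Λ : K[X] →ₗ[K] K) (B : Finset K) {h : K[X]}
    (hh : h.degree < B.card) : Λ h = ∑ b ∈ B, Λ (Lagrange.basis B id b) * eval b h := by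
  conv_lhs => rw [Lagrange.eq_interpolate_of_eval_eq (s := B) (v := id) (fun b => eval b h)
    (Function.injective_id.injOn) hh (fun _ _ => rfl)]
  rw [Lagrange.interpolate_apply, map_sum]
  refine Finset.sum_congr rfl fun b _ => ?_
  rw [C_mul', map_smul, smul_eq_mul, mul_comm]

lemma hasRankLE_lineFunctional_of_eq_sum (u v : Fin (m + 1) → K) (hd : d ≠ 0) (B : Finset K)
    (c : K → K) (h : ∀ p : K[X], p.natDegree ≤ d → Λ p = ∑ b ∈ B, c b * eval b p) :
    HasRankLE (lineFunctional u v Λ) d B.card := by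
  refine (hasRankLE_sum_smul_evalAt B c (fun b => u + b • v) hd).congr fun f hf => ?_
  rw [lineFunctional_apply, h _ (natDegree_restrictLine_le u v hf), LinearMap.sum_apply]
  refine Finset.sum_congr rfl fun b _ => ?_
  rw [LinearMap.smul_apply, evalAt_apply, eval_restrictLine, smul_eq_mul]

lemma IsApolar.hasRankLE_lineFunctional (u v : Fin (m + 1) → K) (hd : d ≠ 0) {B : Finset K}
    (h : IsApolar Λ (∏ b ∈ B, (X - C b)) d) : HasRankLE (lineFunctional u v Λ) d B.card := by
  classical
  have hmonic : (∏ b ∈ B, (X - C b)).Monic := monic_prod_of_monic _ _ fun b _ => monic_X_sub_C b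
  refine hasRankLE_lineFunctional_of_eq_sum u v hd B (fun b => Λ (Lagrange.basis B id b))
    fun p hp => ?_
  rw [← h.apply_modByMonic hmonic hp, apply_eq_sum_lagrange_basis Λ B]
  · refine Finset.sum_congr rfl fun b hb => ?_
    have hroot : eval b (∏ b ∈ B, (X - C b)) = 0 := by
      rw [eval_prod]
      exact Finset.prod_eq_zero hb (by simp)
    conv_rhs => rw [← modByMonic_add_div p (∏ b ∈ B, (X - C b)), eval_add, eval_mul, hroot,
      zero_mul, add_zero]
  · exact (degree_modByMonic_lt p hmonic).trans_eq (by rw [degree_prod]; simp)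

lemma IsApolar.hasRankLE_lineFunctional_of_separable [IsAlgClosed K] (u v : Fin (m + 1) → K)
    (hd : d ≠ 0) (hg : g.Separable) (h : IsApolar Λ g d) :
    HasRankLE (lineFunctional u v Λ) d g.natDegree := by
  classical
  have hlead : g.leadingCoeff ≠ 0 := leadingCoeff_ne_zero.2 hg.ne_zero
  have hprod : C (g.leadingCoeff)⁻¹ * g = ∏ b ∈ g.roots.toFinset, (X - C b) := by
    nth_rewrite 2 [(IsAlgClosed.splits g).eq_prod_roots]
    rw [← mul_assoc, ← Polynomial.C_mul, inv_mul_cancel₀ hlead, C_1, one_mul,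
      Finset.prod_eq_multiset_prod, Multiset.toFinset_val, (nodup_roots hg).dedup]
  have hcard : g.roots.toFinset.card = g.natDegree := by
    rw [Multiset.toFinset_card_of_nodup (nodup_roots hg),
      ← (IsAlgClosed.splits g).natDegree_eq_card_roots]
  rw [← hcard]
  exact IsApolar.hasRankLE_lineFunctional u v hd (hprod ▸ h.C_mul (inv_ne_zero hlead))

lemma hasRankLE_lineFunctional_succ [Infinite K] (u v : Fin (m + 1) → K) (Λ : K[X] →ₗ[K] K)
    (hd : d ≠ 0) : HasRankLE (lineFunctional u v Λ) d (d + 1) := by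
  classical
  obtain ⟨B, hB⟩ := Infinite.exists_subset_card_eq K (d + 1)
  rw [← hB]
  refine hasRankLE_lineFunctional_of_eq_sum u v hd B _ fun p hp =>
    apply_eq_sum_lagrange_basis Λ B ?_
  rw [hB]
  exact (natDegree_le_iff_degree_le.1 hp).trans_lt (by exact_mod_cast Nat.lt_succ_self d)

end RankOnALine

section BorderRankOnALine

open Polynomial

variable {K : Type} [Field K] {m d e : ℕ} {Λ : K[X] →ₗ[K] K}

lemma exists_polynomial_eval_eq_apply_modByMonic (Λ : K[X] →ₗ[K] K) (p : K[X]) {G : K[X][X]}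
    (hG : G.Monic) :
    ∃ P : K[X], ∀ ε, Λ (p %ₘ G.map (evalRingHom ε)) = P.eval ε := by
  let q : K[X][X] := p.map C %ₘ G
  refine ⟨∑ k ∈ Finset.range (q.natDegree + 1), C (Λ (X ^ k)) * q.coeff k, fun ε => ?_⟩
  have hq : p %ₘ G.map (evalRingHom ε) = q.map (evalRingHom ε) := by
    have hid : (evalRingHom ε).comp C = RingHom.id K := by
      ext
      simp
    rw [map_modByMonic _ hG, Polynomial.map_map, hid, Polynomial.map_id]
  rw [hq, as_sum_range' (q.map (evalRingHom ε)) (q.natDegree + 1)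
    (Nat.lt_succ_of_le natDegree_map_le), map_sum, eval_finsetSum]
  refine Finset.sum_congr rfl fun k _ => ?_
  rw [← C_mul_X_pow_eq_monomial, C_mul', map_smul, eval_mul, eval_C, smul_eq_mul, coeff_map,
    coe_evalRingHom, mul_comm]

lemma exists_finset_forall_injective_add_mul (b c : Fin e → K) (hc : Function.Injective c) :
    ∃ E : Finset K, ∀ ε ∉ E, Function.Injective fun i => b i + c i * ε := by
  classical
  refine ⟨Finset.univ.image fun ij : Fin e × Fin e => (b ij.1 - b ij.2) / (c ij.2 - c ij.1),
    fun ε hε i j hij => ?_⟩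
  by_contra hne
  refine hε (Finset.mem_image.2 ⟨(i, j), Finset.mem_univ _, ?_⟩)
  have hcne : c j - c i ≠ 0 := sub_ne_zero.2 fun h => hne (hc h).symm
  dsimp only at hij ⊢
  rw [div_eq_iff hcne]
  linear_combination hij

/- Moving the roots of the apolar polynomial apart, `b i ↦ b i + c i ε`, deforms `Λ` to the
functional `p ↦ Λ (p %ₘ g_ε)`, whose apolar polynomial `g_ε` has distinct roots. -/
lemma IsApolar.hasBorderRankLE_lineFunctional_prod [Infinite K] (u v : Fin (m + 1) → K)
    (hd : d ≠ 0) {b : Fin e → K} (h : IsApolar Λ (∏ i, (X - C (b i))) d) :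
    HasBorderRankLE (lineFunctional u v Λ) d e := by
  classical
  let c : Fin e → K := fun i => Infinite.natEmbedding K i
  have hc : Function.Injective c := (Infinite.natEmbedding K).injective.comp Fin.val_injective
  let g : K → K[X] := fun ε => ∏ i, (X - C (b i + c i * ε))
  have hg : ∀ ε, (g ε).Monic := fun ε => monic_prod_of_monic _ _ fun _ _ => monic_X_sub_C _
  obtain ⟨E, hE⟩ := exists_finset_forall_injective_add_mul b c hc
  refine ⟨fun ε => lineFunctional u v (Λ ∘ₗ modByMonicHom (g ε)), fun f _ => ?_,
    ⟨E, fun ε hε => ?_⟩, fun f hf => ?_⟩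
  · have hG : (∏ i, (X - C (C (b i) + C (c i) * X)) : K[X][X]).Monic :=
      monic_prod_of_monic _ _ fun _ _ => monic_X_sub_C _
    obtain ⟨P, hP⟩ := exists_polynomial_eval_eq_apply_modByMonic Λ (restrictLine u v f) hG
    refine ⟨P, fun ε => ?_⟩
    rw [← hP, lineFunctional_apply, LinearMap.comp_apply, modByMonicHom_apply]
    simp [g, Polynomial.map_prod]
  · have hprod : g ε = ∏ x ∈ Finset.univ.image fun i => b i + c i * ε, (X - C x) := by
      rw [Finset.prod_image fun i _ j _ hij => hE ε hε hij]
    have hapolar := isApolar_comp_modByMonicHom Λ (hg ε) d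
    nth_rewrite 2 [hprod] at hapolar
    have hrank := hapolar.hasRankLE_lineFunctional u v hd
    rwa [Finset.card_image_of_injective _ (hE ε hε), Finset.card_univ, Fintype.card_fin] at hrank
  · have hzero : g 0 = ∏ i, (X - C (b i)) := by simp [g]
    rw [lineFunctional_apply, LinearMap.comp_apply, modByMonicHom_apply, hzero]
    exact h.apply_modByMonic (hzero ▸ hg 0) (natDegree_restrictLine_le u v hf)

lemma IsApolar.hasBorderRankLE_lineFunctional [IsAlgClosed K] (u v : Fin (m + 1) → K)
    (hd : d ≠ 0) {g : K[X]} (hg : g.Monic) (h : IsApolar Λ g d) :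
    HasBorderRankLE (lineFunctional u v Λ) d g.natDegree := by
  have hsplit := IsAlgClosed.splits g
  have hlength : g.roots.toList.length = g.natDegree := by
    rw [Multiset.length_toList, hsplit.natDegree_eq_card_roots]
  have hprod : g = ∏ i, (X - C (g.roots.toList.get i)) := by
    rw [← List.prod_ofFn, ← Function.comp_def (fun a => X - C a), ← List.map_ofFn, List.ofFn_get,
      ← Multiset.prod_coe, ← Multiset.map_coe, Multiset.coe_toList]
    exact hsplit.eq_prod_roots_of_monic hg
  rw [← hlength]
  exact IsApolar.hasBorderRankLE_lineFunctional_prod u v hd (hprod ▸ h)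

end BorderRankOnALine

section Sylvester

open Polynomial

variable {K : Type} [Field K] {m d n e : ℕ}

lemma mem_degreeLT_of_natDegree_lt {f : K[X]} (h : f.natDegree < n) : f ∈ degreeLT K n :=
  mem_degreeLT.2 (degree_le_natDegree.trans_lt (by exact_mod_cast h))

lemma natDegree_le_of_mem_degreeLT_succ {f : K[X]} (h : f ∈ degreeLT K (n + 1)) :
    f.natDegree ≤ n :=
  natDegree_le_iff_coeff_eq_zero.2 fun _ hk =>
    coeff_eq_zero_of_degree_lt ((mem_degreeLT.1 h).trans_le (by exact_mod_cast hk))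

lemma mul_X_sub_C_mem_degreeLT {f : K[X]} (hf : f ∈ degreeLT K n) (τ : K) :
    f * (X - C τ) ∈ degreeLT K (n + 1) := by
  by_cases h0 : f = 0
  · rw [h0, zero_mul]
    exact Submodule.zero_mem _
  · rw [mem_degreeLT, degree_eq_natDegree h0] at hf
    refine mem_degreeLT_of_natDegree_lt (natDegree_mul_le.trans_lt ?_)
    rw [natDegree_X_sub_C]
    exact Nat.succ_lt_succ (by exact_mod_cast hf)

/-- The polynomials of degree less than `n` that pair to zero, under `(f, g) ↦ Λ (f g)`, with all
polynomials of degree less than `k`. For `n + k = d + 2` these are the forms of degree `n - 1`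
apolar to the binary form of degree `d` that `Λ` represents. -/
def apolarSpace (Λ : K[X] →ₗ[K] K) (n k : ℕ) : Submodule K K[X] :=
  degreeLT K n ⊓ (degreeLT K k).orthogonalBilin ((LinearMap.mul K K[X]).compr₂ Λ)

variable {Λ : K[X] →ₗ[K] K}

lemma mem_apolarSpace {k : ℕ} {g : K[X]} :
    g ∈ apolarSpace Λ n k ↔ g ∈ degreeLT K n ∧ ∀ f ∈ degreeLT K k, Λ (g * f) = 0 := by
  simp only [apolarSpace, Submodule.mem_inf, Submodule.mem_orthogonalBilin_iff,
    LinearMap.compr₂_apply, LinearMap.mul_apply', mul_comm g]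

lemma exists_forall_apply_eq_apply_mul {k : ℕ} (l : K[X] →ₗ[K] K)
    (h : ∀ g ∈ apolarSpace Λ n k, l g = 0) :
    ∃ f ∈ degreeLT K k, ∀ g ∈ degreeLT K n, l g = Λ (g * f) := by
  let T : degreeLT K k →ₗ[K] Module.Dual K (degreeLT K n) :=
    LinearMap.lcomp K K (degreeLT K n).subtype ∘ₗ (LinearMap.mul K K[X]).compr₂ Λ ∘ₗ
      (degreeLT K k).subtype
  have hT : ∀ f g, T f g = Λ (g.1 * f.1) := fun f g => by simp [T, mul_comm]
  have hmem : l ∘ₗ (degreeLT K n).subtype ∈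
      (LinearMap.range T).dualCoannihilator.dualAnnihilator := by
    rw [Submodule.mem_dualAnnihilator]
    intro g hg
    refine h g.1 (mem_apolarSpace.2 ⟨g.2, fun f hf => ?_⟩)
    rw [← hT ⟨f, hf⟩ g]
    exact (Submodule.mem_dualCoannihilator g).1 hg _ ⟨_, rfl⟩
  rw [Subspace.dualCoannihilator_dualAnnihilator_eq] at hmem
  obtain ⟨f, hf⟩ := hmem
  refine ⟨f.1, f.2, fun g hg => ?_⟩
  rw [← hT f ⟨g, hg⟩, hf]
  rfl

lemma exists_mem_apolarSpace_eval_ne_zero (h : apolarSpace Λ (e + 1) n = ⊥) (τ : K) :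
    ∃ g ∈ apolarSpace Λ (n + 1) e, eval τ g ≠ 0 := by
  by_contra! hcon
  obtain ⟨f, hf, hrep⟩ := exists_forall_apply_eq_apply_mul (leval τ) hcon
  have hmem : f * (X - C τ) ∈ apolarSpace Λ (e + 1) n := by
    refine mem_apolarSpace.2 ⟨mul_X_sub_C_mem_degreeLT hf τ, fun g hg => ?_⟩
    have hval := hrep _ (mul_X_sub_C_mem_degreeLT hg τ)
    rw [leval_apply, eval_mul, eval_sub, eval_X, eval_C, sub_self, mul_zero] at hval
    rw [hval]
    ring_nf
  rw [h, Submodule.mem_bot] at hmem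
  have hf0 : f = 0 := (mul_eq_zero.1 hmem).resolve_right (X_sub_C_ne_zero τ)
  have hone := hrep 1 (mem_degreeLT_of_natDegree_lt (by simp))
  simp [hf0] at hone

lemma exists_mem_apolarSpace_natDegree_eq (h : apolarSpace Λ (e + 1) n = ⊥) :
    ∃ g ∈ apolarSpace Λ (n + 1) e, g ≠ 0 ∧ g.natDegree = n := by
  suffices ∃ g ∈ apolarSpace Λ (n + 1) e, g.coeff n ≠ 0 by
    obtain ⟨g, hg, hcoeff⟩ := this
    refine ⟨g, hg, fun h0 => hcoeff (by rw [h0, coeff_zero]), le_antisymm ?_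
      (le_natDegree_of_ne_zero hcoeff)⟩
    exact natDegree_le_of_mem_degreeLT_succ (mem_apolarSpace.1 hg).1
  by_contra! hcon
  obtain ⟨f, hf, hrep⟩ := exists_forall_apply_eq_apply_mul (lcoeff K n) hcon
  have hmem : f ∈ apolarSpace Λ (e + 1) n := by
    refine mem_apolarSpace.2 ⟨degreeLT_mono e.le_succ hf, fun g hg => ?_⟩
    rw [mul_comm, ← hrep g (degreeLT_mono n.le_succ hg), lcoeff_apply]
    exact coeff_eq_zero_of_degree_lt (mem_degreeLT.1 hg)
  rw [h, Submodule.mem_bot] at hmem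
  have htop := hrep (X ^ n) (mem_degreeLT_of_natDegree_lt (by simp))
  simp [hmem] at htop

variable [IsAlgClosed K] [CharZero K]

/- The critical points of `g / h` are zeros of the Wronskian, so only finitely many members of the
pencil have a multiple root. -/
lemma exists_separable_add_C_mul {g h : K[X]} (hg : g ≠ 0) (hh : h.natDegree ≤ g.natDegree)
    (hgh : IsCoprime g h) :
    ∃ t : K, (g + C t * h).Separable ∧ (g + C t * h).natDegree = g.natDegree := by
  classical
  by_cases hw : wronskian g h = 0
  · have hconst := derivative_eq_zero.1 (hgh.wronskian_eq_zero_iff.1 hw).1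
    rw [eq_C_of_natDegree_eq_zero hconst] at hg ⊢
    refine ⟨0, ?_, by simp⟩
    simpa [separable_C] using hg
  let n := g.natDegree
  let bad : Finset K := insert (-(g.coeff n / h.coeff n))
    ((wronskian g h).roots.toFinset.image fun x => -(eval x g / eval x h))
  obtain ⟨t, ht⟩ := Infinite.exists_notMem_finset bad
  have ht_solves : ∀ {a b : K}, a + t * b = 0 → b ≠ 0 → t = -(a / b) := fun hab hb => by
    rw [← neg_div, eq_div_iff hb]
    linear_combination hab
  refine ⟨t, ?_, le_antisymm ?_ (le_natDegree_of_ne_zero fun h0 => ?_)⟩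
  · rw [Polynomial.Separable, isCoprime_iff_aeval_ne_zero_of_isAlgClosed K K]
    by_contra! hcon
    obtain ⟨x, hx, hx'⟩ := hcon
    simp only [coe_aeval_eq_eval, derivative_add, derivative_C_mul, eval_add, eval_mul, eval_C]
      at hx hx'
    have hhx : eval x h ≠ 0 := fun h0 => by
      obtain ⟨a, b, hab⟩ := hgh
      have hbezout := congrArg (eval x) hab
      rw [h0, mul_zero, add_zero] at hx
      simp [hx, h0] at hbezout
    refine ht (Finset.mem_insert_of_mem (Finset.mem_image.2 ⟨x, ?_, (ht_solves hx hhx).symm⟩))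
    rw [Multiset.mem_toFinset, mem_roots hw, IsRoot, wronskian, eval_sub, eval_mul, eval_mul]
    linear_combination eval x (derivative h) * hx - eval x h * hx'
  · exact (natDegree_add_le _ _).trans (max_le le_rfl ((natDegree_C_mul_le _ _).trans hh))
  · rw [coeff_add, coeff_C_mul] at h0
    by_cases hz : h.coeff n = 0
    · rw [hz, mul_zero, add_zero] at h0
      exact hg (leadingCoeff_eq_zero.1 h0)
    · exact ht (Finset.mem_insert.2 (Or.inl (ht_solves h0 hz)))

lemma hasRankLE_lineFunctional_of_apolarSpace_eq_bot (u v : Fin (m + 1) → K) (hd : d ≠ 0)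
    (hen : e + n = d + 1) (h : apolarSpace Λ (e + 1) n = ⊥) :
    HasRankLE (lineFunctional u v Λ) d n := by
  classical
  obtain ⟨g, hg, hg0, hgn⟩ := exists_mem_apolarSpace_natDegree_eq h
  obtain ⟨k, hk, hroots⟩ := Module.Dual.exists_forall_mem_ne_zero_of_forall_exists
    (apolarSpace Λ (n + 1) e) (fun τ : g.roots.toFinset => leval τ.1)
    fun τ => exists_mem_apolarSpace_eval_ne_zero h τ.1
  have hcop : IsCoprime g k := by
    rw [isCoprime_iff_aeval_ne_zero_of_isAlgClosed K K]
    intro x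
    by_cases hx : eval x g = 0
    · exact Or.inr (hroots ⟨x, by simpa [hg0] using hx⟩)
    · exact Or.inl hx
  have hkn : k.natDegree ≤ g.natDegree :=
    hgn ▸ natDegree_le_of_mem_degreeLT_succ (mem_apolarSpace.1 hk).1
  obtain ⟨t, hsep, hdeg⟩ := exists_separable_add_C_mul hg0 hkn hcop
  let p := g + C t * k
  have hp : p ∈ apolarSpace Λ (n + 1) e := by
    refine Submodule.add_mem _ hg ?_
    rw [C_mul']
    exact Submodule.smul_mem _ t hk
  have hpn : p.natDegree = n := hdeg.trans hgn
  have hapolar : IsApolar Λ p d := fun f hf =>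
    (mem_apolarSpace.1 hp).2 f (mem_degreeLT_of_natDegree_lt (by omega))
  exact hpn ▸ hapolar.hasRankLE_lineFunctional_of_separable u v hd hsep

end Sylvester

section ChangeOfChart

open Polynomial

variable {K : Type} [Field K] {m d n e : ℕ}

/-- The substitution `p ↦ (X - τ) ^ d * p (1 / (X - τ))` on polynomials of degree at most `d`. It
rewrites a binary form of degree `d` in the chart of `ℙ¹` in which `τ` is the point at infinity. -/
def reflectShift (d : ℕ) (τ : K) : K[X] →ₗ[K] K[X] where
  toFun p := (reflect d p).comp (X - C τ)
  map_add' p q := by rw [reflect_add, add_comp]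
  map_smul' c p := by
    rw [RingHom.id_apply, smul_eq_C_mul, smul_eq_C_mul, reflect_C_mul, mul_comp, C_comp]

lemma reflectShift_apply (d : ℕ) (τ : K) (p : K[X]) :
    reflectShift d τ p = (reflect d p).comp (X - C τ) := rfl

lemma eval_reflectShift {d : ℕ} {p : K[X]} (hp : p.natDegree ≤ d) {τ b : K} (hb : b ≠ τ) :
    eval b (reflectShift d τ p) = (b - τ) ^ d * eval (b - τ)⁻¹ p := by
  let _ := invertibleOfNonzero (inv_ne_zero (sub_ne_zero.2 hb))
  have h := eval₂_reflect_mul_pow (RingHom.id K) (b - τ)⁻¹ d p hp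
  rw [invOf_eq_inv, inv_inv, ← eval, ← eval] at h
  rw [reflectShift_apply, eval_comp, eval_sub, eval_X, eval_C, ← h, mul_left_comm, ← mul_pow,
    mul_inv_cancel₀ (sub_ne_zero.2 hb), one_pow, mul_one]

lemma restrictLine_eq_reflectShift [Infinite K] (u v : Fin (m + 1) → K) (τ : K) {f : PR K m}
    (hf : f.IsHomogeneous d) :
    restrictLine u v f = reflectShift d τ (restrictLine v (u + τ • v) f) := by
  refine eq_of_infinite_eval_eq _ _ ((Set.infinite_univ.sdiff (Set.finite_singleton τ)).mono ?_)
  rintro b ⟨-, hb⟩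
  have hsub : b - τ ≠ 0 := sub_ne_zero.2 hb
  rw [Set.mem_ofPred_eq, eval_reflectShift (natDegree_restrictLine_le _ _ hf) hb,
    eval_restrictLine, eval_restrictLine, ← eval_smul_of_isHomogeneous hf, smul_add, smul_smul,
    mul_inv_cancel₀ hsub, one_smul]
  congr 2
  module

variable {Λ : K[X] →ₗ[K] K}

lemma isApolar_comp_reflectShift {g : K[X]} (hg : g ∈ apolarSpace Λ (e + 1) n)
    (hen : e + n = d + 1) {τ : K} (hτ : eval τ g ≠ 0) :
    ∃ G : K[X], G.Monic ∧ G.natDegree = e ∧ IsApolar (Λ ∘ₗ reflectShift d τ) G d := by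
  obtain ⟨hdeg, hg⟩ := mem_apolarSpace.1 hg
  have hcomp : (g.comp (X + C τ)).natDegree ≤ e := by
    refine natDegree_comp_le.trans ?_
    rw [natDegree_X_add_C, mul_one]
    exact natDegree_le_of_mem_degreeLT_succ hdeg
  let G := reflect e (g.comp (X + C τ))
  have hcoeff : G.coeff e = eval τ g := by
    rw [coeff_reflect, revAt_le le_rfl, Nat.sub_self, coeff_zero_eq_eval_zero, eval_comp]
    simp
  have hG : G.natDegree = e :=
    le_antisymm (natDegree_reflect_le.trans (max_le le_rfl hcomp))
      (le_natDegree_of_ne_zero (hcoeff ▸ hτ))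
  have hlead : G.leadingCoeff = eval τ g := by rw [leadingCoeff, hG, hcoeff]
  refine ⟨C (eval τ g)⁻¹ * G, monic_C_mul_of_mul_leadingCoeff_eq_one
    (by rw [hlead, inv_mul_cancel₀ hτ]), by rw [natDegree_C_mul (inv_ne_zero hτ), hG], ?_⟩
  refine IsApolar.C_mul (fun f hf => ?_) (inv_ne_zero hτ)
  obtain ⟨N, rfl⟩ : ∃ N, d = e + N := ⟨d - e, by omega⟩
  have hfN : f.natDegree ≤ N := by omega
  have hmul : reflectShift (e + N) τ (G * f) = g * (reflect N f).comp (X - C τ) := by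
    rw [reflectShift_apply, reflect_mul G f hG.le hfN, mul_comp, reflect_reflect, comp_assoc]
    simp
  rw [LinearMap.comp_apply, hmul]
  refine hg _ (mem_degreeLT_of_natDegree_lt (natDegree_comp_le.trans_lt ?_))
  rw [natDegree_X_sub_C, mul_one]
  exact natDegree_reflect_le.trans_lt (by omega)

/- An apolar form may vanish at infinity; moving the point at infinity off its roots makes it
monic. -/
lemma exists_isApolar_of_apolarSpace_ne_bot [Infinite K] (u v : Fin (m + 1) → K)
    (hen : e + n = d + 1) (h : apolarSpace Λ (e + 1) n ≠ ⊥) :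
    ∃ (u' v' : Fin (m + 1) → K) (Λ' : K[X] →ₗ[K] K) (g : K[X]), g.Monic ∧ g.natDegree = e ∧
      IsApolar Λ' g d ∧
      ∀ f : PR K m, f.IsHomogeneous d → lineFunctional u v Λ f = lineFunctional u' v' Λ' f := by
  obtain ⟨g, hg, hg0⟩ := (Submodule.ne_bot_iff _).1 h
  obtain ⟨τ, hτ⟩ : ∃ τ, eval τ g ≠ 0 := by
    by_contra! hcon
    exact hg0 (zero_of_eval_zero g hcon)
  obtain ⟨G, hmonic, hdeg, hG⟩ := isApolar_comp_reflectShift hg hen hτ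
  refine ⟨v, u + τ • v, Λ ∘ₗ reflectShift d τ, G, hmonic, hdeg, hG, fun f hf => ?_⟩
  rw [lineFunctional_apply, restrictLine_eq_reflectShift u v τ hf]
  rfl

end ChangeOfChart

section Line

variable {K : Type} [Field K] [Infinite K] {m d n : ℕ}

lemma exists_rep_eq_smul_add (T : Finset (Pm K m)) (W : Submodule K (Fin (m + 1) → K))
    (hW : Module.finrank K W ≤ 2) (hT : ∀ q ∈ T, q.rep ∈ W) :
    ∃ (u v : Fin (m + 1) → K) (a c : Pm K m → K), ∀ q ∈ T, q.rep = c q • (u + a q • v) := by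
  obtain ⟨l, hl⟩ := Module.exists_dual_forall_apply_ne_zero (K := K) (fun q : T => q.1.rep)
    fun q => q.1.rep_nonzero
  replace hl : ∀ q ∈ T, l q.rep ≠ 0 := fun q hq => hl ⟨q, hq⟩
  rcases T.eq_empty_or_nonempty with rfl | ⟨p, hp⟩
  · exact ⟨0, 0, 0, 0, by simp⟩
  have hlt : W ⊓ LinearMap.ker l < W :=
    inf_lt_left.2 fun hle => hl p hp (LinearMap.mem_ker.1 (hle (hT p hp)))
  have hfinrank := Submodule.finrank_lt_finrank_of_lt hlt
  obtain ⟨v, hv⟩ := (finrank_le_one_iff (K := K) (V := (W ⊓ LinearMap.ker l : Submodule K _))).1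
    (by omega)
  let u := (l p.rep)⁻¹ • p.rep
  have hex : ∀ q : Pm K m, ∃ a : K, q ∈ T → (l q.rep)⁻¹ • q.rep = u + a • v.1 := by
    intro q
    by_cases hq : q ∈ T
    · have hker : (l q.rep)⁻¹ • q.rep - u ∈ W ⊓ LinearMap.ker l := by
        refine ⟨W.sub_mem (W.smul_mem _ (hT q hq)) (W.smul_mem _ (hT p hp)), ?_⟩
        rw [SetLike.mem_coe, LinearMap.mem_ker, map_sub, map_smul, map_smul, smul_eq_mul,
          smul_eq_mul, inv_mul_cancel₀ (hl p hp), inv_mul_cancel₀ (hl q hq), sub_self]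
      obtain ⟨c, hc⟩ := hv ⟨_, hker⟩
      exact ⟨c, fun _ => sub_eq_iff_eq_add'.1 (congrArg Subtype.val hc).symm⟩
    · exact ⟨0, fun h => absurd h hq⟩
  choose a ha using hex
  refine ⟨u, v.1, a, fun q => l q.rep, fun q hq => ?_⟩
  rw [← ha q hq, smul_smul, mul_inv_cancel₀ (hl q hq), one_smul]

lemma exists_evalComb_eq_lineFunctional (w : Pm K m →₀ K) (d : ℕ)
    {W : Submodule K (Fin (m + 1) → K)} (hW : Module.finrank K W ≤ 2)
    (hT : ∀ q ∈ w.support, q.rep ∈ W) :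
    ∃ (u v : Fin (m + 1) → K) (Λ : Polynomial K →ₗ[K] K),
      ∀ f : PR K m, f.IsHomogeneous d → evalComb w f = lineFunctional u v Λ f := by
  obtain ⟨u, v, a, c, hrep⟩ := exists_rep_eq_smul_add w.support W hW hT
  refine ⟨u, v, ∑ p ∈ w.support, (w p * c p ^ d) • Polynomial.leval (a p), fun f hf => ?_⟩
  rw [evalComb_apply, lineFunctional_apply, LinearMap.sum_apply]
  refine Finset.sum_congr rfl fun p hp => ?_
  rw [LinearMap.smul_apply, Polynomial.leval_apply, eval_restrictLine, hrep p hp,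
    eval_smul_of_isHomogeneous hf, smul_eq_mul, mul_assoc]

lemma exists_hasBorderRankLE_of_not_hasRankLE [IsAlgClosed K] [CharZero K] {w : Pm K m →₀ K}
    {W : Submodule K (Fin (m + 1) → K)} (hW : Module.finrank K W ≤ 2)
    (hT : ∀ q ∈ w.support, q.rep ∈ W) (hd : d ≠ 0) (h : ¬ HasRankLE (evalComb w) d n) :
    ∃ e, e + n = d + 1 ∧ 2 ≤ e ∧ HasBorderRankLE (evalComb w) d e := by
  obtain ⟨u, v, Λ, hΛ⟩ := exists_evalComb_eq_lineFunctional w d hW hT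
  have hn : n ≤ d := by
    by_contra! hdn
    exact h (((hasRankLE_lineFunctional_succ u v Λ hd).mono hdn).congr hΛ)
  obtain ⟨e, hen⟩ : ∃ e, e + n = d + 1 := ⟨d + 1 - n, by omega⟩
  obtain ⟨u', v', Λ', g, hg, rfl, hapolar, hΛ'⟩ := exists_isApolar_of_apolarSpace_ne_bot u v hen
    fun hbot => h ((hasRankLE_lineFunctional_of_apolarSpace_eq_bot u v hd hen hbot).congr hΛ)
  replace hΛ : ∀ f : PR K m, f.IsHomogeneous d → evalComb w f = lineFunctional u' v' Λ' f :=
    fun f hf => (hΛ f hf).trans (hΛ' f hf)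
  refine ⟨_, hen, ?_, (hapolar.hasBorderRankLE_lineFunctional u' v' hd hg).congr hΛ⟩
  by_contra! hlt
  have hone : g.natDegree = 1 := by omega
  rw [hg.eq_X_add_C hone, ← sub_neg_eq_add, ← Polynomial.C_neg,
    ← Finset.prod_singleton (fun b => Polynomial.X - Polynomial.C b)] at hapolar
  exact h (((hapolar.hasRankLE_lineFunctional u' v' hd).mono (by simp; omega)).congr hΛ)

end Line

section MatrixRank

variable {K α β γ : Type*} [Field K] [Fintype β] [Fintype γ]

lemma rank_add_rank_le_card_add_rank_mul (A : Matrix α β K) (B : Matrix β γ K) :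
    A.rank + B.rank ≤ Fintype.card β + (A * B).rank := by
  let f := A.mulVecLin.domRestrict (LinearMap.range B.mulVecLin)
  have hker : Module.finrank K (LinearMap.ker f) ≤
      Module.finrank K (LinearMap.ker A.mulVecLin) := by
    rw [LinearMap.ker_domRestrict]
    exact LinearMap.finrank_le_finrank_of_injective
      (f := (LinearMap.range B.mulVecLin).subtype.restrict fun x hx => hx)
      fun x y hxy => Subtype.ext (Subtype.ext (congrArg (fun z => z.1) hxy))
  have hrange : Module.finrank K (LinearMap.range f) = (A * B).rank := by
    rw [LinearMap.range_domRestrict, Matrix.rank, Matrix.mulVecLin_mul, LinearMap.range_comp]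
  have hf := LinearMap.finrank_range_add_finrank_ker f
  have hA := LinearMap.finrank_range_add_finrank_ker A.mulVecLin
  rw [Module.finrank_fintype_fun_eq_card] at hA
  rw [Matrix.rank, Matrix.rank]
  omega

lemma exists_mul_mul_eq_one_of_le_rank [Fintype α] (M : Matrix α β K)
    {k : ℕ} (h : k ≤ M.rank) :
    ∃ (A : Matrix (Fin k) α K) (B : Matrix β (Fin k) K), A * M * B = 1 := by
  classical
  let b := Module.finBasis K (LinearMap.range M.mulVecLin)
  choose c hc using fun i => (b (Fin.castLE h i)).2
  let L : (Fin k → K) →ₗ[K] (β → K) := Fintype.linearCombination K c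
  have hinj : LinearMap.ker (M.mulVecLin ∘ₗ L) = ⊥ := by
    have hindep : LinearIndependent K fun i => M.mulVecLin (c i) := by
      simp only [hc]
      exact (b.linearIndependent.comp _ (Fin.castLE_injective h)).map' (Submodule.subtype _)
        (Submodule.ker_subtype _)
    rw [LinearMap.ker_eq_bot]
    convert hindep.fintypeLinearCombination_injective using 2
    ext i : 2
    simp [L]
  obtain ⟨g, hg⟩ := LinearMap.exists_leftInverse_of_injective _ hinj
  refine ⟨LinearMap.toMatrix' g, LinearMap.toMatrix' L, ?_⟩
  rw [← LinearMap.toMatrix'_id, ← hg, LinearMap.toMatrix'_comp, LinearMap.toMatrix'_comp,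
    ← Matrix.toLin'_apply', LinearMap.toMatrix'_toLin', Matrix.mul_assoc]

end MatrixRank

section CatalecticantRank

open MvPolynomial

variable {K : Type} [Field K] {m d k n : ℕ} {φ : PR K m →ₗ[K] K} {P : PN K m d}

lemma rank_catalecticant_le_of_mem_secantWrt {ι κ : Type*} [Finite ι] [Fintype κ]
    {G : ι → PR K m} {H : κ → PR K m} (hφ : restrictDeg d φ = P.rep)
    (h : P ∈ secantWrt (XSet K m d) n) (hk : k ≤ d) (hG : ∀ i, (G i).IsHomogeneous k)
    (hH : ∀ j, (H j).IsHomogeneous (d - k)) : (catalecticant φ G H).rank ≤ n := by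
  have := Fintype.ofFinite ι
  by_contra! hn
  obtain ⟨A, B, hAB⟩ := exists_mul_mul_eq_one_of_le_rank _ (Nat.succ_le_of_lt hn)
  let G' : Fin (n + 1) → PR K m := fun i => ∑ a, A i a • G a
  let H' : Fin (n + 1) → PR K m := fun j => ∑ b, B b j • H b
  have hcat : catalecticant φ G' H' = A * catalecticant φ G H * B := by
    ext i j
    simp only [catalecticant, G', H', Matrix.of_apply, Matrix.mul_apply, Finset.sum_mul,
      Finset.mul_sum, smul_mul_assoc, mul_smul_comm, map_sum, map_smul, smul_eq_mul]
    congr! 2 with b _ a _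
    ring
  have hdet := det_catalecticant_eq_zero_of_mem_secantWrt hφ h hk (G := G') (H := H') (by simp)
    (fun i => Submodule.sum_smul_mem (homogeneousSubmodule _ _ k) _ fun a _ => hG a)
    (fun j => Submodule.sum_smul_mem (homogeneousSubmodule _ _ (d - k)) _ fun b _ => hH b)
  rw [hcat, hAB, Matrix.det_one] at hdet
  exact one_ne_zero hdet

lemma ImposesIndependent.exists_form_eval_eq {T : Finset (Pm K m)} (h : ImposesIndependent T k)
    (c : T → K) : ∃ G : PR K m, G.IsHomogeneous k ∧ ∀ t : T, eval t.1.rep G = c t := by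
  classical
  let F : Hd K m k →ₗ[K] (T → K) := LinearMap.pi fun t => evalAt t.1.rep ∘ₗ (Hd K m k).subtype
  have hF : Function.Surjective F := by
    rw [← LinearMap.dualMap_injective_iff, injective_iff_map_eq_zero]
    intro l hl
    obtain ⟨a, rfl⟩ := (Module.piEquiv T K K).surjective l
    let w : Pm K m →₀ K :=
      (Finsupp.equivFunOnFinite.symm a).embDomain (Function.Embedding.subtype _)
    have hw : w = 0 := by
      refine h w (fun p hp => ?_) fun f hf => ?_
      · rw [Finsupp.support_embDomain, Finset.mem_map] at hp
        obtain ⟨t, -, rfl⟩ := hp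
        exact t.2
      · have hlf : ∑ t, F ⟨f, hf⟩ t • a t = 0 := by
          simpa only [LinearMap.dualMap_apply, Module.piEquiv_apply_apply, LinearMap.zero_apply]
            using LinearMap.congr_fun hl ⟨f, hf⟩
        rw [evalComb, Finsupp.linearCombination_embDomain, Finsupp.linearCombination_apply,
          Finsupp.sum_fintype _ _ (by simp), LinearMap.sum_apply, ← hlf]
        exact Finset.sum_congr rfl fun t _ => mul_comm _ _
    have ha : a = 0 := by
      ext t
      exact DFunLike.congr_fun (Finsupp.embDomain_eq_zero.1 hw) t
    rw [ha, map_zero]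
  obtain ⟨G, hG⟩ := hF c
  exact ⟨G.1, G.2, fun t => by simpa [F] using congrFun hG t⟩

lemma ImposesIndependent.exists_card_le_rank_evalMatrix {T S : Finset (Pm K m)}
    (h : ImposesIndependent T k) (hTS : T ⊆ S) :
    ∃ G : T → PR K m, (∀ t, (G t).IsHomogeneous k) ∧ T.card ≤ (evalMatrix S G).rank := by
  classical
  choose G hG hval using fun t : T => h.exists_form_eval_eq (Pi.single t 1)
  refine ⟨G, hG, ?_⟩
  have hone : (evalMatrix S G).submatrix id (fun t : T => (⟨t.1, hTS t.2⟩ : S)) = 1 := by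
    ext t t'
    rw [Matrix.submatrix_apply, evalMatrix, Matrix.of_apply, Matrix.one_apply, id, hval,
      Pi.single_apply]
    simp only [eq_comm]
  calc T.card = (1 : Matrix T T K).rank := by rw [Matrix.rank_one, Fintype.card_coe]
    _ ≤ (evalMatrix S G).rank := hone ▸ Matrix.rank_submatrix_le _ _ _

lemma card_add_card_le_of_imposesIndependent (hφ : restrictDeg d φ = P.rep)
    (h : P ∈ secantWrt (XSet K m d) n) {w : Pm K m →₀ K}
    (hw : ∀ f : PR K m, f.IsHomogeneous d → φ f = evalComb w f) (hk : k ≤ d)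
    {T T' : Finset (Pm K m)} (hT : T ⊆ w.support) (hT' : T' ⊆ w.support)
    (hi : ImposesIndependent T k) (hi' : ImposesIndependent T' (d - k)) :
    T.card + T'.card ≤ w.support.card + n := by
  classical
  obtain ⟨G, hG, hrankG⟩ := hi.exists_card_le_rank_evalMatrix hT
  obtain ⟨H, hH, hrankH⟩ := hi'.exists_card_le_rank_evalMatrix hT'
  let D := Matrix.diagonal fun p : w.support => w p.1
  have hD : IsUnit D.det := by
    rw [Matrix.det_diagonal, isUnit_iff_ne_zero, Finset.prod_ne_zero_iff]
    exact fun p _ => Finsupp.mem_support_iff.1 p.2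
  have hcat := rank_catalecticant_le_of_mem_secantWrt hφ h hk hG hH
  rw [catalecticant_eq_mul hk hG hH hw] at hcat
  have hsyl := rank_add_rank_le_card_add_rank_mul (evalMatrix w.support G)
    (D * (evalMatrix w.support H).transpose)
  rw [Matrix.rank_mul_eq_right_of_isUnit_det _ _ hD, Matrix.rank_transpose, Fintype.card_coe]
    at hsyl
  exact (add_le_add hrankG hrankH).trans (hsyl.trans (Nat.add_le_add_left hcat _))

end CatalecticantRank

section OneLine

variable {K : Type} [Field K] {m k k' N : ℕ} {A : Finset (Pm K m)}

open Classical in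
lemma exists_line_card_ge_of_forall_imposesIndependent (hk : k ≤ k')
    (h : ∀ T ⊆ A, ∀ T' ⊆ A, ImposesIndependent T k → ImposesIndependent T' k' →
      T.card + T'.card ≤ N)
    (hN : N < min A.card (2 * k + 1) + min A.card (2 * k' + 1)) :
    ∃ W : Submodule K (Fin (m + 1) → K), Module.finrank K W ≤ 2 ∧
      k + 2 ≤ (A.filter (·.rep ∈ W)).card := by
  by_contra! hA
  have hind : ∀ j, k ≤ j → ∃ T ⊆ A, T.card = min A.card (2 * j + 1) ∧ ImposesIndependent T j := by
    intro j hj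
    obtain ⟨T, hT, hTc⟩ := Finset.exists_subset_card_eq (min_le_left A.card (2 * j + 1))
    refine ⟨T, hT, hTc, imposesIndependent_of_lines (hTc.le.trans (min_le_right _ _)) ?_⟩
    intro W hW
    have hTA := Finset.card_le_card (Finset.filter_subset_filter (·.rep ∈ W) hT)
    have hAW := hA W hW
    omega
  obtain ⟨T, hT, hTc, hTi⟩ := hind k le_rfl
  obtain ⟨T', hT', hTc', hTi'⟩ := hind k' hk
  have hTT' := h T hT T' hT' hTi hTi'
  omega

open Classical in
lemma card_add_card_le_of_notMem_line {W : Submodule K (Fin (m + 1) → K)}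
    (h : ∀ T ⊆ A, ∀ T' ⊆ A, ImposesIndependent T (k + 1) → ImposesIndependent T' (k' + 1) →
      T.card + T'.card ≤ N)
    (hk : k + 2 ≤ (A.filter (·.rep ∈ W)).card) (hk' : k' + 2 ≤ (A.filter (·.rep ∈ W)).card)
    {U U' : Finset (Pm K m)} (hU : U ⊆ A.filter (·.rep ∉ W)) (hU' : U' ⊆ A.filter (·.rep ∉ W))
    (hi : ImposesIndependent U k) (hi' : ImposesIndependent U' k') :
    U.card + U'.card + (k + k' + 4) ≤ N := by
  have hext : ∀ j, j + 2 ≤ (A.filter (·.rep ∈ W)).card → ∀ V ⊆ A.filter (·.rep ∉ W),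
      ImposesIndependent V j →
        ∃ T ⊆ A, T.card = V.card + (j + 2) ∧ ImposesIndependent T (j + 1) := by
    intro j hj V hV hVi
    obtain ⟨L, hL, hLc⟩ := Finset.exists_subset_card_eq hj
    have hon : ∀ q ∈ L, q.rep ∈ W := fun q hq => (Finset.mem_filter.1 (hL hq)).2
    have hoff : ∀ q ∈ V, q.rep ∉ W := fun q hq => (Finset.mem_filter.1 (hV hq)).2
    refine ⟨L ∪ V, Finset.union_subset (hL.trans (Finset.filter_subset _ _))
      (hV.trans (Finset.filter_subset _ _)), ?_, hVi.union_of_mem_subspace hoff hon hLc.le⟩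
    rw [Finset.card_union_of_disjoint, hLc, add_comm]
    exact Finset.disjoint_left.2 fun q hq hq' => hoff q hq' (hon q hq)
  obtain ⟨T, hT, hTc, hTi⟩ := hext k hk U hU hi
  obtain ⟨T', hT', hTc', hTi'⟩ := hext k' hk' U' hU' hi'
  have hTT' := h T hT T' hT' hTi hTi'
  omega

open Classical in
lemma two_mul_card_notMem_line_le {W : Submodule K (Fin (m + 1) → K)} (hkk : k ≤ k')
    (hkk' : k' ≤ k + 1) (hN : N ≤ 2 * (k + k' + 2) + 1)
    (h : ∀ T ⊆ A, ∀ T' ⊆ A, ImposesIndependent T (k + 1) → ImposesIndependent T' (k' + 1) →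
      T.card + T'.card ≤ N)
    (hW : k' + 2 ≤ (A.filter (·.rep ∈ W)).card) :
    2 * (A.filter (·.rep ∉ W)).card + (k + k' + 4) ≤ N := by
  have hoff : ∀ U ⊆ A.filter (·.rep ∉ W), ∀ U' ⊆ A.filter (·.rep ∉ W), ImposesIndependent U k →
      ImposesIndependent U' k' → U.card + U'.card ≤ N - (k + k' + 4) := fun U hU U' hU' hi hi' =>
    Nat.le_sub_of_add_le (card_add_card_le_of_notMem_line h (by omega) hW hU hU' hi hi')
  have hempty := card_add_card_le_of_notMem_line h (by omega) hW (Finset.empty_subset _)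
    (Finset.empty_subset _) (imposesIndependent_of_card_le (by simp))
    (imposesIndependent_of_card_le (by simp))
  by_contra! hcon
  obtain ⟨W', -, hW'⟩ := exists_line_card_ge_of_forall_imposesIndependent hkk hoff (by omega)
  have hsub := Finset.filter_subset (·.rep ∈ W') (A.filter (·.rep ∉ W))
  obtain ⟨U, hU, hUc⟩ := Finset.exists_subset_card_eq (Nat.le_of_succ_le hW')
  obtain ⟨U', hU', hUc'⟩ := Finset.exists_subset_card_eq
    ((Nat.add_le_add_right hkk' 1).trans hW')
  have hUU' := hoff U (hU.trans hsub) U' (hU'.trans hsub) (imposesIndependent_of_card_le hUc.le)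
    (imposesIndependent_of_card_le hUc'.le)
  omega

end OneLine

section SmallRank

variable {K : Type} [Field K] {m d : ℕ} {P : PN K m d}

open Classical in
lemma exists_line_of_brank_lt_srank {φ : PR K m →ₗ[K] K} (hφ : restrictDeg d φ = P.rep)
    {w : Pm K m →₀ K} (hw : ∀ f : PR K m, f.IsHomogeneous d → φ f = evalComb w f)
    (hb : 0 < brank d P) (hbd : brank d P < d) (hbw : brank d P < w.support.card)
    (hwb : w.support.card + brank d P ≤ 2 * d + 1) :
    ∃ W : Submodule K (Fin (m + 1) → K), Module.finrank K W ≤ 2 ∧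
      d < 2 * (w.support.filter (·.rep ∈ W)).card ∧
      2 * (w.support.filter (·.rep ∉ W)).card + (d + 2) ≤ w.support.card + brank d P := by
  obtain ⟨k, k', hkk, hkk', hd⟩ : ∃ k k', k ≤ k' ∧ k' ≤ k + 1 ∧ d = k + k' + 2 :=
    ⟨d / 2 - 1, d - d / 2 - 1, by omega, by omega, by omega⟩
  have hind : ∀ T ⊆ w.support, ∀ T' ⊆ w.support, ImposesIndependent T (k + 1) →
      ImposesIndependent T' (k' + 1) → T.card + T'.card ≤ w.support.card + brank d P :=
    fun T hT T' hT' hi hi' => card_add_card_le_of_imposesIndependent hφ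
      (mem_secantWrt_brank hb) hw (k := k + 1) (by omega) hT hT' hi
      (by rwa [show d - (k + 1) = k' + 1 by omega])
  obtain ⟨W, hW, hWc⟩ := exists_line_card_ge_of_forall_imposesIndependent
    (Nat.add_le_add_right hkk 1) hind (by omega)
  refine ⟨W, hW, by omega, ?_⟩
  have hoff := two_mul_card_notMem_line_le (W := W) hkk hkk' (by omega) hind (by omega)
  omega

/- Split a minimal decomposition into the points on the line and the points off it: the first part
is a binary form of rank `a` and border rank `e`, with `a + e = d + 2`. -/
theorem exists_brank_eq_add_srank_add_eq [IsAlgClosed K] [CharZero K]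
    (hb : 0 < brank d P) (hbd : brank d P < d) (hbr : brank d P < srank d P)
    (hrb : srank d P + brank d P ≤ 2 * d + 1) :
    ∃ e b, 2 ≤ e ∧ brank d P = e + b ∧ srank d P + e = d + 2 + b := by
  classical
  obtain ⟨φ, hφ⟩ := LinearMap.exists_extend P.rep
  obtain ⟨w, hwc, hw⟩ := hasRankLE_srank_of_pos hφ (hb.trans hbr)
  have hcard : w.support.card = srank d P := hwc.antisymm (srank_le hφ ⟨w, le_rfl, hw⟩)
  obtain ⟨W, hW, hon, hoff⟩ := exists_line_of_brank_lt_srank hφ hw hb hbd (by omega) (by omega)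
  have hsum := Finset.card_filter_add_card_filter_not (s := w.support) (·.rep ∈ W)
  set on := w.filter (·.rep ∈ W) with hon_def
  set off := w.filter (·.rep ∉ W) with hoff_def
  have hon_supp : on.support = w.support.filter (·.rep ∈ W) := Finsupp.support_filter _ _
  have hoff_supp : off.support = w.support.filter (·.rep ∉ W) := Finsupp.support_filter _ _
  rw [← hon_supp] at hon hsum
  rw [← hoff_supp] at hoff hsum
  have hsplit : ∀ f : PR K m, f.IsHomogeneous d → φ f = (evalComb on + evalComb off) f :=
    fun f hf => by rw [hw f hf, ← map_add, Finsupp.filter_add_filter_not]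
  have hoffRank := hasRankLE_evalComb off d
  have honRank : ¬ HasRankLE (evalComb on) d (on.support.card - 1) := by
    intro h
    have hr := srank_le hφ ((h.add hoffRank).congr hsplit)
    omega
  obtain ⟨e, hea, he, hebr⟩ := exists_hasBorderRankLE_of_not_hasRankLE hW
    (fun q hq => by
      rw [hon_supp] at hq
      exact (Finset.mem_filter.1 hq).2) (by omega) honRank
  have hbrank := brank_le hφ (by omega) ((hebr.add hoffRank.hasBorderRankLE).congr hsplit)
  exact ⟨e, off.support.card, he, by omega, by omega⟩

end SmallRank

section PlaneConics

open MvPolynomial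

variable {K : Type} [Field K] {m k : ℕ}

lemma exists_form_vanishing_of_card_lt {T : Finset (Pm K m)} (h : T.card < (m + k).choose k) :
    ∃ q : PR K m, q.IsHomogeneous k ∧ q ≠ 0 ∧ ∀ p ∈ T, eval p.rep q = 0 := by
  let I := (Finset.univ : Finset (Fin (m + 1))).finsuppAntidiag k
  have hcard : Fintype.card I = (m + k).choose k := by
    rw [Fintype.card_coe, Finset.card_finsuppAntidiag_nat_eq_choose, Finset.card_univ,
      Fintype.card_fin, Nat.add_right_comm, Nat.add_sub_cancel]
  let L : (I → K) →ₗ[K] PR K m := Fintype.linearCombination K fun e => monomial e.1 1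
  have hL : Function.Injective L := by
    have hli : LinearIndependent K fun e : I => (monomial e.1 1 : PR K m) := by
      simpa [Function.comp_def] using
        (basisMonomials (Fin (m + 1)) K).linearIndependent.comp _ Subtype.val_injective
    exact LinearIndependent.fintypeLinearCombination_injective hli
  obtain ⟨c, hc, hc0⟩ := (Submodule.ne_bot_iff _).1 (LinearMap.ker_ne_bot_of_finrank_lt
    (f := LinearMap.pi fun p : T => evalAt p.1.rep ∘ₗ L) (by simpa [hcard] using h))
  refine ⟨L c, ?_, fun h0 => hc0 (hL (h0.trans L.map_zero.symm)), fun p hp => ?_⟩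
  · rw [Fintype.linearCombination_apply]
    refine IsHomogeneous.sum _ _ _ fun e _ => ?_
    rw [smul_monomial]
    refine isHomogeneous_monomial _ ?_
    rw [Finsupp.degree_eq_sum]
    exact (Finset.mem_finsuppAntidiag.1 e.2).1
  · simpa using congrFun hc ⟨p, hp⟩

lemma exists_conic_of_card_le {T : Finset (Pm K 2)} (h : T.card ≤ 5) :
    ∃ q : PR K 2, q.IsHomogeneous 2 ∧ q ≠ 0 ∧ ∀ p ∈ T, eval p.rep q = 0 :=
  exists_form_vanishing_of_card_lt (h.trans_lt (by decide))

lemma IsRelation.exists_linearForm_of_card_le {w : Pm K 2 →₀ K} (h : IsRelation w k)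
    (hc : w.support.card ≤ 2 * k + 1) :
    ∃ g : PR K 2, g.IsHomogeneous 1 ∧ g ≠ 0 ∧ ∀ p ∈ w.support, eval p.rep g = 0 := by
  obtain ⟨W, hW, hmem⟩ := h.exists_line_of_card_le hc
  have hWtop : W < ⊤ := lt_top_iff_ne_top.2 fun hW' => by
    rw [hW', finrank_top, Module.finrank_fin_fun] at hW
    omega
  obtain ⟨v, -, hv⟩ := SetLike.exists_of_lt hWtop
  obtain ⟨g, hg, hgv, hgW⟩ := exists_linearForm_eval_ne_zero W hv
  exact ⟨g, hg, fun h0 => hgv (by rw [h0, map_zero]), fun p hp => hgW _ (hmem p hp)⟩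

open Classical in
lemma card_filter_add_card_support_weightMul (w : Pm K m →₀ K) (g : PR K m) :
    (w.support.filter (eval ·.rep g = 0)).card + (weightMul w g).support.card =
      w.support.card := by
  have : (weightMul w g).support = w.support.filter (¬ eval ·.rep g = 0) := by
    ext p
    rw [mem_support_weightMul, Finset.mem_filter]
  rw [this, Finset.card_filter_add_card_filter_not]

lemma IsRelation.exists_conic_of_linearForm {w : Pm K 2 →₀ K} (h : IsRelation w (k + 1))
    {g : PR K 2} (hg : g.IsHomogeneous 1) (hg0 : g ≠ 0)
    (hc : (weightMul w g).support.card ≤ 2 * k + 1) :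
    ∃ q : PR K 2, q.IsHomogeneous 2 ∧ q ≠ 0 ∧ ∀ p ∈ w.support, eval p.rep q = 0 := by
  obtain ⟨g', hg', hg0', hvanish⟩ :=
    (isRelation_weightMul h hg (add_comm 1 k)).exists_linearForm_of_card_le hc
  refine ⟨g * g', hg.mul hg', mul_ne_zero hg0 hg0', fun p hp => ?_⟩
  rw [map_mul, mul_eq_zero]
  exact or_iff_not_imp_left.2 fun hp' => hvanish p (mem_support_weightMul.2 ⟨hp, hp'⟩)

open Classical in
/- Take a conic missing as few points as possible. Its residual relation has degree `k - 2`: few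
residual points lie on a line, and the remaining points then lie on a second one; many of them would
lie on a better conic by induction. -/
lemma IsRelation.exists_conic {w : Pm K 2 →₀ K} (h : IsRelation w k)
    (hc : 2 * w.support.card ≤ 5 * k) :
    ∃ q : PR K 2, q.IsHomogeneous 2 ∧ q ≠ 0 ∧ ∀ p ∈ w.support, eval p.rep q = 0 := by
  induction k using Nat.strong_induction_on generalizing w with
  | _ k ih =>
  by_cases h5 : w.support.card ≤ 5
  · exact exists_conic_of_card_le h5
  obtain ⟨q, ⟨hq, hq0⟩, hmin⟩ := exists_minimalFor_of_wellFoundedLT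
    (fun q : PR K 2 => q.IsHomogeneous 2 ∧ q ≠ 0) (fun q => (weightMul w q).support.card)
    ⟨X 0 ^ 2, isHomogeneous_X_pow 0 2, pow_ne_zero 2 (X_ne_zero 0)⟩
  have hbetter : ∀ B ⊆ w.support, (∃ q : PR K 2, q.IsHomogeneous 2 ∧ q ≠ 0 ∧
      ∀ p ∈ B, eval p.rep q = 0) → B.card + (weightMul w q).support.card ≤ w.support.card := by
    rintro B hB ⟨q', hq', hq0', hvanish⟩
    rw [← card_filter_add_card_support_weightMul w q']
    refine add_le_add (Finset.card_le_card fun p hp => Finset.mem_filter.2 ⟨hB hp, hvanish p hp⟩) ?_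
    exact (le_total _ _).elim id fun hle => hmin ⟨hq', hq0'⟩ hle
  have hfive : 5 + (weightMul w q).support.card ≤ w.support.card := by
    obtain ⟨B, hB, hBcard⟩ := Finset.exists_subset_card_eq (s := w.support) (n := 5) (by omega)
    exact hBcard ▸ hbetter B hB (exists_conic_of_card_le hBcard.le)
  have hres : IsRelation (weightMul w q) (k - 2) := isRelation_weightMul h hq (by omega)
  rcases (weightMul w q).support.eq_empty_or_nonempty with hempty | ⟨p, hp⟩
  · refine ⟨q, hq, hq0, fun p hp => ?_⟩
    by_contra hpq
    simpa [hempty] using mem_support_weightMul.2 ⟨hp, hpq⟩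
  have hres_card := hres.add_two_le_card hp
  by_cases hline : (weightMul w q).support.card ≤ 2 * (k - 2) + 1
  · obtain ⟨g, hg, hg0, hvanish⟩ := hres.exists_linearForm_of_card_le hline
    obtain ⟨k, rfl⟩ : ∃ l, k = l + 1 := ⟨k - 1, by omega⟩
    refine h.exists_conic_of_linearForm hg hg0 ?_
    have hsum := card_filter_add_card_support_weightMul w g
    have : (weightMul w q).support.card ≤ (w.support.filter (eval ·.rep g = 0)).card :=
      Finset.card_le_card fun p hp =>
        Finset.mem_filter.2 ⟨support_weightMul_subset _ _ hp, hvanish p hp⟩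
    omega
  · have := hbetter _ (support_weightMul_subset w q) (ih (k - 2) (by omega) hres (by omega))
    omega

end PlaneConics

section AxisRestriction

open Polynomial

variable {K : Type} [Field K] {m : ℕ}

lemma coeff_zero_restrictLine (u v : Fin (m + 1) → K) (f : PR K m) :
    (restrictLine u v f).coeff 0 = MvPolynomial.eval u f := by
  rw [coeff_zero_eq_eval_zero, eval_restrictLine, zero_smul, add_zero]

lemma coeff_restrictLine [Infinite K] (u v : Fin (m + 1) → K) {f : PR K m} {d : ℕ}
    (hf : f.IsHomogeneous d) : (restrictLine u v f).coeff d = MvPolynomial.eval v f := by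
  rw [restrictLine_eq_reflectShift u v 0 hf, reflectShift_apply, zero_smul, add_zero, C_0, sub_zero,
    comp_X, coeff_reflect, revAt_le le_rfl, Nat.sub_self, coeff_zero_restrictLine]

/-- Restriction to the coordinate line through the points `e_i` and `e_j`, in the chart
`x ↦ e_j + x • e_i`, so that the variable of `K[X]` stands for `X i / X j`. -/
def axisRestrict (i j : Fin (m + 1)) : PR K m →ₐ[K] K[X] :=
  restrictLine (Pi.single j 1) (Pi.single i 1)

/-- The coefficient of the monomial `X i ^ a * X j ^ (d - a)` of a form of degree `d`. -/
def axisCoeff (i j : Fin (m + 1)) (a : ℕ) : PR K m →ₗ[K] K :=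
  lineFunctional (Pi.single j 1) (Pi.single i 1) (lcoeff K a)

lemma axisCoeff_apply (i j : Fin (m + 1)) (a : ℕ) (f : PR K m) :
    axisCoeff i j a f = (axisRestrict i j f).coeff a := rfl

section

variable {i j k : Fin (m + 1)}

lemma axisRestrict_X_left (h : i ≠ j) : axisRestrict i j (MvPolynomial.X i : PR K m) = X := by
  simp [axisRestrict, restrictLine, h]

lemma axisRestrict_X_right (h : i ≠ j) : axisRestrict i j (MvPolynomial.X j : PR K m) = 1 := by
  simp [axisRestrict, restrictLine, h.symm]

lemma axisRestrict_X_of_ne (hi : k ≠ i) (hj : k ≠ j) :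
    axisRestrict i j (MvPolynomial.X k : PR K m) = 0 := by
  simp [axisRestrict, restrictLine, hi, hj]

lemma axisCoeff_mul_of_axisRestrict_eq_zero {a : ℕ} {E : PR K m} (h : axisRestrict i j E = 0)
    (f : PR K m) : axisCoeff i j a (E * f) = 0 := by
  rw [axisCoeff_apply, map_mul, h, zero_mul, coeff_zero]

/-- The linear form on the line through `e_i` and `e_j` vanishing at the projection of `p`. -/
def axisPencil (i j : Fin (m + 1)) (p : Pm K m) : PR K m :=
  MvPolynomial.C (p.rep j) * MvPolynomial.X i - MvPolynomial.C (p.rep i) * MvPolynomial.X j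

lemma isHomogeneous_axisPencil (i j : Fin (m + 1)) (p : Pm K m) :
    (axisPencil i j p).IsHomogeneous 1 :=
  (MvPolynomial.isHomogeneous_C_mul_X _ i).sub (MvPolynomial.isHomogeneous_C_mul_X _ j)

lemma eval_axisPencil_self (i j : Fin (m + 1)) (p : Pm K m) :
    MvPolynomial.eval p.rep (axisPencil i j p) = 0 := by
  simp [axisPencil, mul_comm]

lemma coeff_zero_axisRestrict_axisPencil (h : i ≠ j) (p : Pm K m) :
    (axisRestrict i j (axisPencil i j p)).coeff 0 = -p.rep i := by
  rw [axisRestrict, coeff_zero_restrictLine]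
  simp [axisPencil, h]

lemma coeff_mul_X_pow_mul_ne_zero {R P : K[X]} {a : ℕ} (hR : R ≠ 0) (ha : R.natTrailingDegree ≤ a)
    (hP : P.coeff 0 ≠ 0) : (R * (X ^ (a - R.natTrailingDegree) * P)).coeff a ≠ 0 := by
  have hP0 : P.natTrailingDegree = 0 := natTrailingDegree_eq_zero.2 (Or.inr hP)
  have hcoeff := coeff_mul_natTrailingDegree_add_natTrailingDegree (p := R) (q := P)
  rw [hP0, add_zero] at hcoeff
  rw [mul_left_comm, coeff_X_pow_mul', if_pos (Nat.sub_le _ _), Nat.sub_sub_self ha, hcoeff]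
  exact mul_ne_zero (trailingCoeff_nonzero_iff_nonzero.2 hR)
    (trailingCoeff_nonzero_iff_nonzero.2 fun h => hP (by rw [h, coeff_zero]))

open Classical in
/- If there were too few points, `X i ^ (a - δ)` times the product of the pencil members through
them, completed by a power of `X j`, would be killed on the left but not on the right. -/
lemma lt_card_add_of_evalComb_eq_coeff (hij : i ≠ j) {w : Pm K m →₀ K} {n a : ℕ} {R : K[X]}
    (hR : R ≠ 0) (hδ : R.natTrailingDegree ≤ a)
    (hw : ∀ g : PR K m, g.IsHomogeneous n → evalComb w g = (R * axisRestrict i j g).coeff a)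
    (hwi : ∀ p ∈ w.support, p.rep i = 0 → R.natTrailingDegree < a) :
    n < (w.support.filter (·.rep i ≠ 0)).card + (a - R.natTrailingDegree) := by
  by_contra! hcard
  set T := w.support.filter (·.rep i ≠ 0)
  set δ := R.natTrailingDegree
  obtain ⟨l, hl⟩ := Nat.exists_eq_add_of_le hcard
  let g : PR K m :=
    MvPolynomial.X i ^ (a - δ) * (∏ p ∈ T, axisPencil i j p) * MvPolynomial.X j ^ l
  have hg : g.IsHomogeneous n := by
    have hprod := MvPolynomial.IsHomogeneous.prod T (axisPencil i j) (fun _ => 1)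
      fun p _ => isHomogeneous_axisPencil i j p
    rw [Finset.sum_const, smul_eq_mul, mul_one] at hprod
    convert ((MvPolynomial.isHomogeneous_X_pow (R := K) i (a - δ)).mul hprod).mul
      (MvPolynomial.isHomogeneous_X_pow j l) using 1
    omega
  have hzero : evalComb w g = 0 := by
    rw [evalComb_apply]
    refine Finset.sum_eq_zero fun p hp => ?_
    by_cases hpi : p.rep i = 0
    · simp [g, hpi, (Nat.sub_pos_of_lt (hwi p hp hpi)).ne']
    · have : MvPolynomial.eval p.rep (∏ p ∈ T, axisPencil i j p) = 0 := by
        rw [map_prod]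
        exact Finset.prod_eq_zero (Finset.mem_filter.2 ⟨hp, hpi⟩) (eval_axisPencil_self i j p)
      simp [g, this]
  have hgline :
      axisRestrict i j g = X ^ (a - δ) * ∏ p ∈ T, axisRestrict i j (axisPencil i j p) := by
    simp only [g, map_mul, map_pow, map_prod, axisRestrict_X_left hij, axisRestrict_X_right hij,
      one_pow, mul_one]
  refine coeff_mul_X_pow_mul_ne_zero hR hδ ?_ (hgline ▸ (hw g hg).symm.trans hzero)
  rw [coeff_zero_prod, Finset.prod_ne_zero_iff]
  intro p hp
  rw [coeff_zero_axisRestrict_axisPencil hij]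
  exact neg_ne_zero.2 (Finset.mem_filter.1 hp).2

lemma rep_eq_smul_single {p : Pm K m} (h : ∀ l, l ≠ j → p.rep l = 0) :
    p.rep = p.rep j • Pi.single j 1 := by
  ext l
  by_cases hl : l = j
  · subst hl
    simp
  · simp [h l hl, hl]

open Classical in
lemma lt_card_filter_add_of_evalComb_eq_axisCoeff (hij : i ≠ j) {w : Pm K m →₀ K} {e n a : ℕ}
    {E : PR K m} (ha : a ≠ 0) (hE : E.IsHomogeneous e) (hE0 : axisRestrict i j E ≠ 0)
    (hδ : (axisRestrict i j E).natTrailingDegree ≤ a)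
    (hw : ∀ g : PR K m, g.IsHomogeneous n → evalComb w (E * g) = axisCoeff i j a (E * g))
    (hline : ∀ p ∈ w.support, MvPolynomial.eval p.rep E ≠ 0 → ∀ l, l ≠ i → l ≠ j → p.rep l = 0) :
    n < (w.support.filter fun p => MvPolynomial.eval p.rep E ≠ 0 ∧ p.rep i ≠ 0).card +
      (a - (axisRestrict i j E).natTrailingDegree) := by
  have hlt : ∀ p ∈ (weightMul w E).support, p.rep i = 0 →
      (axisRestrict i j E).natTrailingDegree < a := by
    intro p hp hpi
    rw [mem_support_weightMul] at hp
    have hcoeff : (axisRestrict i j E).coeff 0 ≠ 0 := fun h0 => hp.2 <| by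
      rw [axisRestrict, coeff_zero_restrictLine] at h0
      rw [rep_eq_smul_single (j := j) fun l hl => ?_, eval_smul_of_isHomogeneous hE, h0, mul_zero]
      exact (eq_or_ne l i).elim (fun h => h ▸ hpi) fun h => hline p hp.1 hp.2 l h hl
    rw [natTrailingDegree_eq_zero.2 (Or.inr hcoeff)]
    exact Nat.pos_of_ne_zero ha
  have := lt_card_add_of_evalComb_eq_coeff hij hE0 hδ
    (fun g hg => by rw [evalComb_weightMul, hw g hg, axisCoeff_apply, map_mul]) hlt
  convert this using 3
  ext p
  simp only [Finset.mem_filter, mem_support_weightMul, and_assoc]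

end

section Plane

variable {i j k : Fin 3} {f : PR K 2} {d : ℕ}

lemma isHomogeneous_of_X_mul {l : Fin (m + 1)} {g : PR K m}
    (h : (MvPolynomial.X l * g).IsHomogeneous (d + 1)) : g.IsHomogeneous d := by
  intro e he
  have hdeg := h (d := Finsupp.single l 1 + e) (by rwa [MvPolynomial.coeff_X_mul])
  rw [map_add, Finsupp.weight_single, Pi.one_apply, smul_eq_mul, mul_one] at hdeg
  omega

/- Vanishing on the line `X k = 0` makes the reduction of `f` modulo `X k` vanish wherever
`X j ≠ 0`, hence identically. -/
lemma X_dvd_of_axisRestrict_eq_zero [Infinite K] (hij : i ≠ j) (hik : i ≠ k) (hjk : j ≠ k)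
    (hf : f.IsHomogeneous d) (h : axisRestrict i j f = 0) : MvPolynomial.X k ∣ f := by
  have hcover : ∀ l, l = i ∨ l = j ∨ l = k := by
    clear h
    revert i j k
    decide
  let σ : PR K 2 →ₐ[K] PR K 2 := MvPolynomial.aeval (Function.update MvPolynomial.X k 0)
  have heval : ∀ v, MvPolynomial.eval v (σ f) = MvPolynomial.eval (Function.update v k 0) f := by
    intro v
    rw [← MvPolynomial.aeval_eq_eval, ← MvPolynomial.aeval_eq_eval]
    refine AlgHom.congr_fun (φ₁ := (MvPolynomial.aeval v).comp σ) ?_ f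
    ext l
    by_cases hl : l = k <;> simp [σ, hl]
  have hσ : σ f = 0 := by
    refine (mul_eq_zero.1 (MvPolynomial.funext fun v => ?_)).resolve_left
      (MvPolynomial.X_ne_zero (R := K) j)
    rw [map_mul, MvPolynomial.eval_X, heval, map_zero, mul_eq_zero, or_iff_not_imp_left]
    intro hv
    have hpoint : Function.update v k 0 =
        v j • ((Pi.single j 1 : Fin 3 → K) + (v i / v j) • Pi.single i 1) := by
      ext l
      rcases hcover l with rfl | rfl | rfl <;>
        simp [hij, hij.symm, hik, hik.symm, hjk, hjk.symm, mul_div_cancel₀ _ hv]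
    rw [hpoint, eval_smul_of_isHomogeneous hf, ← eval_restrictLine]
    exact mul_eq_zero_of_right _ (by rw [show restrictLine _ _ f = 0 from h, eval_zero])
  have hmod : (Ideal.Quotient.mkₐ K (Ideal.span {(MvPolynomial.X k : PR K 2)})).comp σ =
      Ideal.Quotient.mkₐ K _ := by
    ext l
    by_cases hl : l = k
    · subst hl
      simp [σ]
    · simp [σ, hl]
  rw [← Ideal.mem_span_singleton, ← Ideal.Quotient.eq_zero_iff_mem, ← Ideal.Quotient.mkₐ_eq_mk K,
    ← hmod, AlgHom.comp_apply, hσ, map_zero]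

lemma axisRestrict_ne_zero_of_eval_eq_zero [Infinite K] (hij : i ≠ j) (hik : i ≠ k) (hjk : j ≠ k)
    {p : Pm K 2} (hpk : p.rep k ≠ 0) (hf : f.IsHomogeneous 1) (hf0 : f ≠ 0)
    (hp : MvPolynomial.eval p.rep f = 0) : axisRestrict i j f ≠ 0 := by
  intro h
  obtain ⟨g, rfl⟩ := X_dvd_of_axisRestrict_eq_zero hij hik hjk hf h
  obtain ⟨c, rfl⟩ : ∃ c, g = MvPolynomial.C c :=
    ⟨_, MvPolynomial.totalDegree_eq_zero_iff_eq_C.1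
      ((MvPolynomial.totalDegree_zero_iff_isHomogeneous _).2 (isHomogeneous_of_X_mul hf))⟩
  rw [map_mul, MvPolynomial.eval_X, MvPolynomial.eval_C, mul_eq_zero, or_iff_right hpk] at hp
  exact hf0 (by rw [hp, map_zero, mul_zero])

lemma natTrailingDegree_axisRestrict_le (i j : Fin 3) (hf : f.IsHomogeneous d) :
    (axisRestrict i j f).natTrailingDegree ≤ d :=
  (natTrailingDegree_le_natDegree _).trans (natDegree_restrictLine_le _ _ hf)

end Plane

end AxisRestriction

section LengthBounds

open MvPolynomial

variable {K : Type} [Field K]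

/-- `F` vanishes at the points which `u` weights. -/
def VanishesOn {m : ℕ} (u : Pm K m →₀ K) (F : PR K m) : Prop :=
  ∀ p ∈ u.support, eval p.rep F = 0

lemma VanishesOn.weightMul_iff {m : ℕ} {u : Pm K m →₀ K} {F G : PR K m} :
    VanishesOn (weightMul u G) F ↔ VanishesOn u (F * G) := by
  simp only [VanishesOn, mem_support_weightMul, map_mul, mul_eq_zero, and_imp,
    or_iff_not_imp_right]

open Classical in
/- Multiplying the relation by `ℓ` removes the points of `Q`; the residual relation has degree
`n`. -/
lemma IsRelation.exists_residual_form {u : Pm K 2 →₀ K} {n : ℕ} (h : IsRelation u (n + 1))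
    {S Q : Finset (Pm K 2)} {ℓ : PR K 2} (hℓ : ℓ.IsHomogeneous 1) (hu : u.support ⊆ S ∪ Q)
    (hQu : Q ⊆ S ∪ u.support) (hQ : ∀ q ∈ Q, eval q.rep ℓ = 0) :
    (u.support = ∅ ∧ Q.card ≤ S.card) ∨ (VanishesOn u ℓ ∧ n + 3 ≤ S.card + Q.card) ∨
      (∃ k F, F.IsHomogeneous k ∧ F ≠ 0 ∧ VanishesOn u (F * ℓ) ∧
        (∃ p ∈ u.support, eval p.rep F = 0) ∧
        (k = 1 ∧ n + 2 ≤ S.card ∨ k = 2 ∧ 2 * n + 2 ≤ S.card)) ∨ 5 * n < 2 * S.card := by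
  rcases u.support.eq_empty_or_nonempty with hempty | ⟨p, hp⟩
  · rw [hempty, Finset.union_empty] at hQu
    exact Or.inl ⟨hempty, Finset.card_le_card hQu⟩
  by_cases hvan : VanishesOn u ℓ
  · exact Or.inr (Or.inl ⟨hvan, (h.add_two_le_card hp).trans
      ((Finset.card_le_card hu).trans (Finset.card_union_le _ _))⟩)
  have hres : IsRelation (weightMul u ℓ) n := isRelation_weightMul h hℓ (add_comm 1 n)
  have hsub : (weightMul u ℓ).support ⊆ S := by
    intro q hq
    rw [mem_support_weightMul] at hq
    exact (Finset.mem_union.1 (hu hq.1)).resolve_right fun hqQ => hq.2 (hQ q hqQ)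
  obtain ⟨q, hq⟩ : (weightMul u ℓ).support.Nonempty := by
    simp only [VanishesOn, not_forall] at hvan
    obtain ⟨q, hq, hqℓ⟩ := hvan
    exact ⟨q, mem_support_weightMul.2 ⟨hq, hqℓ⟩⟩
  have hcard := hres.add_two_le_card hq
  have hle := Finset.card_le_card hsub
  have hform : ∀ {k : ℕ}, (∃ F : PR K 2, F.IsHomogeneous k ∧ F ≠ 0 ∧
      ∀ p ∈ (weightMul u ℓ).support, eval p.rep F = 0) → ∃ F : PR K 2, F.IsHomogeneous k ∧ F ≠ 0 ∧
      VanishesOn u (F * ℓ) ∧ ∃ p ∈ u.support, eval p.rep F = 0 := by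
    rintro k ⟨F, hF, hF0, hvanish⟩
    exact ⟨F, hF, hF0, VanishesOn.weightMul_iff.1 hvanish, q, support_weightMul_subset _ _ hq,
      hvanish q hq⟩
  right; right
  by_cases hline : (weightMul u ℓ).support.card ≤ 2 * n + 1
  · obtain ⟨F, hF, hF0, hvanish, hpoint⟩ := hform (hres.exists_linearForm_of_card_le hline)
    exact Or.inl ⟨1, F, hF, hF0, hvanish, hpoint, Or.inl ⟨rfl, hcard.trans hle⟩⟩
  by_cases hconic : 2 * (weightMul u ℓ).support.card ≤ 5 * n
  · obtain ⟨F, hF, hF0, hvanish, hpoint⟩ := hform (hres.exists_conic hconic)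
    exact Or.inl ⟨2, F, hF, hF0, hvanish, hpoint, Or.inr ⟨rfl, by omega⟩⟩
  · right
    omega

/-- The estimate `n ≤ N + e + c` holds whenever some form of degree `e` vanishes on `u` and
restricts to the line through `e_i` and `e_j` with order at most `c` at `e_j`. -/
def LengthBound (u : Pm K 2 →₀ K) (i j : Fin 3) (n c N : ℕ) : Prop :=
  ∀ ⦃e : ℕ⦄ ⦃F : PR K 2⦄, F.IsHomogeneous e → VanishesOn u F → axisRestrict i j F ≠ 0 →
    (axisRestrict i j F).natTrailingDegree ≤ c → n ≤ N + e + c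

section

variable {u : Pm K 2 →₀ K} {i j : Fin 3} {n c N : ℕ}

lemma LengthBound.le_of_mul (h : LengthBound u i j n c N) {e : ℕ} {F ℓ : PR K 2}
    (hF : F.IsHomogeneous e) (hℓ : ℓ.IsHomogeneous 1) (hℓj : eval (Pi.single j 1) ℓ ≠ 0)
    (hvan : VanishesOn u (F * ℓ)) (hF0 : axisRestrict i j F ≠ 0)
    (hc : (axisRestrict i j F).natTrailingDegree ≤ c) : n ≤ N + (e + 1) + c := by
  have hcoeff : (axisRestrict i j ℓ).coeff 0 ≠ 0 := by rwa [axisRestrict, coeff_zero_restrictLine]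
  have hℓ0 : axisRestrict i j ℓ ≠ 0 := fun h0 => hcoeff (by rw [h0, Polynomial.coeff_zero])
  refine h (hF.mul hℓ) hvan ?_ ?_
  · rw [map_mul]
    exact mul_ne_zero hF0 hℓ0
  · rwa [map_mul, Polynomial.natTrailingDegree_mul hF0 hℓ0,
      Polynomial.natTrailingDegree_eq_zero.2 (Or.inr hcoeff), add_zero]

lemma LengthBound.le_of_linearForm (h : LengthBound u i j n c N) {ℓ : PR K 2}
    (hℓ : ℓ.IsHomogeneous 1) (hℓj : eval (Pi.single j 1) ℓ ≠ 0) (hvan : VanishesOn u ℓ) :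
    n ≤ N + 1 + c := by
  simpa using h.le_of_mul (isHomogeneous_one _ _) hℓ hℓj (by rwa [one_mul])
    (by rw [map_one]; exact one_ne_zero) (by simp)

lemma LengthBound.le_of_support_eq_empty (h : LengthBound u i j n c N) (hu : u.support = ∅) :
    n ≤ N + c := by
  simpa using h (isHomogeneous_one _ _) (by simp [VanishesOn, hu])
    (by rw [map_one]; exact one_ne_zero) (by simp)

open Classical in
/- Multiplying by `M` kills `ψ` and the points of the other axis, which isolates the binary form
on the line through `e_i` and `e_j`. -/
lemma lengthBound_weightMul {k : Fin 3} (hij : i ≠ j) (hcover : ∀ l, l ≠ i → l ≠ j → l = k)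
    {w : Pm K 2 →₀ K} {ψ : PR K 2 →ₗ[K] K} {M : PR K 2} {μ d a : ℕ} (hM : M.IsHomogeneous μ)
    (hM0 : axisRestrict i j M ≠ 0) (ha : a ≠ 0)
    (hw : ∀ f : PR K 2, f.IsHomogeneous d → evalComb w f = axisCoeff i j a f + ψ f)
    (hψ : ∀ f, ψ (M * f) = 0) {S : Finset (Pm K 2)}
    (hS : ∀ p ∈ w.support, p.rep k = 0 → eval p.rep M ≠ 0 → p ∈ S) (hn : n + μ = d)
    (hc : c + (axisRestrict i j M).natTrailingDegree = a) :
    LengthBound (weightMul w (M * X k)) i j (n + 1) c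
      (S.filter fun p => p.rep k = 0 ∧ eval p.rep M ≠ 0).card := by
  intro e F hF hvan hF0 hFc
  by_cases hen : n < e
  · omega
  have hzero : ∀ p ∈ w.support, eval p.rep (M * F) ≠ 0 → p.rep k = 0 ∧ eval p.rep M ≠ 0 := by
    intro p hp hne
    rw [map_mul, mul_ne_zero_iff] at hne
    refine ⟨by_contra fun hpk => hne.2 (hvan p ?_), hne.1⟩
    rw [mem_support_weightMul, map_mul, eval_X]
    exact ⟨hp, mul_ne_zero hne.1 hpk⟩
  have hdeg := Polynomial.natTrailingDegree_mul hM0 hF0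
  have hlength := lt_card_filter_add_of_evalComb_eq_axisCoeff (n := n - e) hij ha (hM.mul hF)
    (by rw [map_mul]; exact mul_ne_zero hM0 hF0) (by rw [map_mul]; omega)
    (fun g hg => by
      have hMg : (M * F * g).IsHomogeneous d := by
        convert (hM.mul hF).mul hg using 1
        omega
      rw [hw _ hMg, mul_assoc, hψ, add_zero])
    (fun p hp hne l hli hlj => hcover l hli hlj ▸ (hzero p hp hne).1)
  have hcard : (w.support.filter fun p => eval p.rep (M * F) ≠ 0 ∧ p.rep i ≠ 0).card ≤
      (S.filter fun p => p.rep k = 0 ∧ eval p.rep M ≠ 0).card := by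
    refine Finset.card_le_card fun p hp => ?_
    rw [Finset.mem_filter] at hp ⊢
    have hpM := hzero p hp.1 hp.2.1
    exact ⟨hS p hp.1 hpM.1 hpM.2, hpM⟩
  rw [map_mul, hdeg] at hlength
  omega

end

end LengthBounds

section LowerBounds

open MvPolynomial

variable {K : Type} [Field K]

open Classical in
lemma exists_evalComb_eq_of_hasRankLE_add {φ : PR K 2 →ₗ[K] K}
    {v : Pm K 2 →₀ K} {d n : ℕ} (h : HasRankLE (φ + evalComb v) d n) :
    ∃ (w : Pm K 2 →₀ K) (S : Finset (Pm K 2)), S.card ≤ n ∧ w.support ⊆ S ∪ v.support ∧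
      v.support ⊆ S ∪ w.support ∧
      ∀ f : PR K 2, f.IsHomogeneous d → evalComb w f = φ f := by
  obtain ⟨w, hcard, hw⟩ := h
  refine ⟨w - v, w.support, hcard, Finsupp.support_sub, ?_, fun f hf => ?_⟩
  · simpa only [sub_sub_cancel] using Finsupp.support_sub (f := w) (g := w - v)
  · rw [map_sub, LinearMap.sub_apply, ← hw f hf, LinearMap.add_apply, add_sub_cancel_right]

section Support

variable {m : ℕ} {w v : Pm K m →₀ K} {S : Finset (Pm K m)} {F : PR K m}

open Classical in
lemma support_weightMul_subset_union (h : w.support ⊆ S ∪ v.support) :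
    (weightMul w F).support ⊆
      (S.filter fun p => eval p.rep F ≠ 0) ∪ v.support.filter fun p => eval p.rep F ≠ 0 := by
  intro p hp
  rw [mem_support_weightMul] at hp
  rw [← Finset.filter_union]
  exact Finset.mem_filter.2 ⟨h hp.1, hp.2⟩

open Classical in
lemma filter_subset_union_support_weightMul (h : v.support ⊆ S ∪ w.support) :
    (v.support.filter fun p => eval p.rep F ≠ 0) ⊆
      (S.filter fun p => eval p.rep F ≠ 0) ∪ (weightMul w F).support := by
  intro p hp
  rw [Finset.mem_filter] at hp
  rw [Finset.mem_union, Finset.mem_filter, mem_support_weightMul]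
  exact (Finset.mem_union.1 (h hp.1)).imp (⟨·, hp.2⟩) (⟨·, hp.2⟩)

end Support

variable {ℓ : PR K 2} {v : Pm K 2 →₀ K} {d n a : ℕ}

open Classical in
/- On the line through `e_0` and `e_1` the length bound takes over from the residual relation. -/
lemma IsRelation.add_card_le_of_lengthBound [Infinite K] {u : Pm K 2 →₀ K}
    {S Q : Finset (Pm K 2)} {N : ℕ} (hrel : IsRelation u (d - 1))
    (hu : u.support ⊆ S ∪ Q) (hQu : Q ⊆ S ∪ u.support) (hQ : ∀ q ∈ Q, eval q.rep ℓ = 0)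
    (hoff : ∀ p ∈ u.support, p.rep 2 ≠ 0) (hℓ : ℓ.IsHomogeneous 1)
    (hℓ1 : eval (Pi.single 1 1) ℓ ≠ 0) (h : LengthBound u 0 1 (d + 1) a N) (ha : 1 ≤ a)
    (hd : 2 * Q.card + 4 ≤ d) : d + 1 + Q.card ≤ N + S.card + a := by
  obtain ⟨k, rfl⟩ : ∃ k, d = k + 2 := ⟨d - 2, by omega⟩
  rcases IsRelation.exists_residual_form (n := k) hrel hℓ hu hQu hQ with
    ⟨hempty, hS⟩ | ⟨hvan, hS⟩ | ⟨e, F, hF, hF0, hvan, ⟨p, hp, hpF⟩, he⟩ | hlarge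
  · have := h.le_of_support_eq_empty hempty
    omega
  · have := h.le_of_linearForm hℓ hℓ1 hvan
    omega
  · rcases he with ⟨rfl, hS⟩ | ⟨rfl, hS⟩
    · have := h.le_of_mul hF hℓ hℓ1 hvan (axisRestrict_ne_zero_of_eval_eq_zero (by decide)
        (by decide) (by decide) (hoff p hp) hF hF0 hpF)
        ((natTrailingDegree_axisRestrict_le _ _ hF).trans ha)
      omega
    · omega
  · omega

lemma add_card_le_of_hasRankLE_axisCoeff_add [Infinite K] (hℓ : ℓ.IsHomogeneous 1)
    (hℓ1 : eval (Pi.single 1 1) ℓ ≠ 0)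
    (hv : ∀ q ∈ v.support, q.rep 2 ≠ 0 ∧ eval q.rep ℓ = 0) (hd : 2 * v.support.card + 4 ≤ d)
    (ha : 1 ≤ a) (h : HasRankLE (axisCoeff 0 1 a + evalComb v) d n) :
    d + 1 + v.support.card ≤ n + a := by
  classical
  obtain ⟨w, S, hcard, hwS, hvS, hw⟩ := exists_evalComb_eq_of_hasRankLE_add h
  have hker : axisRestrict 0 1 (X 2 : PR K 2) = 0 := axisRestrict_X_of_ne (by decide) (by decide)
  have hbound : LengthBound (weightMul w (1 * X 2)) 0 1 (d + 1) a
      (S.filter fun p => p.rep 2 = 0 ∧ eval p.rep 1 ≠ 0).card :=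
    lengthBound_weightMul (ψ := 0) (μ := 0) (by decide) (by decide) (isHomogeneous_one _ _)
      (by rw [map_one]; exact one_ne_zero) (Nat.one_le_iff_ne_zero.1 ha)
      (fun f hf => by rw [hw f hf, LinearMap.zero_apply, add_zero]) (fun _ => rfl)
      (fun p hp hp2 _ => (Finset.mem_union.1 (hwS hp)).resolve_right fun hpv => (hv p hpv).1 hp2)
      rfl (by simp)
  simp only [one_mul, map_one, ne_eq, one_ne_zero, not_false_eq_true, and_true] at hbound
  have hrel : IsRelation (weightMul w (X 2)) (d - 1) := fun f hf => by
    rw [evalComb_weightMul, hw _ (by convert (isHomogeneous_X K 2).mul hf using 1; omega),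
      axisCoeff_mul_of_axisRestrict_eq_zero hker]
  have hvfilter : v.support.filter (fun p => eval p.rep (X 2 : PR K 2) ≠ 0) = v.support :=
    Finset.filter_true_of_mem fun p hp => by
      rw [eval_X]
      exact (hv p hp).1
  have hsupport := support_weightMul_subset_union (F := X 2) hwS
  have hsubset := filter_subset_union_support_weightMul (F := X 2) hvS
  rw [hvfilter] at hsupport hsubset
  have hle := hrel.add_card_le_of_lengthBound hsupport hsubset (fun q hq => (hv q hq).2)
    (fun p hp => by simpa only [eval_X] using (mem_support_weightMul.1 hp).2) hℓ hℓ1 hbound ha hd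
  have hsplit := Finset.card_filter_add_card_filter_not (s := S) (·.rep 2 = 0)
  simp only [eval_X, ne_eq] at hle
  omega

section TwoAxes

variable {u : Pm K 2 →₀ K} {i j : Fin 3} {c N₁ N₂ : ℕ} {S Q : Finset (Pm K 2)}

lemma le_of_vanishesOn_linearForm_mul [Infinite K]
    (hij : i ≠ j) (hi : i ≠ 2) (hj : j ≠ 2) (hℓ : ℓ.IsHomogeneous 1)
    (hℓe : ∀ l, eval (Pi.single l 1) ℓ ≠ 0) (h₁ : LengthBound u i j d c N₁)
    (h₂ : LengthBound u 0 2 d a N₂) (hc : 1 ≤ c) (ha : 1 ≤ a) {p : Pm K 2} (hp1 : p.rep 1 ≠ 0)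
    (hp2 : p.rep 2 ≠ 0) {F : PR K 2} (hF : F.IsHomogeneous 1) (hF0 : F ≠ 0)
    (hpF : eval p.rep F = 0) (hvan : VanishesOn u (F * ℓ)) :
    d ≤ N₁ + 2 + c ∧ d ≤ N₂ + 2 + a :=
  ⟨h₁.le_of_mul hF hℓ (hℓe j) hvan
      (axisRestrict_ne_zero_of_eval_eq_zero hij hi hj hp2 hF hF0 hpF)
      ((natTrailingDegree_axisRestrict_le _ _ hF).trans hc),
    h₂.le_of_mul hF hℓ (hℓe 2) hvan
      (axisRestrict_ne_zero_of_eval_eq_zero (by decide) (by decide) (by decide) hp1 hF hF0 hpF)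
      ((natTrailingDegree_axisRestrict_le _ _ hF).trans ha)⟩

/- A conic containing one of the axes contributes its other component. -/
lemma le_of_vanishesOn_conic_mul [Infinite K] (hij : i ≠ j) (hi : i ≠ 2) (hj : j ≠ 2)
    (hℓ : ℓ.IsHomogeneous 1) (hℓe : ∀ l, eval (Pi.single l 1) ℓ ≠ 0)
    (h₁ : LengthBound u i j d c N₁) (h₂ : LengthBound u 0 2 d a N₂) (hc : 1 ≤ c) (ha : 1 ≤ a)
    (hoff : ∀ p ∈ u.support, p.rep 1 ≠ 0 ∧ p.rep 2 ≠ 0) {F : PR K 2} (hF : F.IsHomogeneous 2)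
    (hF0 : F ≠ 0) (hpF : ∃ p ∈ u.support, eval p.rep F = 0) (hvan : VanishesOn u (F * ℓ))
    (hconic : X 1 ∣ F ∨ X 2 ∣ F ∨
      (axisRestrict i j F ≠ 0 ∧ (axisRestrict i j F).natTrailingDegree ≤ c) ∨
      (axisRestrict 0 2 F ≠ 0 ∧ (axisRestrict 0 2 F).natTrailingDegree ≤ a)) :
    (d ≤ N₁ + 2 + c ∧ d ≤ N₂ + 2 + a) ∨ d ≤ N₁ + 3 + c ∨ d ≤ N₂ + 3 + a := by
  obtain ⟨p, hp, hpF⟩ := hpF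
  have hcomponent : ∀ l, (∀ q ∈ u.support, q.rep l ≠ 0) → X l ∣ F →
      d ≤ N₁ + 2 + c ∧ d ≤ N₂ + 2 + a := by
    rintro l hl ⟨G, rfl⟩
    refine le_of_vanishesOn_linearForm_mul hij hi hj hℓ hℓe h₁ h₂ hc ha (hoff p hp).1 (hoff p hp).2
      (isHomogeneous_of_X_mul hF) (right_ne_zero_of_mul hF0) ?_ fun q hq => ?_
    · rw [map_mul, eval_X] at hpF
      exact (mul_eq_zero.1 hpF).resolve_left (hl p hp)
    · have := hvan q hq
      rw [mul_assoc, map_mul, eval_X] at this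
      exact (mul_eq_zero.1 this).resolve_left (hl q hq)
  rcases hconic with h | h | ⟨hne, hle⟩ | ⟨hne, hle⟩
  · exact Or.inl (hcomponent 1 (fun q hq => (hoff q hq).1) h)
  · exact Or.inl (hcomponent 2 (fun q hq => (hoff q hq).2) h)
  · exact Or.inr (Or.inl (h₁.le_of_mul hF hℓ (hℓe j) hvan hne hle))
  · exact Or.inr (Or.inr (h₂.le_of_mul hF hℓ (hℓe 2) hvan hne hle))

open Classical in
lemma IsRelation.two_mul_add_card_le_of_lengthBound [Infinite K]
    (hrel : IsRelation u (d - 2)) (hu : u.support ⊆ S ∪ Q) (hQu : Q ⊆ S ∪ u.support)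
    (hQ : ∀ q ∈ Q, eval q.rep ℓ = 0) (hoff : ∀ p ∈ u.support, p.rep 1 ≠ 0 ∧ p.rep 2 ≠ 0)
    (hij : i ≠ j) (hi : i ≠ 2) (hj : j ≠ 2) (hℓ : ℓ.IsHomogeneous 1)
    (hℓe : ∀ l, eval (Pi.single l 1) ℓ ≠ 0) (h₁ : LengthBound u i j d c N₁)
    (h₂ : LengthBound u 0 2 d a N₂) (hc : 1 ≤ c) (hc' : c ≤ 2) (ha : 1 ≤ a)
    (hconic : ∀ F : PR K 2, F.IsHomogeneous 2 → F ≠ 0 → X 1 ∣ F ∨ X 2 ∣ F ∨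
      (axisRestrict i j F ≠ 0 ∧ (axisRestrict i j F).natTrailingDegree ≤ c) ∨
      (axisRestrict 0 2 F ≠ 0 ∧ (axisRestrict 0 2 F).natTrailingDegree ≤ a))
    (hd : 2 * Q.card + 10 ≤ d) : 2 * d + Q.card ≤ N₁ + N₂ + S.card + c + a := by
  obtain ⟨k, rfl⟩ : ∃ k, d = k + 3 := ⟨d - 3, by omega⟩
  rcases IsRelation.exists_residual_form (n := k) hrel hℓ hu hQu hQ with
    ⟨hempty, hS⟩ | ⟨hvan, hS⟩ | ⟨e, F, hF, hF0, hvan, hpF, he⟩ | hlarge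
  · have := h₁.le_of_support_eq_empty hempty
    have := h₂.le_of_support_eq_empty hempty
    omega
  · have := h₁.le_of_linearForm hℓ (hℓe j) hvan
    have := h₂.le_of_linearForm hℓ (hℓe 2) hvan
    omega
  · rcases he with ⟨rfl, hS⟩ | ⟨rfl, hS⟩
    · obtain ⟨p, hp, hpF⟩ := hpF
      have := le_of_vanishesOn_linearForm_mul hij hi hj hℓ hℓe h₁ h₂ hc ha (hoff p hp).1
        (hoff p hp).2 hF hF0 hpF hvan
      omega
    · have := le_of_vanishesOn_conic_mul hij hi hj hℓ hℓe h₁ h₂ hc ha hoff hF hF0 hpF hvan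
        (hconic F hF hF0)
      omega
  · omega

open Classical in
lemma card_filter_axes_le (S : Finset (Pm K 2)) :
    (S.filter fun p => p.rep 2 = 0 ∧ eval p.rep (X 1 : PR K 2) ≠ 0).card +
      (S.filter fun p => p.rep 1 = 0 ∧ eval p.rep (X 2 : PR K 2) ≠ 0).card +
      (S.filter fun p => eval p.rep (X 1 * X 2 : PR K 2) ≠ 0).card ≤ S.card := by
  simp only [Finset.card_filter, ← Finset.sum_add_distrib, map_mul, eval_X]
  refine (Finset.sum_le_card_nsmul S _ 1 fun p _ => ?_).trans (by rw [smul_eq_mul, mul_one])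
  by_cases hp1 : p.rep 1 = 0 <;> by_cases hp2 : p.rep 2 = 0 <;> simp [hp1, hp2]

lemma isRelation_weightMul_axes {w : Pm K 2 →₀ K} {b : ℕ} (hi : i ≠ 2) (hj : j ≠ 2) (hd : 2 ≤ d)
    (hw : ∀ f : PR K 2, f.IsHomogeneous d →
      evalComb w f = (axisCoeff i j b + axisCoeff 0 2 a : PR K 2 →ₗ[K] K) f) :
    IsRelation (weightMul w (X 1 * X 2)) (d - 2) := fun f hf => by
  have hf' : (X 1 * X 2 * f).IsHomogeneous d := by
    convert ((isHomogeneous_X K 1).mul (isHomogeneous_X K 2)).mul hf using 1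
    omega
  rw [evalComb_weightMul, hw _ hf', LinearMap.add_apply,
    axisCoeff_mul_of_axisRestrict_eq_zero (by
      rw [map_mul, axisRestrict_X_of_ne hi.symm hj.symm, mul_zero]),
    axisCoeff_mul_of_axisRestrict_eq_zero (by
      rw [map_mul, axisRestrict_X_of_ne (by decide) (by decide), zero_mul]), add_zero]

open Classical in
lemma lengthBound_weightMul_axes {w : Pm K 2 →₀ K} (hij : i ≠ j) (hi : i ≠ 2)
    (hj : j ≠ 2) (hd : d ≠ 0)
    (hw : ∀ f : PR K 2, f.IsHomogeneous d →
      evalComb w f = (axisCoeff i j 2 + axisCoeff 0 2 a : PR K 2 →ₗ[K] K) f)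
    (hS : ∀ p ∈ w.support, (p.rep 1 = 0 ↔ p.rep 2 ≠ 0) → p ∈ S)
    (hc : c + (axisRestrict i j (X 1 : PR K 2)).natTrailingDegree = 2) (ha : a ≠ 0) :
    LengthBound (weightMul w (X 1 * X 2)) i j d c
        (S.filter fun p => p.rep 2 = 0 ∧ eval p.rep (X 1 : PR K 2) ≠ 0).card ∧
      LengthBound (weightMul w (X 1 * X 2)) 0 2 d a
        (S.filter fun p => p.rep 1 = 0 ∧ eval p.rep (X 2 : PR K 2) ≠ 0).card := by
  have hker₁ : axisRestrict 0 2 (X 1 : PR K 2) = 0 := axisRestrict_X_of_ne (by decide) (by decide)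
  have hker₂ : axisRestrict i j (X 2 : PR K 2) = 0 := axisRestrict_X_of_ne hi.symm hj.symm
  have hne₁ : axisRestrict i j (X 1 : PR K 2) ≠ 0 := by
    obtain rfl | rfl : i = 1 ∨ j = 1 := by omega
    · rw [axisRestrict_X_left hij]
      exact Polynomial.X_ne_zero
    · rw [axisRestrict_X_right hij]
      exact one_ne_zero
  have hone : axisRestrict 0 2 (X 2 : PR K 2) = 1 := axisRestrict_X_right (by decide)
  obtain ⟨k, rfl⟩ := Nat.exists_eq_succ_of_ne_zero hd
  constructor
  · exact lengthBound_weightMul (k := 2) hij (by omega) (isHomogeneous_X K 1) hne₁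
      two_ne_zero hw (axisCoeff_mul_of_axisRestrict_eq_zero hker₁)
      (fun p hp hp2 hp1 => hS p hp
        ⟨fun h => absurd h (by rwa [eval_X] at hp1), fun h => absurd hp2 h⟩) rfl hc
  · rw [mul_comm]
    exact lengthBound_weightMul (k := 1) (by decide) (by decide)
      (isHomogeneous_X K 2) (by rw [hone]; exact one_ne_zero) ha
      (fun f hf => (hw f hf).trans (add_comm _ _)) (axisCoeff_mul_of_axisRestrict_eq_zero hker₂)
      (fun p hp hp1 hp2 => hS p hp ⟨fun _ => by rwa [eval_X] at hp2, fun _ => hp1⟩) rfl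
      (by rw [hone, Polynomial.natTrailingDegree_one, add_zero])

open Classical in
/- The relation `u` comes from multiplying `w` by the product `X 1 * X 2` of the two axes. -/
lemma two_mul_add_card_le_of_hasRankLE_add [Infinite K]
    (hij : i ≠ j) (hi : i ≠ 2) (hj : j ≠ 2) (hℓ : ℓ.IsHomogeneous 1)
    (hℓe : ∀ l, eval (Pi.single l 1) ℓ ≠ 0)
    (hv : ∀ p ∈ v.support, p.rep 1 = 0 ∧ p.rep 2 = 0 ∨
      p.rep 1 ≠ 0 ∧ p.rep 2 ≠ 0 ∧ eval p.rep ℓ = 0)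
    (hc : 1 ≤ c) (hc2 : c + (axisRestrict i j (X 1 : PR K 2)).natTrailingDegree = 2) (ha : 1 ≤ a)
    (hconic : ∀ F : PR K 2, F.IsHomogeneous 2 → F ≠ 0 → X 1 ∣ F ∨ X 2 ∣ F ∨
      (axisRestrict i j F ≠ 0 ∧ (axisRestrict i j F).natTrailingDegree ≤ c) ∨
      (axisRestrict 0 2 F ≠ 0 ∧ (axisRestrict 0 2 F).natTrailingDegree ≤ a))
    (hd : 2 * v.support.card + 10 ≤ d)
    (h : HasRankLE (axisCoeff i j 2 + axisCoeff 0 2 a + evalComb v) d n) :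
    2 * d + (v.support.filter fun p => eval p.rep (X 1 * X 2 : PR K 2) ≠ 0).card ≤ n + c + a := by
  obtain ⟨w, S, hcard, hwS, hvS, hw⟩ := exists_evalComb_eq_of_hasRankLE_add h
  have hoffS : ∀ p ∈ w.support, (p.rep 1 = 0 ↔ p.rep 2 ≠ 0) → p ∈ S := fun p hp hne =>
    (Finset.mem_union.1 (hwS hp)).resolve_right fun hpv => by
      rcases hv p hpv with ⟨hp1, hp2⟩ | ⟨hp1, hp2, _⟩
      · exact hne.1 hp1 hp2
      · exact hp1 (hne.2 hp2)
  have hrel := isRelation_weightMul_axes hi hj (by omega) hw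
  obtain ⟨h₁, h₂⟩ := lengthBound_weightMul_axes hij hi hj (by omega) hw hoffS hc2
    (Nat.one_le_iff_ne_zero.1 ha)
  have hle := hrel.two_mul_add_card_le_of_lengthBound (support_weightMul_subset_union hwS)
    (filter_subset_union_support_weightMul hvS)
    (fun q hq => ?_) (fun p hp => ?_) hij hi hj hℓ hℓe h₁ h₂ hc (by omega) ha hconic ?_
  · have := card_filter_axes_le S
    omega
  · rw [Finset.mem_filter, map_mul, eval_X, eval_X, mul_ne_zero_iff] at hq
    exact ((hv q hq.1).resolve_left fun hq0 => hq.2.1 hq0.1).2.2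
  · rw [mem_support_weightMul, map_mul, eval_X, eval_X, mul_ne_zero_iff] at hp
    exact hp.2
  · have := Finset.card_filter_le v.support fun p => eval p.rep (X 1 * X 2 : PR K 2) ≠ 0
    omega

end TwoAxes

/- A conic meeting the line through `e_1` and `e_0` doubly at `e_0` passes through `e_0`, so it
meets the line through `e_0` and `e_2` at most once at `e_2`. -/
lemma conic_axisRestrict_cases [Infinite K] (ha : 1 ≤ a) {F : PR K 2} (hF : F.IsHomogeneous 2) :
    X 1 ∣ F ∨ X 2 ∣ F ∨
      (axisRestrict 1 0 F ≠ 0 ∧ (axisRestrict 1 0 F).natTrailingDegree ≤ 1) ∨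
      (axisRestrict 0 2 F ≠ 0 ∧ (axisRestrict 0 2 F).natTrailingDegree ≤ a) := by
  by_cases h02 : axisRestrict 0 2 F = 0
  · exact Or.inl (X_dvd_of_axisRestrict_eq_zero (by decide) (by decide) (by decide) hF h02)
  by_cases h10 : axisRestrict 1 0 F = 0
  · exact Or.inr (Or.inl (X_dvd_of_axisRestrict_eq_zero (by decide) (by decide) (by decide) hF h10))
  by_cases hle : (axisRestrict 1 0 F).natTrailingDegree ≤ 1
  · exact Or.inr (Or.inr (Or.inl ⟨h10, hle⟩))
  have heval : eval (Pi.single 0 1) F = 0 := by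
    rw [← coeff_zero_restrictLine _ (Pi.single 1 1)]
    exact Polynomial.coeff_eq_zero_of_lt_natTrailingDegree (by rw [← axisRestrict]; omega)
  have hne : (axisRestrict 0 2 F).natTrailingDegree ≠ 2 := fun heq => by
    have hcoeff := Polynomial.trailingCoeff_nonzero_iff_nonzero.2 h02
    rw [Polynomial.trailingCoeff, heq, axisRestrict, coeff_restrictLine _ _ hF] at hcoeff
    exact hcoeff heval
  have := natTrailingDegree_axisRestrict_le 0 2 hF
  exact Or.inr (Or.inr (Or.inr ⟨h02, by omega⟩))

lemma two_mul_add_card_le_of_hasRankLE_axisCoeff_add_axisCoeff [Infinite K]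
    (hℓ : ℓ.IsHomogeneous 1) (hℓe : ∀ l, eval (Pi.single l 1) ℓ ≠ 0)
    (hv : ∀ p ∈ v.support, p.rep 1 ≠ 0 ∧ p.rep 2 ≠ 0 ∧ eval p.rep ℓ = 0) (ha : 1 ≤ a)
    (hd : 2 * v.support.card + 10 ≤ d)
    (h : HasRankLE (axisCoeff 0 1 2 + axisCoeff 0 2 a + evalComb v) d n) :
    2 * d + v.support.card ≤ n + 2 + a := by
  classical
  have hle := two_mul_add_card_le_of_hasRankLE_add (c := 2) (by decide) (by decide) (by decide)
    hℓ hℓe (fun p hp => Or.inr (hv p hp)) one_le_two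
    (by rw [axisRestrict_X_right (by decide), Polynomial.natTrailingDegree_one]) ha
    (fun F hF _ => ?_) hd h
  · rwa [Finset.filter_true_of_mem fun p hp => ?_] at hle
    rw [map_mul, eval_X, eval_X]
    exact mul_ne_zero (hv p hp).1 (hv p hp).2.1
  · by_cases h01 : axisRestrict 0 1 F = 0
    · exact Or.inr (Or.inl
        (X_dvd_of_axisRestrict_eq_zero (by decide) (by decide) (by decide) hF h01))
    · exact Or.inr (Or.inr (Or.inl ⟨h01, natTrailingDegree_axisRestrict_le 0 1 hF⟩))

lemma two_mul_add_card_le_of_hasRankLE_axisCoeff_add_axisCoeff_add_evalAt [Infinite K]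
    (hℓ : ℓ.IsHomogeneous 1) (hℓe : ∀ l, eval (Pi.single l 1) ℓ ≠ 0)
    (hv : ∀ p ∈ v.support, p.rep 1 ≠ 0 ∧ p.rep 2 ≠ 0 ∧ eval p.rep ℓ = 0) (ha : 1 ≤ a)
    (hd : 2 * v.support.card + 12 ≤ d)
    (h : HasRankLE
      (axisCoeff 1 0 2 + axisCoeff 0 2 a + (evalAt (Pi.single 0 1) + evalComb v)) d n) :
    2 * d + v.support.card ≤ n + 1 + a := by
  classical
  have he0 : (Pi.single 0 1 : Fin 3 → K) ≠ 0 := Pi.single_ne_zero_iff.2 one_ne_zero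
  obtain ⟨b, hb⟩ := exists_evalAt_eq_evalComb_single he0 d
  obtain ⟨κ, hκ⟩ := Projectivization.exists_smul_eq_mk_rep K (Pi.single 0 1 : Fin 3 → K) he0
  set p₀ := Projectivization.mk K (Pi.single 0 1 : Fin 3 → K) he0
  have hp₀ : p₀.rep 1 = 0 ∧ p₀.rep 2 = 0 := by simp [← hκ]
  have hsupp : ∀ p ∈ (Finsupp.single p₀ b + v).support, p = p₀ ∨ p ∈ v.support := fun p hp =>
    (Finset.mem_union.1 (Finsupp.support_add hp)).imp_left
      fun hp => Finset.mem_singleton.1 (Finsupp.support_single_subset hp)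
  have hdisj : Disjoint (Finsupp.single p₀ b).support v.support :=
    Finset.disjoint_left.2 fun p hp hpv =>
      (hv p hpv).1 (Finset.mem_singleton.1 (Finsupp.support_single_subset hp) ▸ hp₀.1)
  have hcard : (Finsupp.single p₀ b + v).support.card ≤ 1 + v.support.card := by
    rw [Finsupp.support_add_eq hdisj, Finset.card_union_of_disjoint hdisj]
    gcongr
    exact (Finset.card_le_card Finsupp.support_single_subset).trans (Finset.card_singleton _).le
  have hle := two_mul_add_card_le_of_hasRankLE_add (v := Finsupp.single p₀ b + v) (c := 1)
    (by decide) (by decide) (by decide) hℓ hℓe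
    (fun p hp => (hsupp p hp).imp (fun h => by rwa [h]) (hv p)) le_rfl
    (by rw [axisRestrict_X_left (by decide), Polynomial.natTrailingDegree_X]) ha
    (fun F hF _ => conic_axisRestrict_cases ha hF) (by omega)
    (h.congr fun f hf => by simp only [LinearMap.add_apply, map_add, hb f hf])
  refine le_trans (Nat.add_le_add_left (Finset.card_le_card fun p hp => ?_) _) hle
  rw [Finset.mem_filter, map_mul, eval_X, eval_X, Finsupp.support_add_eq hdisj]
  exact ⟨Finset.mem_union_right _ hp, mul_ne_zero (hv p hp).1 (hv p hp).2.1⟩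

end LowerBounds

section UpperBounds

open Polynomial

variable {K : Type} [Field K] [IsAlgClosed K] {m a d : ℕ}

lemma IsApolar.hasRankLE_lineFunctional_of_X_pow_sub_C [CharZero K] (u v : Fin (m + 1) → K)
    {Λ : K[X] →ₗ[K] K} {k : ℕ} {c : K} (hd : d ≠ 0) (hk : k ≠ 0) (hc : c ≠ 0)
    (h : IsApolar Λ (X ^ k - C c) d) : HasRankLE (lineFunctional u v Λ) d k := by
  have hsep : (X ^ k - C c).Separable := separable_X_pow_sub_C c (by exact_mod_cast hk) hc
  simpa only [natDegree_X_pow_sub_C] using h.hasRankLE_lineFunctional_of_separable u v hd hsep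

lemma hasRankLE_axisCoeff [CharZero K] (i j : Fin (m + 1)) (ha : 1 ≤ a) (had : 2 * a ≤ d) :
    HasRankLE (axisCoeff i j a : PR K m →ₗ[K] K) d (d + 1 - a) := by
  refine IsApolar.hasRankLE_lineFunctional_of_X_pow_sub_C _ _ (by omega) (by omega) one_ne_zero
    fun f hf => ?_
  rw [natDegree_X_pow_sub_C] at hf
  rw [lcoeff_apply, sub_mul, coeff_sub, coeff_X_pow_mul', if_neg (by omega), C_1, one_mul,
    coeff_eq_zero_of_natDegree_lt (by omega), sub_zero]

/- Adding a multiple of the leading coefficient to `p ↦ p.coeff a` makes `X ^ (d - a) - c` apolar,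
of degree one less than without it. -/
lemma hasRankLE_axisCoeff_add_smul_evalAt [CharZero K] (i j : Fin (m + 1)) (had : 2 * a < d)
    {c : K} (hc : c ≠ 0) :
    HasRankLE (axisCoeff i j a + c • evalAt (Pi.single i 1) : PR K m →ₗ[K] K) d (d - a) := by
  have hline : HasRankLE (lineFunctional (Pi.single j 1 : Fin (m + 1) → K) (Pi.single i 1)
      (lcoeff K a + c • lcoeff K d)) d (d - a) := by
    refine IsApolar.hasRankLE_lineFunctional_of_X_pow_sub_C _ _ (by omega) (by omega) hc
      fun f hf => ?_
    rw [natDegree_X_pow_sub_C] at hf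
    rw [LinearMap.add_apply, LinearMap.smul_apply, lcoeff_apply, lcoeff_apply, sub_mul, coeff_sub,
      coeff_sub, coeff_C_mul, coeff_C_mul, coeff_X_pow_mul', coeff_X_pow_mul', if_neg (by omega),
      if_pos (by omega), coeff_eq_zero_of_natDegree_lt (n := d) (by omega),
      Nat.sub_sub_self (by omega), smul_eq_mul]
    ring
  refine hline.congr fun f hf => ?_
  rw [lineFunctional_apply, LinearMap.add_apply, LinearMap.add_apply, LinearMap.smul_apply,
    LinearMap.smul_apply, lcoeff_apply, lcoeff_apply, coeff_restrictLine _ _ hf, axisCoeff_apply,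
    evalAt_apply, axisRestrict]

lemma hasBorderRankLE_axisCoeff (i j : Fin (m + 1)) (a : ℕ) (hd : d ≠ 0) :
    HasBorderRankLE (axisCoeff i j a : PR K m →ₗ[K] K) d (a + 1) := by
  refine natDegree_X_pow (R := K) (a + 1) ▸ IsApolar.hasBorderRankLE_lineFunctional _ _ hd
    (monic_X_pow (a + 1)) fun f _ => ?_
  rw [lcoeff_apply, coeff_X_pow_mul', if_neg (by omega)]

lemma hasBorderRankLE_axisCoeff_add_evalAt (i j : Fin (m + 1)) (a : ℕ) (hd : d ≠ 0) :
    HasBorderRankLE (axisCoeff i j a + evalAt (Pi.single j 1) : PR K m →ₗ[K] K) d (a + 1) := by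
  have hline : HasBorderRankLE (lineFunctional (Pi.single j 1 : Fin (m + 1) → K) (Pi.single i 1)
      (lcoeff K a + lcoeff K 0)) d (a + 1) := by
    refine natDegree_X_pow (R := K) (a + 1) ▸ IsApolar.hasBorderRankLE_lineFunctional _ _ hd
      (monic_X_pow (a + 1)) fun f _ => ?_
    rw [LinearMap.add_apply, lcoeff_apply, lcoeff_apply, coeff_X_pow_mul', coeff_X_pow_mul',
      if_neg (by omega), if_neg (by omega), add_zero]
  refine hline.congr fun f _ => ?_
  rw [lineFunctional_apply, LinearMap.add_apply, LinearMap.add_apply, lcoeff_apply, lcoeff_apply,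
    coeff_zero_restrictLine, axisCoeff_apply, evalAt_apply, axisRestrict]

/- Both binary summands lose one from their rank by absorbing an opposite multiple of the evaluation
at their common point `e_i`. -/
lemma hasRankLE_axisCoeff_add_axisCoeff [CharZero K] (i j k : Fin (m + 1)) {b : ℕ}
    (ha : 2 * a < d) (hb : 2 * b < d) :
    HasRankLE (axisCoeff i j a + axisCoeff i k b : PR K m →ₗ[K] K) d (d - a + (d - b)) := by
  refine ((hasRankLE_axisCoeff_add_smul_evalAt i j ha one_ne_zero).add
    (hasRankLE_axisCoeff_add_smul_evalAt i k hb (neg_ne_zero.2 one_ne_zero))).congr fun f _ => ?_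
  simp only [LinearMap.add_apply, LinearMap.smul_apply, smul_eq_mul]
  ring

end UpperBounds

section CatalecticantMinors

open MvPolynomial

variable {K : Type} [Field K] {m d k : ℕ}

/-- `φ` has a nonsingular catalecticant minor of size `n`, indexed by forms of degrees `k` and
`d - k` divisible by `J`. It bounds the border rank of `φ` below by `n`; the divisibility makes
minors of functionals with disjoint supports combine into a block diagonal one. -/
def HasNonsingularMinor (φ : PR K m →ₗ[K] K) (J : PR K m) (d k n : ℕ) : Prop :=
  ∃ (ι : Type) (_ : Fintype ι) (_ : DecidableEq ι) (G H : ι → PR K m),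
    Fintype.card ι = n ∧ (∀ i, (G i).IsHomogeneous k) ∧ (∀ i, (H i).IsHomogeneous (d - k)) ∧
    (∀ i, J ∣ G i) ∧ (∀ i, J ∣ H i) ∧ (catalecticant φ G H).det ≠ 0

variable {φ ψ : PR K m →ₗ[K] K} {J J₁ J₂ : PR K m} {n n' : ℕ}

lemma HasNonsingularMinor.add (h₁ : HasNonsingularMinor φ J₁ d k n)
    (h₂ : HasNonsingularMinor ψ J₂ d k n') (hφ : ∀ f, φ (J₂ * f) = 0) (hψ : ∀ f, ψ (J₁ * f) = 0)
    (hJ₁ : J ∣ J₁) (hJ₂ : J ∣ J₂) : HasNonsingularMinor (φ + ψ) J d k (n + n') := by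
  obtain ⟨ι, _, _, G, H, hcard, hG, hH, hJG, hJH, hdet⟩ := h₁
  obtain ⟨κ, _, _, G', H', hcard', hG', hH', hJG', hJH', hdet'⟩ := h₂
  have hφ0 : ∀ {g}, J₂ ∣ g → φ g = 0 := by
    rintro _ ⟨f, rfl⟩
    exact hφ f
  have hψ0 : ∀ {g}, J₁ ∣ g → ψ g = 0 := by
    rintro _ ⟨f, rfl⟩
    exact hψ f
  refine ⟨ι ⊕ κ, inferInstance, inferInstance, Sum.elim G G', Sum.elim H H',
    by rw [Fintype.card_sum, hcard, hcard'], Sum.rec hG hG', Sum.rec hH hH',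
    Sum.rec (fun i => hJ₁.trans (hJG i)) fun i => hJ₂.trans (hJG' i),
    Sum.rec (fun i => hJ₁.trans (hJH i)) fun i => hJ₂.trans (hJH' i), ?_⟩
  have hblock : catalecticant (φ + ψ) (Sum.elim G G') (Sum.elim H H') =
      Matrix.fromBlocks (catalecticant φ G H) 0 0 (catalecticant ψ G' H') := by
    ext (i | i) (j | j)
    · simp [catalecticant, hψ0 ((hJG i).mul_right (H j))]
    · simp [catalecticant, hψ0 ((hJG i).mul_right (H' j)), hφ0 ((hJH' j).mul_left (G i))]
    · simp [catalecticant, hφ0 ((hJG' i).mul_right (H j)), hψ0 ((hJH j).mul_left (G' i))]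
    · simp [catalecticant, hφ0 ((hJG' i).mul_right (H' j))]
  rw [hblock, Matrix.det_fromBlocks_zero₂₁]
  exact mul_ne_zero hdet hdet'

lemma HasNonsingularMinor.le_of_hasRankLE (h : HasNonsingularMinor φ J d k n) (hk : k ≤ d)
    (hr : HasRankLE φ d n') : n ≤ n' := by
  obtain ⟨ι, _, _, G, H, rfl, hG, hH, -, -, hdet⟩ := h
  exact not_lt.1 fun hlt => hdet (hr.det_catalecticant_eq_zero hk hlt hG hH)

lemma hasNonsingularMinor_evalComb {v : Pm K m →₀ K} {e : ℕ} (hJ : J.IsHomogeneous e)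
    (hv : ∀ q ∈ v.support, eval q.rep J ≠ 0) (hk : e + v.support.card ≤ k + 1)
    (hd : e + v.support.card + k ≤ d + 1) :
    HasNonsingularMinor (evalComb v) J d k v.support.card := by
  classical
  have hdual : ∀ n, e + v.support.card ≤ n + 1 → ∀ q : v.support, ∃ G : PR K m,
      G.IsHomogeneous n ∧ J ∣ G ∧ ∀ t : v.support, eval t.1.rep G = if t = q then 1 else 0 := by
    intro n hn q
    have hpos := Finset.card_pos.2 ⟨q.1, q.2⟩
    obtain ⟨G, hG, hGq⟩ := (imposesIndependent_of_card_le (T := v.support) (j := n - e)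
      (by omega)).exists_form_eval_eq fun t => if t = q then (eval t.1.rep J)⁻¹ else 0
    refine ⟨J * G, ?_, dvd_mul_right _ _, fun t => ?_⟩
    · have := hJ.mul hG
      rwa [Nat.add_sub_cancel' (by omega)] at this
    · rw [map_mul, hGq, mul_ite, mul_inv_cancel₀ (hv t.1 t.2), mul_zero]
  choose G hG hJG hGq using hdual k hk
  choose H hH hJH hHq using hdual (d - k) (by omega)
  refine ⟨v.support, inferInstance, inferInstance, G, H, Fintype.card_coe _, hG, hH, hJG, hJH, ?_⟩
  have hdiag : catalecticant (evalComb v) G H = Matrix.diagonal fun q : v.support => v q := by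
    ext i j
    rw [catalecticant, Matrix.of_apply, evalComb_apply, ← Finset.sum_coe_sort]
    simp_rw [map_mul, hGq, hHq]
    rw [Finset.sum_eq_single i (fun b _ hb => by simp [hb]) (by simp)]
    simp [Matrix.diagonal_apply]
  rw [hdiag, Matrix.det_diagonal]
  exact Finset.prod_ne_zero_iff.2 fun q _ => Finsupp.mem_support_iff.1 q.2

variable {i j : Fin (m + 1)} {a : ℕ}

/- The products `J ^ 2 * X i ^ (l + a - l') * X j ^ _` restrict to multiples of `X ^ (a + 1)` for
`l' < l`, so the minor is triangular, with the value of `J ^ 2` at `e_j` on the diagonal. -/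
lemma hasNonsingularMinor_of_axisRestrict_eq (hij : i ≠ j)
    (hφ : ∀ f p, axisRestrict i j f = Polynomial.X ^ a * p → φ f = p.coeff 0) {e : ℕ}
    (hJ : J.IsHomogeneous e) (hJj : eval (Pi.single j 1) J ≠ 0) (hk : e + a ≤ k)
    (hd : e + a + k ≤ d) : HasNonsingularMinor φ J d k (a + 1) := by
  let G : Fin (a + 1) → PR K m := fun l => J * (X i ^ (l : ℕ) * X j ^ (k - e - l))
  let H : Fin (a + 1) → PR K m := fun l => J * (X i ^ (a - l) * X j ^ (d - k - e - (a - l)))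
  have hform : ∀ b c n, e + b + c = n → (J * (X i ^ b * X j ^ c)).IsHomogeneous n := by
    rintro b c _ rfl
    rw [add_assoc]
    exact hJ.mul ((isHomogeneous_X_pow i b).mul (isHomogeneous_X_pow j c))
  have hentry : ∀ l l' : Fin (a + 1), l' ≤ l → φ (G l * H l') =
      (Polynomial.X ^ (l - l' : ℕ) * (axisRestrict i j J * axisRestrict i j J)).coeff 0 := by
    intro l l' hl
    refine hφ _ _ ?_
    have hexp : (Polynomial.X ^ (l : ℕ) * Polynomial.X ^ (a - l') : Polynomial K) =
        Polynomial.X ^ a * Polynomial.X ^ (l - l' : ℕ) := by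
      rw [← pow_add, ← pow_add]
      congr 1
      have := Fin.le_def.1 hl
      omega
    simp only [G, H, map_mul, map_pow, axisRestrict_X_left hij, axisRestrict_X_right hij, one_pow,
      mul_one]
    linear_combination (axisRestrict i j J * axisRestrict i j J) * hexp
  have hJ0 : (axisRestrict i j J).coeff 0 ≠ 0 := by rwa [axisRestrict, coeff_zero_restrictLine]
  refine ⟨Fin (a + 1), inferInstance, inferInstance, G, H, Fintype.card_fin _,
    fun l => hform _ _ _ (by omega), fun l => hform _ _ _ (by omega),
    fun _ => dvd_mul_right _ _, fun _ => dvd_mul_right _ _, ?_⟩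
  rw [Matrix.det_of_isUpperTriangular fun l l' (hl : l' < l) => ?_]
  · refine Finset.prod_ne_zero_iff.2 fun l _ => ?_
    rw [catalecticant, Matrix.of_apply, hentry l l le_rfl, Nat.sub_self, pow_zero, one_mul,
      Polynomial.mul_coeff_zero]
    exact mul_ne_zero hJ0 hJ0
  · rw [catalecticant, Matrix.of_apply, hentry l l' hl.le, Polynomial.mul_coeff_zero,
      Polynomial.coeff_X_pow, if_neg (Nat.sub_pos_of_lt hl).ne, zero_mul]

lemma hasNonsingularMinor_axisCoeff (hij : i ≠ j) {e : ℕ} (hJ : J.IsHomogeneous e)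
    (hJj : eval (Pi.single j 1) J ≠ 0) (hk : e + a ≤ k) (hd : e + a + k ≤ d) :
    HasNonsingularMinor (axisCoeff i j a) J d k (a + 1) :=
  hasNonsingularMinor_of_axisRestrict_eq hij (fun f p hf => by
    rw [axisCoeff_apply, hf, Polynomial.coeff_X_pow_mul', if_pos le_rfl, Nat.sub_self]) hJ hJj hk hd

lemma hasNonsingularMinor_axisCoeff_add_evalAt (hij : i ≠ j) (ha : a ≠ 0) {e : ℕ}
    (hJ : J.IsHomogeneous e) (hJj : eval (Pi.single j 1) J ≠ 0) (hk : e + a ≤ k)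
    (hd : e + a + k ≤ d) :
    HasNonsingularMinor (axisCoeff i j a + evalAt (Pi.single j 1)) J d k (a + 1) :=
  hasNonsingularMinor_of_axisRestrict_eq hij (fun f p hf => by
    rw [LinearMap.add_apply, axisCoeff_apply, evalAt_apply, ← coeff_zero_restrictLine _ _ f,
      ← axisRestrict, hf, Polynomial.coeff_X_pow_mul', if_pos le_rfl, Nat.sub_self,
      Polynomial.mul_coeff_zero, Polynomial.coeff_X_pow, if_neg ha.symm, zero_mul, add_zero])
    hJ hJj hk hd

end CatalecticantMinors

section CoordinateSubspaces

open MvPolynomial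

variable {K : Type} [Field K] {m n d k N : ℕ} {φ : PR K n →ₗ[K] K}

lemma HasRankLE.comp {θ : PR K m →ₗ[K] PR K n} {g : (Fin (n + 1) → K) → Fin (m + 1) → K}
    (hd : d ≠ 0) (hθ : ∀ f : PR K m, f.IsHomogeneous d → (θ f).IsHomogeneous d)
    (heval : ∀ v f, eval v (θ f) = eval (g v) f) (h : HasRankLE φ d N) :
    HasRankLE (φ ∘ₗ θ) d N := by
  obtain ⟨w, hw, hφ⟩ := h
  refine ((hasRankLE_sum_smul_evalAt w.support w (fun p => g p.rep) hd).mono hw).congr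
    fun f hf => ?_
  rw [LinearMap.comp_apply, hφ _ (hθ f hf), evalComb_apply, LinearMap.sum_apply]
  refine Finset.sum_congr rfl fun p _ => ?_
  rw [LinearMap.smul_apply, evalAt_apply, smul_eq_mul, heval]

lemma isHomogeneous_killCompl {e : Fin (n + 1) → Fin (m + 1)} (he : Function.Injective e)
    {f : PR K m} (hf : f.IsHomogeneous d) : (killCompl he f).IsHomogeneous d := by
  refine one_mul d ▸ hf.aeval _ fun i => ?_
  split_ifs
  · exact isHomogeneous_X _ _
  · exact isHomogeneous_zero _ _ _

lemma eval_killCompl {e : Fin (n + 1) → Fin (m + 1)} (he : Function.Injective e)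
    (v : Fin (n + 1) → K) (f : PR K m) :
    eval v (killCompl he f) = eval (Function.extend e v 0) f := by
  have hcomp : (aeval v : PR K n →ₐ[K] K).comp (killCompl he) = aeval (Function.extend e v 0) := by
    ext i
    by_cases hi : i ∈ Set.range e
    · obtain ⟨j, rfl⟩ := hi
      simp [killCompl, he.extend_apply]
    · rw [Set.mem_range] at hi
      simp [killCompl, hi]
  simpa only [AlgHom.comp_apply, aeval_eq_eval] using AlgHom.congr_fun hcomp f

/-- The functional `φ` on forms on `ℙ^n`, viewed on forms on `ℙ^m` through restriction to the
coordinate subspace spanned by the `e_i`, `i ∈ Set.range e`. -/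
def extendFunctional (e : Fin (n + 1) ↪ Fin (m + 1)) (φ : PR K n →ₗ[K] K) : PR K m →ₗ[K] K :=
  φ ∘ₗ (killCompl e.injective).toLinearMap

variable {e : Fin (n + 1) ↪ Fin (m + 1)}

lemma HasRankLE.extendFunctional (hd : d ≠ 0) (h : HasRankLE φ d N) :
    HasRankLE (extendFunctional e φ) d N :=
  h.comp hd (fun _ => isHomogeneous_killCompl e.injective) (eval_killCompl e.injective)

lemma HasRankLE.of_extendFunctional (hd : d ≠ 0)
    (h : HasRankLE (Veronese.extendFunctional e φ) d N) : HasRankLE φ d N :=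
  (h.comp (θ := (rename e).toLinearMap) (g := fun v => v ∘ e) hd
    (fun _ hf => hf.rename_isHomogeneous) fun v f => eval_rename e v f).congr fun f _ => by
      simp [Veronese.extendFunctional]

lemma HasBorderRankLE.extendFunctional (hd : d ≠ 0) (h : HasBorderRankLE φ d N) :
    HasBorderRankLE (extendFunctional e φ) d N := by
  obtain ⟨γ, hpoly, ⟨E, hrank⟩, hzero⟩ := h
  exact ⟨fun ε => Veronese.extendFunctional e (γ ε),
    fun f hf => hpoly _ (isHomogeneous_killCompl e.injective hf),
    ⟨E, fun ε hε => (hrank ε hε).extendFunctional hd⟩,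
    fun f hf => hzero _ (isHomogeneous_killCompl e.injective hf)⟩

lemma HasNonsingularMinor.extendFunctional {J : PR K n} (h : HasNonsingularMinor φ J d k N) :
    HasNonsingularMinor (extendFunctional e φ) (rename e J) d k N := by
  obtain ⟨ι, _, _, G, H, hcard, hG, hH, hJG, hJH, hdet⟩ := h
  refine ⟨ι, inferInstance, inferInstance, fun i => rename e (G i), fun i => rename e (H i), hcard,
    fun i => (hG i).rename_isHomogeneous, fun i => (hH i).rename_isHomogeneous,
    fun i => map_dvd _ (hJG i), fun i => map_dvd _ (hJH i), ?_⟩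
  convert hdet using 2
  ext i j
  simp [catalecticant, Veronese.extendFunctional, ← map_mul, killCompl_rename_app]

end CoordinateSubspaces

section Realization

open MvPolynomial

variable {K : Type} [Field K] [Infinite K] {m d k s r : ℕ}

lemma sigmaSet_nonempty_of_functional {φ : PR K m →ₗ[K] K} {J : PR K m} (hk : k ≤ d) (hs : 0 < s)
    (hborder : HasBorderRankLE φ d s) (hminor : HasNonsingularMinor φ J d k s)
    (hrank : HasRankLE φ d r) (hmin : ∀ n, HasRankLE φ d n → r ≤ n) :
    (sigmaSet K m d s r).Nonempty := by
  obtain ⟨ι, _, _, G, H, rfl, hG, hH, -, -, hdet⟩ := hminor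
  have hne : restrictDeg d φ ≠ 0 := fun h0 => by
    have hzero : HasRankLE φ d 0 :=
      (hasRankLE_zero d).congr fun f hf => LinearMap.congr_fun h0 ⟨f, hf⟩
    exact hdet (hzero.det_catalecticant_eq_zero hk hs hG hH)
  obtain ⟨c, hc⟩ := Projectivization.exists_smul_eq_mk_rep K _ hne
  have hrep : restrictDeg d ((c : K) • φ) = (Projectivization.mk K _ hne).rep := by
    rw [← hc]
    rfl
  refine ⟨Projectivization.mk K _ hne, ?_, srank_eq hrep (hrank.smul _) fun n hn => hmin n ?_⟩
  · refine brank_eq_of_det_catalecticant_ne_zero hrep (hborder.smul _) hs hk hG hH ?_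
    have hcat : catalecticant ((c : K) • φ) G H = (c : K) • catalecticant φ G H := rfl
    rw [hcat, Matrix.det_smul]
    exact mul_ne_zero (pow_ne_zero _ c.ne_zero) hdet
  · refine (hn.smul ((c⁻¹ : Kˣ) : K)).congr fun f _ => ?_
    simp

lemma sigmaSet_nonempty_of_planar_functional (hm : 2 ≤ m) {φ : PR K 2 →ₗ[K] K} {J : PR K 2}
    (hd : d ≠ 0) (hk : k ≤ d) (hs : 0 < s) (hborder : HasBorderRankLE φ d s)
    (hminor : HasNonsingularMinor φ J d k s) (hrank : HasRankLE φ d r)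
    (hmin : ∀ n, HasRankLE φ d n → r ≤ n) : (sigmaSet K m d s r).Nonempty := by
  let e : Fin 3 ↪ Fin (m + 1) := Fin.castLEEmb (by omega)
  exact sigmaSet_nonempty_of_functional hk hs (hborder.extendFunctional (e := e) hd)
    hminor.extendFunctional (hrank.extendFunctional hd)
    fun n hn => hmin n (hn.of_extendFunctional hd)

end Realization

section CollinearPoints

open MvPolynomial

variable {K : Type} [Field K]

lemma VanishesOn.evalComb_mul_eq_zero {m : ℕ} {v : Pm K m →₀ K} {ℓ : PR K m} (h : VanishesOn v ℓ)
    (f : PR K m) : evalComb v (ℓ * f) = 0 := by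
  rw [evalComb_apply]
  exact Finset.sum_eq_zero fun q hq => by rw [map_mul, h q hq, zero_mul, mul_zero]

lemma exists_collinear_points_off_axes [CharZero K] (t : ℕ) :
    ∃ (ℓ : PR K 2) (v : Pm K 2 →₀ K), ℓ.IsHomogeneous 1 ∧ (∀ l, eval (Pi.single l 1) ℓ ≠ 0) ∧
      v.support.card = t ∧
      ∀ q ∈ v.support, q.rep 1 ≠ 0 ∧ q.rep 2 ≠ 0 ∧ eval q.rep ℓ = 0 := by
  classical
  have hne : ∀ n : ℕ, (![1, (n : K) + 2, -1 - n] : Fin 3 → K) ≠ 0 := fun n h => by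
    simpa using congrFun h 0
  let p : ℕ → Pm K 2 := fun n => Projectivization.mk K _ (hne n)
  have hp : Function.Injective p := fun n n' h => by
    obtain ⟨c, hc⟩ := (Projectivization.mk_eq_mk_iff' K _ _ (hne n) (hne n')).1 h
    have h0 : c = 1 := by simpa using congrFun hc 0
    have h1 : (n' : K) = n := by simpa [h0] using congrFun hc 1
    exact_mod_cast h1.symm
  refine ⟨X 0 - X 1 - X 2, Finsupp.indicator ((Finset.range t).image p) fun _ _ => 1,
    ((isHomogeneous_X _ _).sub (isHomogeneous_X _ _)).sub (isHomogeneous_X _ _), fun l => ?_, ?_,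
    fun q hq => ?_⟩
  · fin_cases l <;> simp
  · rw [Finset.Subset.antisymm (Finsupp.support_indicator_subset _ _) fun q hq => ?_,
      Finset.card_image_of_injective _ hp, Finset.card_range]
    rw [Finsupp.mem_support_iff, Finsupp.indicator_of_mem hq]
    exact one_ne_zero
  · obtain ⟨n, -, rfl⟩ := Finset.mem_image.1 (Finsupp.support_indicator_subset _ _ hq)
    obtain ⟨κ, hκ⟩ := Projectivization.exists_smul_eq_mk_rep K _ (hne n)
    have h1 : (n : K) + 2 ≠ 0 := by exact_mod_cast (Nat.succ_ne_zero (n + 1))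
    have h2 : -1 - (n : K) ≠ 0 := fun h =>
      Nat.cast_add_one_ne_zero (R := K) n (by linear_combination -h)
    simp only [p, ← hκ]
    refine ⟨mul_ne_zero κ.ne_zero h1, mul_ne_zero κ.ne_zero h2, ?_⟩
    simp [Units.smul_def]
    ring

end CollinearPoints

section Existence

open MvPolynomial

variable {K : Type} [Field K] {m d s a t : ℕ}

lemma hasNonsingularMinor_axisCoeff_add_evalComb {ℓ : PR K 2} {v : Pm K 2 →₀ K}
    (hℓ : ℓ.IsHomogeneous 1) (hℓ2 : eval (Pi.single 2 1) ℓ ≠ 0)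
    (hv : ∀ q ∈ v.support, q.rep 1 ≠ 0 ∧ q.rep 2 ≠ 0 ∧ eval q.rep ℓ = 0)
    (hs : 2 + a + v.support.card ≤ s) (hd : 2 * s ≤ d) :
    HasNonsingularMinor (axisCoeff 0 2 a + evalComb v) (X 2) d s (a + 1 + v.support.card) := by
  have hline : HasNonsingularMinor (axisCoeff 0 2 a) (ℓ * X 2) d s (a + 1) :=
    hasNonsingularMinor_axisCoeff (by decide) (hℓ.mul (isHomogeneous_X _ _))
      (by simpa using hℓ2) (by omega) (by omega)
  have hpoints : HasNonsingularMinor (evalComb v) (X 1 * X 2) d s v.support.card :=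
    hasNonsingularMinor_evalComb ((isHomogeneous_X _ _).mul (isHomogeneous_X _ _))
      (fun q hq => by simpa using ⟨(hv q hq).1, (hv q hq).2.1⟩) (by omega) (by omega)
  refine hline.add hpoints (axisCoeff_mul_of_axisRestrict_eq_zero ?_) (fun f => ?_)
    (dvd_mul_left _ _) (dvd_mul_left _ _)
  · rw [map_mul, axisRestrict_X_of_ne (by decide) (by decide), zero_mul]
  · rw [mul_assoc]
    exact VanishesOn.evalComb_mul_eq_zero (fun q hq => (hv q hq).2.2) _

variable [IsAlgClosed K] [CharZero K]

lemma sigmaSet_self_nonempty (hm : 2 ≤ m) (hs : 0 < s) (hd : 2 * s ≤ d) :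
    (sigmaSet K m d s s).Nonempty := by
  obtain ⟨-, v, -, -, rfl, -⟩ := exists_collinear_points_off_axes (K := K) s
  have hminor : HasNonsingularMinor (evalComb v) 1 d v.support.card v.support.card :=
    hasNonsingularMinor_evalComb (isHomogeneous_one _ _) (fun q _ => by simp) (by omega) (by omega)
  have hrank := hasRankLE_evalComb v d
  exact sigmaSet_nonempty_of_planar_functional hm (by omega) (by omega) hs hrank.hasBorderRankLE
    hminor hrank fun n => hminor.le_of_hasRankLE (by omega)

lemma sigmaSet_nonempty_of_one_line (hm : 2 ≤ m) (ha : 1 ≤ a) (hd : 2 * (a + 1 + t) ≤ d) :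
    (sigmaSet K m d (a + 1 + t) (d + 1 - a + t)).Nonempty := by
  obtain ⟨ℓ, v, hℓ, hℓe, rfl, hv⟩ := exists_collinear_points_off_axes (K := K) t
  have hline : HasNonsingularMinor (axisCoeff 0 1 a) ℓ d (a + 1 + v.support.card) (a + 1) :=
    hasNonsingularMinor_axisCoeff (by decide) hℓ (hℓe 1) (by omega) (by omega)
  have hpoints : HasNonsingularMinor (evalComb v) (X 2) d (a + 1 + v.support.card)
      v.support.card :=
    hasNonsingularMinor_evalComb (isHomogeneous_X _ _)
      (fun q hq => by simpa using (hv q hq).2.1) (by omega) (by omega)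
  refine sigmaSet_nonempty_of_planar_functional hm (by omega) (by omega) (by omega)
    ((hasBorderRankLE_axisCoeff 0 1 a (by omega)).add (hasRankLE_evalComb v d).hasBorderRankLE)
    (hline.add hpoints
      (axisCoeff_mul_of_axisRestrict_eq_zero (axisRestrict_X_of_ne (by decide) (by decide)))
      (VanishesOn.evalComb_mul_eq_zero fun q hq => (hv q hq).2.2) (one_dvd _) (one_dvd _))
    ((hasRankLE_axisCoeff 0 1 ha (by omega)).add (hasRankLE_evalComb v d)) fun n hn => ?_
  have := add_card_le_of_hasRankLE_axisCoeff_add hℓ (hℓe 1) (fun q hq => (hv q hq).2)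
    (by omega) ha hn
  omega

lemma sigmaSet_nonempty_of_two_lines (hm : 2 ≤ m) (ha : 1 ≤ a) (hd : 2 * (4 + a + t) ≤ d) :
    (sigmaSet K m d (4 + a + t) (d - 2 + (d - a) + t)).Nonempty := by
  obtain ⟨ℓ, v, hℓ, hℓe, rfl, hv⟩ := exists_collinear_points_off_axes (K := K) t
  have hline : HasNonsingularMinor (axisCoeff 0 1 2) (ℓ * X 1) d (4 + a + v.support.card) 3 :=
    hasNonsingularMinor_axisCoeff (by decide) (hℓ.mul (isHomogeneous_X _ _))
      (by simpa using hℓe 1) (by omega) (by omega)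
  have hkill : ∀ f, (axisCoeff 0 2 a + evalComb v : PR K 2 →ₗ[K] K) (ℓ * X 1 * f) = 0 := fun f => by
    rw [LinearMap.add_apply, mul_assoc,
      VanishesOn.evalComb_mul_eq_zero fun q hq => (hv q hq).2.2, add_zero, mul_left_comm]
    exact axisCoeff_mul_of_axisRestrict_eq_zero (axisRestrict_X_of_ne (by decide) (by decide)) _
  have hminor := hline.add (hasNonsingularMinor_axisCoeff_add_evalComb hℓ (hℓe 2) hv (by omega) hd)
    (axisCoeff_mul_of_axisRestrict_eq_zero (axisRestrict_X_of_ne (by decide) (by decide))) hkill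
    (one_dvd _) (one_dvd _)
  rw [← add_assoc, show 3 + (a + 1 + v.support.card) = 4 + a + v.support.card by omega] at hminor
  refine sigmaSet_nonempty_of_planar_functional hm (by omega) (by omega) (by omega) ?_ hminor
    ((hasRankLE_axisCoeff_add_axisCoeff 0 1 2 (by omega) (by omega)).add
      (hasRankLE_evalComb v d)) fun n hn => ?_
  · convert ((hasBorderRankLE_axisCoeff 0 1 2 (by omega)).add
      (hasBorderRankLE_axisCoeff 0 2 a (by omega))).add
      (hasRankLE_evalComb v d).hasBorderRankLE using 1
    omega
  · have := two_mul_add_card_le_of_hasRankLE_axisCoeff_add_axisCoeff hℓ hℓe hv ha (by omega) hn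
    omega

lemma sigmaSet_nonempty_of_two_lines_add_vertex (hm : 2 ≤ m) (ha : 1 ≤ a)
    (hd : 2 * (4 + a + t) + 2 ≤ d) :
    (sigmaSet K m d (4 + a + t) (d - 1 + (d - a) + t)).Nonempty := by
  obtain ⟨ℓ, v, hℓ, hℓe, rfl, hv⟩ := exists_collinear_points_off_axes (K := K) t
  have hline : HasNonsingularMinor (axisCoeff 1 0 2 + evalAt (Pi.single 0 1))
      (ℓ * X 0 ^ (a + 1)) d (4 + a + v.support.card) 3 :=
    hasNonsingularMinor_axisCoeff_add_evalAt (by decide) two_ne_zero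
      (hℓ.mul (isHomogeneous_X_pow _ _)) (by simpa using hℓe 0) (by omega) (by omega)
  have hkill₁ : ∀ f, (axisCoeff 1 0 2 + evalAt (Pi.single 0 1) : PR K 2 →ₗ[K] K) (X 2 * f) = 0 :=
    fun f => by
      rw [LinearMap.add_apply, axisCoeff_mul_of_axisRestrict_eq_zero
        (axisRestrict_X_of_ne (by decide) (by decide)), evalAt_apply]
      simp
  have hkill₂ : ∀ f,
      (axisCoeff 0 2 a + evalComb v : PR K 2 →ₗ[K] K) (ℓ * X 0 ^ (a + 1) * f) = 0 := fun f => by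
    rw [LinearMap.add_apply, mul_assoc,
      VanishesOn.evalComb_mul_eq_zero fun q hq => (hv q hq).2.2, add_zero, mul_left_comm,
      axisCoeff_apply, map_mul, map_pow, axisRestrict_X_left (by decide),
      Polynomial.coeff_X_pow_mul', if_neg a.lt_succ_self.not_ge]
  have hminor := hline.add
    (hasNonsingularMinor_axisCoeff_add_evalComb hℓ (hℓe 2) hv (by omega) (by omega))
    hkill₁ hkill₂ (one_dvd _) (one_dvd _)
  rw [add_add_add_comm, show 3 + (a + 1 + v.support.card) = 4 + a + v.support.card by omega]
    at hminor
  have hone := hasRankLE_axisCoeff_add_smul_evalAt (K := K) (m := 2) 0 2 (a := a) (d := d)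
    (by omega) one_ne_zero
  rw [one_smul] at hone
  refine sigmaSet_nonempty_of_planar_functional hm (by omega) (by omega) (by omega) ?_ hminor ?_
    fun n hn => ?_
  · rw [add_add_add_comm]
    convert (hasBorderRankLE_axisCoeff_add_evalAt 1 0 2 (by omega)).add
      ((hasBorderRankLE_axisCoeff 0 2 a (by omega)).add
      (hasRankLE_evalComb v d).hasBorderRankLE) using 1
    omega
  · rw [← add_assoc, add_assoc (axisCoeff 1 0 2), ← show d + 1 - 2 = d - 1 by omega]
    exact ((hasRankLE_axisCoeff 1 0 one_le_two (by omega)).add hone).add (hasRankLE_evalComb v d)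
  · have := two_mul_add_card_le_of_hasRankLE_axisCoeff_add_axisCoeff_add_evalAt hℓ hℓe hv ha
      (by omega) hn
    omega

end Existence

section Classification

variable {K : Type} [Field K] [IsAlgClosed K] [CharZero K] {m s d r : ℕ}

lemma sigmaSet_nonempty_of_mod_two_eq (hm : 2 ≤ m) (hd : 2 * s ≤ d) (hr : d + 2 ≤ r + s)
    (hr' : r + 2 ≤ d + s) (hmod : (r + s) % 2 = d % 2) : (sigmaSet K m d s r).Nonempty := by
  obtain ⟨t, ht⟩ : ∃ t, r + s = d + 2 + 2 * t := ⟨(r + s - d - 2) / 2, by omega⟩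
  have h := sigmaSet_nonempty_of_one_line (K := K) (a := s - 1 - t) (t := t) (d := d) hm
    (by omega) (by omega)
  convert h using 2 <;> omega

lemma sigmaSet_nonempty_of_two_mul_add_two_le (hm : 2 ≤ m) (hd : 2 * s + 2 ≤ d)
    (hr : 2 * d + 2 ≤ r + s) (hr' : r + 7 ≤ 2 * d + s) : (sigmaSet K m d s r).Nonempty := by
  obtain ⟨t, ht | ht⟩ : ∃ t, r + s = 2 * d + 2 + 2 * t ∨ r + s = 2 * d + 3 + 2 * t :=
    ⟨(r + s - 2 * d - 2) / 2, by omega⟩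
  · have h := sigmaSet_nonempty_of_two_lines (K := K) (a := s - 4 - t) (t := t) (d := d) hm
      (by omega) (by omega)
    convert h using 2 <;> omega
  · have h := sigmaSet_nonempty_of_two_lines_add_vertex (K := K) (a := s - 4 - t) (t := t) (d := d)
      hm (by omega) (by omega)
    convert h using 2 <;> omega

end Classification

end Veronese

end

theorem stmt0_general (K : Type) [Field K] [IsAlgClosed K] [CharZero K]
    (m s d r : ℕ) (hm : 2 ≤ m) (hs : 0 < s) (hd : 2 * s + 2 ≤ d)
    (hrs : s ≤ r) (hr : r + 7 ≤ 2 * d + s) :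
    (sigmaSet K m d s r).Nonempty ↔
      (r = s ∨
        (d + 2 ≤ r + s ∧ r + 2 ≤ d + s ∧ (r + s) % 2 = d % 2) ∨
        (2 * d + 2 ≤ r + s ∧ r + 7 ≤ 2 * d + s)) := by
  constructor
  · rintro ⟨P, rfl, rfl⟩
    by_cases hgap : brank d P < srank d P ∧ srank d P + brank d P ≤ 2 * d + 1
    · obtain ⟨e, b, he, hb, hsr⟩ :=
        Veronese.exists_brank_eq_add_srank_add_eq hs (by omega) hgap.1 hgap.2
      omega
    · omega
  · rintro (rfl | ⟨h₁, h₂, hmod⟩ | ⟨h₁, -⟩)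
    · exact Veronese.sigmaSet_self_nonempty hm hs (by omega)
    · exact Veronese.sigmaSet_nonempty_of_mod_two_eq hm (by omega) h₁ h₂ hmod
    · exact Veronese.sigmaSet_nonempty_of_two_mul_add_two_le hm hd h₁ hr

/-- Theorem 1 (main theorem): gaps in the pairs (border rank, symmetric rank).
For `m ≥ 2`, `s ≥ 5`, `d ≥ 2s+2` and `s ≤ r ≤ 2d+s-7`, the stratum
`σ_{s,r}(X_{m,d})` is nonempty iff `r = s`, or `d+2-s ≤ r ≤ d+s-2` with
`r + s ≡ d (mod 2)`, or `2d+2-s ≤ r ≤ 2d+s-7`. -/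
theorem stmt0 (K : Type) [Field K] [IsAlgClosed K] [CharZero K]
    (m s d r : ℕ) (hm : 2 ≤ m) (hs : 5 ≤ s) (hd : 2 * s + 2 ≤ d)
    (hrs : s ≤ r) (hr : r + 7 ≤ 2 * d + s) :
    (sigmaSet K m d s r).Nonempty ↔
      (r = s ∨
        (d + 2 ≤ r + s ∧ r + 2 ≤ d + s ∧ (r + s) % 2 = d % 2) ∨
        (2 * d + 2 ≤ r + s ∧ r + 7 ≤ 2 * d + s)) :=
  stmt0_general K m s d r hm (by omega) hd hrs hr
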